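/- Let p be a prime and e ≥ λ_1 ≥ ... ≥ λ_k positive integers with p > λ_1 + ... + λ_k + 1. Then Ψ_e^p(λ_1, ..., λ_k) equals the number of isomorphism classes of nilpotent Lie rings of order p^{e + λ_1 + ... + λ_k} which have type invariants (e, λ_1, ..., λ_k) and nilpotency class less than p. -/

import Mathlib

/-- `℧_1(H) = ⟨h^p : h ∈ H⟩` for a subgroup `H`. -/
def MhoOne (p : ℕ) {P : Type} [Group P] (H : Subgroup P) : Subgroup P :=
  Subgroup.closure {y : P | ∃ x ∈ H, y = x ^ p}

/-- A `p`-group `P` is regular if for all `x y : P` there is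
`z ∈ ℧_1(γ_2(⟨x,y⟩))` with `x^p * y^p = (x*y)^p * z`. -/
def IsRegularPGroup (p : ℕ) (P : Type) [Group P] : Prop :=
  ∀ x y : P,
    ∃ z ∈ MhoOne p ⁅Subgroup.closure {x, y}, Subgroup.closure {x, y}⁆,
      x ^ p * y ^ p = (x * y) ^ p * z

/-- `Ω_i(P) = ⟨x : x^(p^i) = 1⟩`. -/
def OmegaSubgroup (p : ℕ) (P : Type) [Group P] (i : ℕ) : Subgroup P :=
  Subgroup.closure {x : P | x ^ p ^ i = 1}

/-- `ω_i(P)`, defined by `p ^ ω_i(P) = |Ω_i(P)/Ω_{i-1}(P)|`. -/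
noncomputable def omegaInv (p : ℕ) (P : Type) [Group P] (i : ℕ) : ℕ :=
  ((OmegaSubgroup p P (i - 1)).relIndex (OmegaSubgroup p P i)).factorization p

/-- `μ_j(P)` (for `j ≥ 1`): the dual partition of `(ω_1(P), ω_2(P), ...)`. -/
noncomputable def muInv (p : ℕ) (P : Type) [Group P] (j : ℕ) : ℕ :=
  Nat.card {i : ℕ // 1 ≤ i ∧ j ≤ omegaInv p P i}

/-- `P` has type invariants given by the list `l`. -/
def HasTypeInvariants (p : ℕ) (P : Type) [Group P] (l : List ℕ) : Prop :=
  ∀ i : ℕ, muInv p P (i + 1) = l.getD i 0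

/-- The multiplication extracted from a group structure. -/
def mulOfGroup (G : Type) (s : Group G) : Mul G := by letI := s; infer_instance

/-- The number of isomorphism classes of groups of order `N` whose group structure
satisfies the predicate `Q`. -/
noncomputable def groupClassCount (N : ℕ) (Q : Group (Fin N) → Prop) : ℕ :=
  Nat.card (Quot fun s t : {s : Group (Fin N) // Q s} =>
    Nonempty (@MulEquiv (Fin N) (Fin N) (mulOfGroup _ s.1) (mulOfGroup _ t.1)))

/-- `Ψ_e^p(λ)`: the number of isomorphism classes of regular `p`-groups of type
`(e, λ_1, ..., λ_k)`; such a group has order `p ^ (e + λ_1 + ... + λ_k)`. -/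
noncomputable def PsiType (p e : ℕ) (l : List ℕ) : ℕ :=
  groupClassCount (p ^ (e + l.sum)) fun s =>
    letI := s
    IsRegularPGroup p (Fin (p ^ (e + l.sum))) ∧
      HasTypeInvariants p (Fin (p ^ (e + l.sum))) (e :: l)

/-- The lower central series of a Lie ring, as additive subgroups. -/
def lieLCS (L : Type) [LieRing L] : ℕ → AddSubgroup L
  | 0 => ⊤
  | (k + 1) => AddSubgroup.closure {x : L | ∃ y ∈ lieLCS L k, ∃ z : L, x = ⁅y, z⁆}

/-- A Lie ring is nilpotent if its lower central series reaches `⊥`. -/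
def IsNilpotentLieRing (L : Type) [LieRing L] : Prop :=
  ∃ c : ℕ, lieLCS L c = ⊥

/-- The nilpotency class of a Lie ring: the least `c` with `lieLCS L c = ⊥`. -/
noncomputable def lieNilClass (L : Type) [LieRing L] : ℕ :=
  sInf {c : ℕ | lieLCS L c = ⊥}

/-- `Ω_i(A) = {x : p^i • x = 0}` for an additive group `A`. -/
def aOmega (p : ℕ) (A : Type) [AddCommGroup A] (i : ℕ) : AddSubgroup A :=
  AddSubgroup.closure {x : A | p ^ i • x = 0}

/-- `ω_i(A)`. -/
noncomputable def aOmegaInv (p : ℕ) (A : Type) [AddCommGroup A] (i : ℕ) : ℕ :=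
  ((aOmega p A (i - 1)).relIndex (aOmega p A i)).factorization p

/-- `μ_j(A)` (for `j ≥ 1`). -/
noncomputable def aMuInv (p : ℕ) (A : Type) [AddCommGroup A] (j : ℕ) : ℕ :=
  Nat.card {i : ℕ // 1 ≤ i ∧ j ≤ aOmegaInv p A i}

/-- `A` has type invariants given by the list `l`. -/
def aHasType (p : ℕ) (A : Type) [AddCommGroup A] (l : List ℕ) : Prop :=
  ∀ i : ℕ, aMuInv p A (i + 1) = l.getD i 0

/-- The addition extracted from a Lie ring structure. -/
def addOfLieRing (G : Type) (s : LieRing G) : Add G := by letI := s; infer_instance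

/-- The bracket extracted from a Lie ring structure. -/
def bracketOfLieRing (G : Type) (s : LieRing G) : Bracket G G := by letI := s; infer_instance

/-- The number of isomorphism classes of Lie rings with `N` elements whose Lie ring
structure satisfies the predicate `Q`. -/
noncomputable def lieClassCount (N : ℕ) (Q : LieRing (Fin N) → Prop) : ℕ :=
  Nat.card (Quot fun s t : {s : LieRing (Fin N) // Q s} =>
    ∃ e : @AddEquiv (Fin N) (Fin N) (addOfLieRing _ s.1) (addOfLieRing _ t.1),
      ∀ x y : Fin N,
        e (@Bracket.bracket _ _ (bracketOfLieRing _ s.1) x y) =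
          @Bracket.bracket _ _ (bracketOfLieRing _ t.1) (e x) (e y))

open scoped commutatorElement
attribute [local instance] LieRing.ofAssociativeRing

section TruncExp
open Finset

theorem sum_range_range_antidiag {M : Type*} [AddCommMonoid M] (p : ℕ) (f : ℕ → ℕ → M)
    (h : ∀ i j, p ≤ i + j → f i j = 0) :
    ∑ i ∈ range p, ∑ j ∈ range p, f i j =
      ∑ n ∈ range p, ∑ x ∈ antidiagonal n, f x.1 x.2 := by
  rw [Finset.sum_sigma', Finset.sum_sigma']
  have h1 : ∑ x ∈ (range p).sigma fun _ => range p, f x.1 x.2 =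
      ∑ x ∈ ((range p).sigma fun _ => range p).filter (fun x => x.1 + x.2 < p), f x.1 x.2 := by
    symm
    apply Finset.sum_filter_of_ne
    intro x _ hx
    by_contra hc
    exact hx (h _ _ (not_lt.1 hc))
  rw [h1]
  refine Finset.sum_nbij' (fun x => ⟨x.1 + x.2, (x.1, x.2)⟩) (fun x => ⟨x.2.1, x.2.2⟩) ?_ ?_ ?_ ?_ ?_
  · rintro ⟨i, j⟩ hx
    simp at hx ⊢
    exact hx.2
  · rintro ⟨n, i, j⟩ hx
    simp at hx ⊢
    omega
  · rintro ⟨i, j⟩ hx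
    rfl
  · rintro ⟨n, i, j⟩ hx
    simp at hx
    obtain ⟨_, rfl⟩ := hx
    rfl
  · rintro ⟨i, j⟩ hx
    rfl

/-- inverse factorial -/
noncomputable def rfac (R : Type*) [CommRing R] (k : ℕ) : R := Ring.inverse ((k.factorial : ℕ) : R)

noncomputable def texp (p : ℕ) (R : Type*) {A : Type*} [CommRing R] [Ring A] [Algebra R A] (a : A) : A :=
  ∑ k ∈ range p, rfac R k • a ^ k

def GoodR (p : ℕ) (R : Type*) [CommRing R] : Prop := ∀ k : ℕ, 0 < k → k < p → IsUnit (k : R)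

variable {p : ℕ} {R : Type*} [CommRing R] (hu : GoodR p R)

include hu in
theorem isUnit_fac {k : ℕ} (hk : k < p) : IsUnit ((k.factorial : ℕ) : R) := by
  induction k with
  | zero => simp
  | succ k ih =>
    rw [Nat.factorial_succ, Nat.cast_mul]
    exact (hu _ (Nat.succ_pos _) hk).mul (ih (by omega))

include hu in
theorem rfac_mul {k : ℕ} (hk : k < p) : rfac R k * ((k.factorial : ℕ) : R) = 1 :=
  Ring.inverse_mul_cancel _ (isUnit_fac hu hk)

include hu in
theorem rfac_add {i j : ℕ} (hk : i + j < p) :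
    rfac R (i + j) * (((i + j).choose i : ℕ) : R) = rfac R i * rfac R j := by
  have h1 := rfac_mul hu hk
  have h2 := rfac_mul hu (show i < p by omega)
  have h3 := rfac_mul hu (show j < p by omega)
  have h4 : (((i + j).choose i : ℕ) : R) * (i.factorial : ℕ) * (j.factorial : ℕ) = ((i + j).factorial : ℕ) := by
    have := Nat.add_choose_mul_factorial_mul_factorial j i
    rw [add_comm j i] at this
    rw [← this]; push_cast; ring
  calc _ = (rfac R i * (i.factorial : ℕ)) * (rfac R j * (j.factorial : ℕ)) * (rfac R (i + j) * (((i + j).choose i : ℕ) : R)) := by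
        rw [h2, h3]; ring
    _ = rfac R i * rfac R j * (rfac R (i + j) * ((((i + j).choose i : ℕ) : R) * (i.factorial : ℕ) * (j.factorial : ℕ))) := by ring
    _ = _ := by rw [h4, h1, mul_one]

@[simp] theorem rfac_zero : rfac R 0 = 1 := by simp [rfac]
@[simp] theorem rfac_one : rfac R 1 = 1 := by simp [rfac]

theorem map_texp {A B : Type*} [Ring A] [Ring B] [Algebra R A] [Algebra R B] (f : A →ₐ[R] B) (a : A) :
    f (texp p R a) = texp p R (f a) := by
  simp [texp]

theorem texp_apply {M : Type*} [AddCommGroup M] [Module R M] (S : Module.End R M) (v : M) :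
    texp p R S v = ∑ k ∈ range p, rfac R k • (S ^ k) v := by
  simp [texp, LinearMap.sum_apply]

include hu in
theorem texp_add_apply {M : Type*} [AddCommGroup M] [Module R M] (S T : Module.End R M) (hc : Commute S T)
    (v : M) (h : ∀ i j, p ≤ i + j → (S ^ i) ((T ^ j) v) = 0) :
    texp p R (S + T) v = texp p R S (texp p R T v) := by
  simp only [texp_apply, map_sum, smul_sum, map_smul]
  rw [sum_comm]
  have hsw : ∀ i j, rfac R j • rfac R i • (S ^ i) ((T ^ j) v) = rfac R i • rfac R j • (S ^ i) ((T ^ j) v) :=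
    fun i j => smul_comm _ _ _
  simp only [hsw]
  rw [sum_range_range_antidiag p (fun i j => rfac R i • rfac R j • (S ^ i) ((T ^ j) v))
    (fun i j hij => by rw [h i j hij, smul_zero, smul_zero])]
  refine sum_congr rfl fun n hn => ?_
  rw [hc.add_pow', LinearMap.sum_apply, smul_sum]
  refine sum_congr rfl fun x hx => ?_
  rw [HasAntidiagonal.mem_antidiagonal] at hx
  rw [mem_range] at hn
  rw [smul_smul, ← rfac_add hu (by omega : x.1 + x.2 < p), hx, LinearMap.smul_apply, Module.End.mul_apply,
    ← Nat.cast_smul_eq_nsmul R, smul_smul]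

theorem texp_mulLeft {A : Type*} [Ring A] [Algebra R A] (a b : A) :
    texp p R (LinearMap.mulLeft R a) b = texp p R a * b := by
  simp [texp, sum_mul]

theorem texp_mulRight {A : Type*} [Ring A] [Algebra R A] (a b : A) :
    texp p R (LinearMap.mulRight R a) b = b * texp p R a := by
  simp [texp, mul_sum]

end TruncExp

structure LFilt (p : ℕ) (R A : Type*) [CommRing R] [Ring A] [Algebra R A] where
  F : ℕ → Submodule R A
  E : A
  two_le : 2 ≤ p
  unit : GoodR p R
  anti : ∀ {i j}, i ≤ j → F j ≤ F i
  mul_mem : ∀ {i j a b}, a ∈ F i → b ∈ F j → a * b ∈ F (i + j)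
  one_mem : 1 ∈ F 0
  top : F p = ⊥
  E_mem : E ∈ F 0
  hE : ∀ {n a}, a ∈ F n → E * a - a * E - n • a ∈ F (n + 1)

namespace LFilt
open Finset
variable {p : ℕ} {R A : Type*} [CommRing R] [Ring A] [Algebra R A] (Φ : LFilt p R A)

include Φ

theorem eq_zero {n : ℕ} (hn : p ≤ n) {a : A} (ha : a ∈ Φ.F n) : a = 0 := by
  have := Φ.anti hn ha
  rwa [Φ.top, Submodule.mem_bot] at this

theorem pow_mem {a : A} (ha : a ∈ Φ.F 1) (k : ℕ) : a ^ k ∈ Φ.F k := by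
  induction k with
  | zero => simpa using Φ.one_mem
  | succ k ih => rw [pow_succ]; exact Φ.mul_mem ih ha

theorem texp_add {a b : A} (ha : a ∈ Φ.F 1) (hb : b ∈ Φ.F 1) (hc : Commute a b) :
    texp p R (a + b) = texp p R a * texp p R b := by
  have := texp_add_apply Φ.unit (LinearMap.mulLeft R a) (LinearMap.mulLeft R b)
    (by ext x; simp [← mul_assoc, hc.eq]) (1 : A) (fun i j hij => by
      simp only [LinearMap.pow_mulLeft, LinearMap.mulLeft_apply, mul_one]
      exact Φ.eq_zero hij (Φ.mul_mem (Φ.pow_mem ha i) (Φ.pow_mem hb j)))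
  rw [texp_mulLeft, texp_mulLeft, mul_one] at this
  rw [← mul_one (texp p R (a + b)), ← texp_mulLeft, ← this]
  congr 2
  ext x; simp [add_mul]

omit Φ in
theorem texp_zero (hp : 0 < p) : texp p R (0 : A) = 1 := by
  rw [texp, Finset.sum_eq_single 0]
  · simp
  · intro b _ hb; simp [hb]
  · intro h; simp at h; omega

theorem texp_conj {a B : A} (ha : a ∈ Φ.F 1) (hB : B ∈ Φ.F 0) :
    texp p R a * B * texp p R (-a) = ∑ k ∈ range p, rfac R k • ((LinearMap.mulLeft R a - LinearMap.mulRight R a) ^ k) B := by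
  have := texp_add_apply Φ.unit (LinearMap.mulLeft R a) (LinearMap.mulRight R (-a))
    (by ext x; simp [mul_assoc]) B (fun i j hij => by
      simp only [LinearMap.pow_mulLeft, LinearMap.mulLeft_apply, LinearMap.pow_mulRight, LinearMap.mulRight_apply]
      refine Φ.eq_zero (n := i + (0 + j)) (by omega) (Φ.mul_mem (Φ.pow_mem ha i) (Φ.mul_mem hB (Φ.pow_mem (neg_mem ha) j))))
  rw [texp_mulLeft, texp_mulRight, texp_apply, ← mul_assoc] at this
  rw [← this]
  congr 1
  ext k
  congr 3
  ext x; simp [sub_eq_add_neg]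

theorem pow_sub {a b : A} {n : ℕ} (ha : a ∈ Φ.F 1) (hb : b ∈ Φ.F 1) (hab : a - b ∈ Φ.F n) (k : ℕ) :
    a ^ (k + 1) - b ^ (k + 1) ∈ Φ.F (n + k) := by
  induction k with
  | zero => simpa using hab
  | succ k ih =>
    have : a ^ (k + 1 + 1) - b ^ (k + 1 + 1) = a * (a ^ (k + 1) - b ^ (k + 1)) + (a - b) * b ^ (k + 1) := by
      rw [pow_succ' a, pow_succ' b (k+1)]; noncomm_ring
    rw [this]
    refine add_mem (Φ.anti (by omega) (Φ.mul_mem ha ih)) (Φ.mul_mem hab (Φ.pow_mem hb (k+1)))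

theorem texp_sub {a b : A} {n : ℕ} (ha : a ∈ Φ.F 1) (hb : b ∈ Φ.F 1) (hab : a - b ∈ Φ.F n) :
    texp p R a - texp p R b - (a - b) ∈ Φ.F (n + 1) := by
  obtain ⟨q, rfl⟩ : ∃ q, p = q + 2 := ⟨p - 2, by have := Φ.two_le; omega⟩
  have : texp (q + 2) R a - texp (q + 2) R b - (a - b) =
      ∑ k ∈ range q, rfac R (k + 2) • (a ^ (k + 2) - b ^ (k + 2)) := by
    simp only [texp, smul_sub, sum_sub_distrib]
    rw [sum_range_succ' _ (q + 1), sum_range_succ' _ q, sum_range_succ' _ (q + 1), sum_range_succ' _ q]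
    simp
    abel
  rw [this]
  refine sum_mem fun k _ => Submodule.smul_mem _ _ (Φ.anti (by omega) (Φ.pow_sub ha hb hab (k + 1)))

theorem texp_sub_one {a : A} {n : ℕ} (ha : a ∈ Φ.F 1) (han : a ∈ Φ.F n) :
    texp p R a - 1 - a ∈ Φ.F (n + 1) := by
  have := Φ.texp_sub ha (zero_mem _) (n := n) (by simpa using han)
  rwa [texp_zero (by have := Φ.two_le; omega), sub_zero] at this

theorem texp_sub_one_mem {a : A} {n : ℕ} (ha : a ∈ Φ.F 1) (han : a ∈ Φ.F n) :
    texp p R a - 1 ∈ Φ.F n := by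
  have := add_mem (Φ.anti (Nat.le_succ n) (Φ.texp_sub_one ha han)) han
  simpa using this

theorem sub_mem_of_texp {a b : A} (ha : a ∈ Φ.F 1) (hb : b ∈ Φ.F 1) (n : ℕ) (h : texp p R a - texp p R b ∈ Φ.F n) :
    a - b ∈ Φ.F n := by
  have : ∀ m, m ≤ n → a - b ∈ Φ.F m := by
    intro m
    induction m with
    | zero => intro _; exact Φ.anti zero_le_one (sub_mem ha hb)
    | succ m ih =>
      intro hm
      have h1 := Φ.texp_sub ha hb (ih (by omega))
      have h2 := sub_mem (Φ.anti hm h) h1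
      simpa using h2
  exact this n le_rfl

theorem mem_of_texp {a : A} (ha : a ∈ Φ.F 1) (n : ℕ) (h : texp p R a - 1 ∈ Φ.F n) :
    a ∈ Φ.F n := by
  have := Φ.sub_mem_of_texp ha (zero_mem _) n (by rwa [texp_zero (by have := Φ.two_le; omega)])
  simpa using this

theorem texp_inj {a b : A} (ha : a ∈ Φ.F 1) (hb : b ∈ Φ.F 1) (h : texp p R a = texp p R b) : a = b := by
  have := Φ.sub_mem_of_texp ha hb p (by rw [h, sub_self]; exact zero_mem _)
  exact sub_eq_zero.1 (Φ.eq_zero le_rfl this)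

theorem texp_neg_mul {a : A} (ha : a ∈ Φ.F 1) : texp p R (-a) * texp p R a = 1 := by
  rw [← Φ.texp_add (neg_mem ha) ha (Commute.neg_left rfl), neg_add_cancel, texp_zero (by have := Φ.two_le; omega)]

theorem texp_mul_neg {a : A} (ha : a ∈ Φ.F 1) : texp p R a * texp p R (-a) = 1 := by
  simpa using Φ.texp_neg_mul (neg_mem ha)

omit Φ in
theorem mem0 (Φ : LFilt p R A) {a : A} (ha : a - 1 ∈ Φ.F 1) : a ∈ Φ.F 0 := by
  have := add_mem (Φ.anti zero_le_one ha) Φ.one_mem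
  simpa using this

theorem texp_mem0 {a : A} (ha : a ∈ Φ.F 1) : texp p R a ∈ Φ.F 0 :=
  Φ.mem0 (Φ.texp_sub_one_mem ha ha)

/-- the key homogeneous vanishing -/
theorem hom_vanish {T : A} {j : ℕ} (h : Φ.E * T - T * Φ.E = j • T) (hT : T ∈ Φ.F (j + 1)) : T = 0 := by
  have : ∀ m, T ∈ Φ.F (j + 1 + m) := by
    intro m
    induction m with
    | zero => exact hT
    | succ m ih =>
      by_cases hm : j + 1 + m < p
      · have h1 := Φ.hE ih
        rw [h] at h1
        have h2 : j • T - (j + 1 + m) • T = -(((m + 1 : ℕ) : R) • T) := by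
          rw [Nat.cast_smul_eq_nsmul, show j + 1 + m = j + (m + 1) by ring, add_nsmul]; abel
        rw [h2, neg_mem_iff] at h1
        obtain ⟨u, hu⟩ := Φ.unit (m + 1) (by omega) (by omega)
        rw [← hu] at h1
        have h3 := Submodule.smul_mem _ (↑u⁻¹ : R) h1
        rwa [smul_smul, Units.inv_mul, one_smul] at h3
      · rw [Φ.eq_zero (not_lt.1 hm) ih]; exact zero_mem _
  exact Φ.eq_zero (by omega) (this p)

theorem comm_mem {a b : Aˣ} {i j : ℕ} (ha : (a : A) - 1 ∈ Φ.F i) (hb : (b : A) - 1 ∈ Φ.F j)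
    (ha' : (↑a⁻¹ : A) - 1 ∈ Φ.F 1) (hb' : (↑b⁻¹ : A) - 1 ∈ Φ.F 1) :
    ((⁅a, b⁆ : Aˣ) : A) - 1 - (((a : A) - 1) * ((b : A) - 1) - ((b : A) - 1) * ((a : A) - 1)) ∈ Φ.F (i + j + 1) := by
  set C := ((a : A) - 1) * ((b : A) - 1) - ((b : A) - 1) * ((a : A) - 1) with hC
  have hCm : C ∈ Φ.F (i + j) := sub_mem (Φ.mul_mem ha hb) (by rw [add_comm]; exact Φ.mul_mem hb ha)
  have hCe : C = a * b - b * a := by rw [hC]; noncomm_ring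
  have h1 : ((⁅a, b⁆ : Aˣ) : A) - 1 = C * ↑a⁻¹ * ↑b⁻¹ := by
    rw [hCe, commutatorElement_def]
    simp only [Units.val_mul, sub_mul]
    congr 1
    simp [mul_assoc]
  have h2 : ((⁅a, b⁆ : Aˣ) : A) - 1 - C = C * (↑a⁻¹ - 1) * ↑b⁻¹ + C * (↑b⁻¹ - 1) := by
    rw [h1]; noncomm_ring
  rw [h2]
  exact add_mem (by simpa using Φ.mul_mem (Φ.mul_mem hCm ha') (Φ.mem0 hb')) (Φ.mul_mem hCm hb')

end LFilt
namespace LFilt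
open Finset
variable {p : ℕ} {R A : Type*} [CommRing R] [Ring A] [Algebra R A]
/-- good units -/
structure Good (Φ : LFilt p R A) (𝔏 : LieSubalgebra R A) (g : Aˣ) : Prop where
  inv0 : (↑g⁻¹ : A) ∈ Φ.F 0
  sub : (g : A) - 1 ∈ Φ.F 1
  conj : ∀ z ∈ 𝔏, (g : A) * z * ↑g⁻¹ ∈ 𝔏
  conjE : (g : A) * Φ.E * ↑g⁻¹ - Φ.E ∈ 𝔏

variable {Φ : LFilt p R A} {𝔏 : LieSubalgebra R A}

theorem Good.mul {g h : Aˣ} (hg : Φ.Good 𝔏 g) (hh : Φ.Good 𝔏 h) : Φ.Good 𝔏 (g * h) where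
  inv0 := by
    rw [mul_inv_rev, Units.val_mul]; exact Φ.mul_mem hh.inv0 hg.inv0
  sub := by
    have : ((g * h : Aˣ) : A) - 1 = (g - 1) * h + (h - 1) := by push_cast; noncomm_ring
    rw [this]
    exact add_mem (Φ.mul_mem hg.sub (Φ.mem0 hh.sub)) hh.sub
  conj z hz := by
    have := hg.conj _ (hh.conj z hz)
    simpa [mul_assoc] using this
  conjE := by
    have := add_mem (hg.conj _ hh.conjE) hg.conjE
    convert this using 1
    rw [mul_inv_rev]; push_cast; noncomm_ring

/-- exponential as a unit -/
noncomputable def eu (Φ : LFilt p R A) (a : A) (ha : a ∈ Φ.F 1) : Aˣ :=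
  ⟨texp p R a, texp p R (-a), Φ.texp_mul_neg ha, Φ.texp_neg_mul ha⟩

theorem good_eu (hL : ∀ z ∈ 𝔏, z ∈ Φ.F 1) (hEL : ∀ z ∈ 𝔏, Φ.E * z - z * Φ.E ∈ 𝔏) {z : A} (hz : z ∈ 𝔏) :
    Φ.Good 𝔏 (Φ.eu z (hL z hz)) where
  inv0 := Φ.texp_mem0 (neg_mem (hL z hz))
  sub := Φ.texp_sub_one_mem (hL z hz) (hL z hz)
  conj y hy := by
    have := Φ.texp_conj (hL z hz) (Φ.anti zero_le_one (hL y hy))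
    change texp p R z * y * texp p R (-z) ∈ 𝔏
    rw [this]
    refine sum_mem fun k hk => 𝔏.smul_mem _ ?_
    clear hk
    induction k with
    | zero => simpa
    | succ k ih => rw [pow_succ', Module.End.mul_apply]; exact 𝔏.lie_mem hz ih
  conjE := by
    have := Φ.texp_conj (hL z hz) Φ.E_mem
    change texp p R z * Φ.E * texp p R (-z) - Φ.E ∈ 𝔏
    rw [this]
    obtain ⟨q, rfl⟩ : ∃ q, p = q + 1 := ⟨p - 1, by have := Φ.two_le; omega⟩
    rw [sum_range_succ']
    simp only [rfac_zero, pow_zero, one_smul, Module.End.one_apply, add_sub_cancel_right]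
    refine sum_mem fun k hk => 𝔏.smul_mem _ ?_
    clear hk
    induction k with
    | zero => simpa using 𝔏.neg_mem (hEL z hz)
    | succ k ih => rw [pow_succ', Module.End.mul_apply]; exact 𝔏.lie_mem hz ih

theorem Good.step {g : Aˣ} (hg : Φ.Good 𝔏 g) {n : ℕ} (hn : 0 < n) (hnp : n < p) (hT : (g : A) - 1 ∈ Φ.F n) :
    ∃ S ∈ 𝔏, S - ((g : A) - 1) ∈ Φ.F (n + 1) := by
  obtain ⟨u, hu⟩ := Φ.unit n hn hnp
  refine ⟨-((↑u⁻¹ : R) • ((g : A) * Φ.E * ↑g⁻¹ - Φ.E)), 𝔏.neg_mem (𝔏.smul_mem _ hg.conjE), ?_⟩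
  set T := (g : A) - 1 with hTd
  have hgi : (↑g⁻¹ : A) - 1 ∈ Φ.F 1 := by
    have : (↑g⁻¹ : A) - 1 = - (↑g⁻¹ * (g - 1)) := by rw [mul_sub]; simp
    rw [this]
    refine neg_mem ?_
    simpa using Φ.mul_mem hg.inv0 hg.sub
  have h1 : (g : A) * Φ.E * ↑g⁻¹ - Φ.E = -((Φ.E * T - T * Φ.E) * ↑g⁻¹) := by
    rw [hTd]
    have : Φ.E * ((g : A) - 1) - ((g : A) - 1) * Φ.E = Φ.E * g - g * Φ.E := by noncomm_ring
    rw [this, sub_mul]; simp [mul_assoc]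
  have h2 := Φ.hE hT
  set D := Φ.E * T - T * Φ.E with hD
  have hDm : D ∈ Φ.F n := by
    have := add_mem (Φ.anti (Nat.le_succ n) h2) (nsmul_mem hT n)
    simpa using this
  have h3 : D * ↑g⁻¹ - (n : R) • T ∈ Φ.F (n + 1) := by
    have := add_mem (Φ.mul_mem hDm hgi) h2
    rw [Nat.cast_smul_eq_nsmul]
    convert this using 1
    rw [mul_sub, mul_one]; abel
  have h4 := Submodule.smul_mem _ (↑u⁻¹ : R) h3
  rw [smul_sub, smul_smul, ← hu, Units.inv_mul, one_smul] at h4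
  rw [h1]
  simpa using h4

theorem bch_exists (hL : ∀ z ∈ 𝔏, z ∈ Φ.F 1) (hEL : ∀ z ∈ 𝔏, Φ.E * z - z * Φ.E ∈ 𝔏) {u v : A} (hu : u ∈ 𝔏) (hv : v ∈ 𝔏) :
    ∃ z ∈ 𝔏, texp p R z = texp p R u * texp p R v := by
  set h : Aˣ := Φ.eu u (hL u hu) * Φ.eu v (hL v hv) with hh
  have hg : Φ.Good 𝔏 h := (good_eu hL hEL hu).mul (good_eu hL hEL hv)
  have key : ∀ n, n + 1 ≤ p → ∃ z ∈ 𝔏, (h : A) - texp p R z ∈ Φ.F (n + 1) := by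
    intro n
    induction n with
    | zero =>
      intro _
      refine ⟨0, 𝔏.zero_mem, ?_⟩
      rw [texp_zero (by have := Φ.two_le; omega)]
      exact hg.sub
    | succ n ih =>
      intro hn
      obtain ⟨z, hz, hzn⟩ := ih (by omega)
      have hzF := hL z hz
      set g : Aˣ := Φ.eu (-z) (neg_mem hzF) * h with hgd
      have hgv : (g : A) = texp p R (-z) * h := rfl
      have hgg : Φ.Good 𝔏 g := (good_eu hL hEL (𝔏.neg_mem hz)).mul hg
      have e1 : (g : A) - 1 = texp p R (-z) * ((h : A) - texp p R z) := by
        rw [mul_sub, Φ.texp_neg_mul hzF, hgv]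
      have e2 : (g : A) - 1 ∈ Φ.F (n + 1) := by
        rw [e1]; simpa using Φ.mul_mem (Φ.texp_mem0 (neg_mem hzF)) hzn
      obtain ⟨S, hS, hSd⟩ := hgg.step (Nat.succ_pos n) (by omega) e2
      refine ⟨z + S, 𝔏.add_mem hz hS, ?_⟩
      have hSF : S ∈ Φ.F (n + 1) := by
        have := add_mem (Φ.anti (Nat.le_succ (n+1)) hSd) e2
        simpa using this
      have e3 := Φ.texp_sub (add_mem hzF (hL S hS)) hzF (n := n + 1) (by simpa using hSF)
      have e4 : (h : A) - texp p R z = ((g : A) - 1) + (texp p R z - 1) * ((g : A) - 1) := by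
        rw [e1]
        have : texp p R z * (texp p R (-z) * (↑h - texp p R z)) = ↑h - texp p R z := by
          rw [← mul_assoc, Φ.texp_mul_neg hzF, one_mul]
        rw [sub_mul, this, one_mul]; abel
      have e5 : (texp p R z - 1) * ((g : A) - 1) ∈ Φ.F (n + 1 + 1) := by
        rw [add_comm (n+1) 1]; exact Φ.mul_mem (Φ.texp_sub_one_mem hzF hzF) e2
      have := sub_mem (sub_mem e5 hSd) e3
      convert this using 1
      rw [add_sub_cancel_left]
      have e6 := e4
      rw [sub_eq_iff_eq_add] at e6
      rw [e6]; abel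
  obtain ⟨z, hz, hzn⟩ := key (p - 1) (by have := Φ.two_le; omega)
  refine ⟨z, hz, ?_⟩
  have := Φ.eq_zero (by omega) hzn
  exact (sub_eq_zero.1 this).symm

end LFilt

open scoped commutatorElement
attribute [local instance] LieRing.ofAssociativeRing
set_option linter.unusedSectionVars false
set_option linter.unusedVariables false

class LzR (p : ℕ) (R : Type) [CommRing R] : Prop where
  two_le : 2 ≤ p
  unit : GoodR p R
  surj : ∀ c : R, ∃ k : ℕ, (k : R) = c

section LieLCS
theorem lieLCS_mem_lie {L : Type} [LieRing L] {i : ℕ} {y : L} (hy : y ∈ lieLCS L i) (z : L) :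
    ⁅y, z⁆ ∈ lieLCS L (i + 1) := AddSubgroup.subset_closure ⟨y, hy, z, rfl⟩

theorem lieLCS_lie {L : Type} [LieRing L] (j : ℕ) : ∀ (i : ℕ) {x y : L}, x ∈ lieLCS L i → y ∈ lieLCS L j →
    ⁅x, y⁆ ∈ lieLCS L (i + j + 1) := by
  induction j with
  | zero => intro i x y hx _; exact lieLCS_mem_lie hx y
  | succ j ih =>
    intro i x y hx hy
    induction hy using AddSubgroup.closure_induction with
    | mem y hy =>
      obtain ⟨y, hy, z, rfl⟩ := hy
      rw [leibniz_lie, ← lie_skew y ⁅x, z⁆]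
      refine add_mem (lieLCS_mem_lie (ih i hx hy) z) (neg_mem ?_)
      have := ih (i + 1) (lieLCS_mem_lie hx z) hy
      rwa [show i + 1 + j + 1 = i + (j + 1) + 1 by ring] at this
    | zero => rw [lie_zero]; exact zero_mem _
    | add a b _ _ ha hb => rw [lie_add]; exact add_mem ha hb
    | neg a _ ha => rw [lie_neg]; exact neg_mem ha

theorem lieLCS_anti {L : Type} [LieRing L] (i : ℕ) : lieLCS L (i + 1) ≤ lieLCS L i := by
  induction i with
  | zero => exact le_top
  | succ i ih =>
    refine AddSubgroup.closure_mono ?_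
    rintro x ⟨y, hy, z, rfl⟩
    exact ⟨y, ih hy, z, rfl⟩

theorem lieLCS_bot {L : Type} [LieRing L] {i j : ℕ} (hij : i ≤ j) (h : lieLCS L i = ⊥) : lieLCS L j = ⊥ := by
  rw [eq_bot_iff, ← h]
  exact antitone_nat_of_succ_le lieLCS_anti hij
end LieLCS

namespace LZ
variable (p : ℕ) (R : Type) [CommRing R] (X : Type)

abbrev V := {w : List X // w.length < p} →₀ R
def A := Module.End R (V p R X)
noncomputable instance : Ring (A p R X) := inferInstanceAs (Ring (Module.End R (V p R X)))
noncomputable instance : Algebra R (A p R X) := inferInstanceAs (Algebra R (Module.End R (V p R X)))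
/-- the tautological action -/
noncomputable def act {p : ℕ} {R : Type} [CommRing R] {X : Type} : A p R X ≃ₐ[R] Module.End R (V p R X) := AlgEquiv.refl
noncomputable instance : CoeFun (A p R X) (fun _ => V p R X → V p R X) := ⟨fun T => act T⟩

variable {X}
noncomputable def sg (l : List X) : V p R X := if h : l.length < p then Finsupp.single ⟨l, h⟩ 1 else 0

noncomputable def lft {M : Type} [AddCommGroup M] [Module R M] (g : List X → M) : V p R X →ₗ[R] M :=
  Finsupp.linearCombination R (fun w => g w.1)

variable {p R}
theorem sg_zero {l : List X} (h : p ≤ l.length) : sg p R l = 0 := by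
  rw [sg, dif_neg (not_lt.2 h)]

variable {M : Type} [AddCommGroup M] [Module R M]
theorem lft_sg {g : List X → M} {l : List X} (h : l.length < p) : lft p R g (sg p R l) = g l := by
  rw [sg, dif_pos h, lft, Finsupp.linearCombination_single, one_smul]

theorem lft_sg' {g : List X → M} {l : List X} (h : p ≤ l.length → g l = 0) : lft p R g (sg p R l) = g l := by
  by_cases hl : l.length < p
  · exact lft_sg hl
  · rw [h (not_lt.1 hl), sg_zero (not_lt.1 hl), map_zero]

theorem V_ext {f g : V p R X →ₗ[R] M} (h : ∀ l : List X, l.length < p → f (sg p R l) = g (sg p R l)) : f = g := by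
  refine Finsupp.lhom_ext' fun w => LinearMap.ext_ring ?_
  have := h w.1 w.2
  simpa [sg, w.2] using this

variable (p R X)
noncomputable def Vge (k : ℕ) : Submodule R (V p R X) := Submodule.span R (sg p R '' {l | k ≤ l.length})

variable {p R X}
theorem sg_mem {l : List X} {k : ℕ} (h : k ≤ l.length) : sg p R l ∈ Vge p R X k :=
  Submodule.subset_span ⟨l, h, rfl⟩

theorem Vge_top : Vge p R X 0 = ⊤ := by
  rw [eq_top_iff]
  intro v _
  induction v using Finsupp.induction_linear with
  | zero => exact zero_mem _
  | add f g hf hg => exact add_mem (hf trivial) (hg trivial)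
  | single w c =>
    have : Finsupp.single w c = c • sg p R w.1 := by
      rw [sg, dif_pos w.2]; simp
    rw [this]
    exact Submodule.smul_mem _ _ (sg_mem (Nat.zero_le _))

theorem Vge_anti {i j : ℕ} (h : i ≤ j) : Vge p R X j ≤ Vge p R X i := by
  refine Submodule.span_mono (Set.image_mono ?_)
  intro l hl
  exact le_trans h hl

theorem Vge_bot : Vge p R X p = ⊥ := by
  rw [eq_bot_iff, Vge, Submodule.span_le]
  rintro _ ⟨l, hl, rfl⟩
  exact sg_zero hl

theorem Vge_ind {f : V p R X →ₗ[R] M} {k : ℕ} {N : Submodule R M} (h : ∀ l : List X, k ≤ l.length → f (sg p R l) ∈ N)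
    {v : V p R X} (hv : v ∈ Vge p R X k) : f v ∈ N := by
  have : Vge p R X k ≤ N.comap f := by
    rw [Vge, Submodule.span_le]
    rintro _ ⟨l, hl, rfl⟩
    exact h l hl
  exact this hv

theorem act_add (S T : A p R X) (v : V p R X) : (S + T) v = S v + T v := by rw [map_add]; rfl
theorem act_sub (S T : A p R X) (v : V p R X) : (S - T) v = S v - T v := by rw [map_sub]; rfl
theorem act_mul (S T : A p R X) (v : V p R X) : (S * T) v = S (T v) := by rw [map_mul]; rfl
theorem act_smul (c : R) (T : A p R X) (v : V p R X) : (c • T) v = c • T v := by rw [map_smul]; rfl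
theorem act_nsmul (c : ℕ) (T : A p R X) (v : V p R X) : (c • T) v = c • T v := by rw [map_nsmul]; rfl
theorem act_zero (v : V p R X) : (0 : A p R X) v = 0 := by rw [map_zero]; rfl
theorem act_one (v : V p R X) : (1 : A p R X) v = v := by rw [map_one]; rfl
theorem act_lie (S T : A p R X) (v : V p R X) : ⁅S, T⁆ v = S (T v) - T (S v) := by
  rw [Ring.lie_def, act_sub, act_mul, act_mul]

variable (p R X) in
noncomputable def EE : A p R X := act.symm (lft p R (fun l => (l.length : R) • sg p R l))

variable (p R) in
noncomputable def ell (x : X) : A p R X := act.symm (lft p R (fun l => sg p R (x :: l)))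

theorem EE_sg (l : List X) : EE p R X (sg p R l) = (l.length : R) • sg p R l := by
  rw [EE, AlgEquiv.apply_symm_apply]
  exact lft_sg' (fun h => by rw [sg_zero h, smul_zero])

theorem ell_sg (x : X) (l : List X) : ell p R x (sg p R l) = sg p R (x :: l) := by
  rw [ell, AlgEquiv.apply_symm_apply]
  exact lft_sg' (fun h => by rw [sg_zero (by simp; omega)])

noncomputable def FF (n : ℕ) : Submodule R (A p R X) where
  carrier := {T | ∀ k, ∀ v ∈ Vge p R X k, T v ∈ Vge p R X (k + n)}
  add_mem' ha hb k v hv := by rw [act_add]; exact add_mem (ha k v hv) (hb k v hv)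
  zero_mem' k v _ := by rw [act_zero]; exact zero_mem _
  smul_mem' c _ ha k v hv := by rw [act_smul]; exact Submodule.smul_mem _ c (ha k v hv)

variable (p R X) in
noncomputable def Phi [LzR p R] : LFilt p R (A p R X) where
  F := FF
  E := EE p R X
  two_le := LzR.two_le R
  unit := LzR.unit
  anti h T hT k v hv := Vge_anti (by omega) (hT k v hv)
  mul_mem {i j a b} ha hb k v hv := by
    have := ha _ _ (hb k v hv)
    rw [act_mul]
    rwa [add_assoc, add_comm j i] at this
  one_mem k v hv := by rw [act_one]; exact hv
  top := by
    rw [eq_bot_iff]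
    intro T hT
    rw [Submodule.mem_bot]
    apply act.injective
    rw [map_zero]
    ext1 w
    ext1
    have := hT 0 (Finsupp.single w 1) (by rw [Vge_top]; trivial)
    rw [zero_add, Vge_bot] at this
    simpa using this
  E_mem k v hv := Vge_ind (f := act (EE p R X)) (fun l hl => by rw [EE_sg]; exact Submodule.smul_mem _ _ (sg_mem hl)) hv
  hE {n a} ha k v hv := by
    have key : ∀ k v, v ∈ Vge p R X k → EE p R X v - k • v ∈ Vge p R X (k + 1) := by
      intro k v hv
      refine Vge_ind (f := act (EE p R X) - k • LinearMap.id) (fun l hl => ?_) hv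
      simp only [LinearMap.sub_apply, LinearMap.smul_apply, LinearMap.id_apply, EE_sg]
      rcases Nat.eq_or_lt_of_le hl with h | h
      · rw [← h, Nat.cast_smul_eq_nsmul, sub_self]; exact zero_mem _
      · exact sub_mem (Submodule.smul_mem _ _ (sg_mem h)) (nsmul_mem (sg_mem h) _)
    have h1 := key _ _ (ha k v hv)
    have h2 := ha _ _ (key _ _ hv)
    have h3 := sub_mem h1 (show a (EE p R X v - k • v) ∈ Vge p R X (k + n + 1) by
      rwa [show k + n + 1 = k + 1 + n by ring])
    rw [← add_assoc]
    convert h3 using 1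
    rw [act_sub, act_sub, act_mul, act_mul, act_nsmul, map_sub, map_nsmul, add_nsmul]
    abel

theorem ell_mem (x : X) : ell p R x ∈ (FF 1 : Submodule R (A p R X)) := by
  intro k v hv
  exact Vge_ind (f := act (ell p R x)) (fun l hl => by rw [ell_sg]; exact sg_mem (by simpa using hl)) hv

theorem E_ell (x : X) : EE p R X * ell p R x - ell p R x * EE p R X = ell p R x := by
  apply act.injective
  refine V_ext fun l _ => ?_
  rw [act_sub, act_mul, act_mul, ell_sg, EE_sg, EE_sg, map_smul, ell_sg]
  rw [List.length_cons]; push_cast; rw [add_smul, one_smul]; abel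

variable (p R X) in
/-- the free Lie algebra of class `< p` -/
noncomputable def LL : LieSubalgebra R (A p R X) := LieSubalgebra.lieSpan R (A p R X) (Set.range (ell p R))

theorem ell_LL (x : X) : ell p R x ∈ LL p R X := LieSubalgebra.subset_lieSpan ⟨x, rfl⟩

variable (p R) in
noncomputable def gn (x : X) : LL p R X := ⟨ell p R x, ell_LL x⟩

variable [LzR p R]

theorem lie_FF {i j : ℕ} {a b : A p R X} (ha : a ∈ (Phi p R X).F i) (hb : b ∈ (Phi p R X).F j) :
    ⁅a, b⁆ ∈ (Phi p R X).F (i + j) :=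
  sub_mem ((Phi p R X).mul_mem ha hb) (by rw [add_comm]; exact (Phi p R X).mul_mem hb ha)

theorem LL_F1 : ∀ z ∈ LL p R X, z ∈ (Phi p R X).F 1 := by
  intro z hz
  induction hz using LieSubalgebra.lieSpan_induction with
  | mem x hx => obtain ⟨x, rfl⟩ := hx; exact ell_mem x
  | zero => exact zero_mem _
  | add a b _ _ ha hb => exact add_mem ha hb
  | smul c a _ ha => exact Submodule.smul_mem _ c ha
  | lie a b _ _ ha hb => exact (Phi p R X).anti (by omega) (lie_FF ha hb)

theorem LL_E : ∀ z ∈ LL p R X, (Phi p R X).E * z - z * (Phi p R X).E ∈ LL p R X := by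
  intro z hz
  change ⁅(Phi p R X).E, z⁆ ∈ _
  induction hz using LieSubalgebra.lieSpan_induction with
  | mem x hx => obtain ⟨x, rfl⟩ := hx; rw [Ring.lie_def]; erw [E_ell]; exact ell_LL x
  | zero => rw [lie_zero]; exact zero_mem _
  | add a b _ _ ha hb => rw [lie_add]; exact add_mem ha hb
  | smul c a _ ha => rw [lie_smul]; exact (LL p R X).smul_mem c ha
  | lie a b ha' hb' ha hb =>
    rw [leibniz_lie]
    exact add_mem ((LL p R X).lie_mem ha hb') ((LL p R X).lie_mem ha' hb)

/-- the monomial relation -/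
inductive Mon {L : Type} (br : L → L → L) (f : X → L) : ℕ → A p R X → L → Prop
  | gen (x : X) : Mon br f 1 (ell p R x) (f x)
  | br {i j T S l m} : Mon br f i T l → Mon br f j S m → Mon br f (i + j) ⁅T, S⁆ (br l m)

section mon
variable {L : Type} {br : L → L → L} {f : X → L} {n : ℕ} {T : A p R X} {l : L}
theorem Mon.pos (h : Mon br f n T l) : 1 ≤ n := by induction h <;> omega

theorem Mon.mem (h : Mon br f n T l) : T ∈ (Phi p R X).F n := by
  induction h with
  | gen x => exact ell_mem x
  | br _ _ h1 h2 => exact lie_FF h1 h2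

theorem Mon.LL (h : Mon br f n T l) : T ∈ LL p R X := by
  induction h with
  | gen x => exact ell_LL x
  | br _ _ h1 h2 => exact (LZ.LL p R X).lie_mem h1 h2

theorem Mon.E (h : Mon br f n T l) : (Phi p R X).E * T - T * (Phi p R X).E = n • T := by
  change ⁅(Phi p R X).E, T⁆ = _
  induction h with
  | gen x => rw [Ring.lie_def]; erw [E_ell]; simp
  | br _ _ h1 h2 => rw [leibniz_lie, h1, h2, lie_nsmul, nsmul_lie, add_nsmul]
end mon

section ev
variable {L : Type} [LieRing L] [LieAlgebra R L]

def dl (f : X → L) : List X → L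
  | [] => 0
  | [x] => f x
  | x :: y :: w => ⁅f x, dl f (y :: w)⁆

omit [LieAlgebra R L] [LzR p R] in
theorem dl_mem (f : X → L) (x : X) (w : List X) : dl f (x :: w) ∈ lieLCS L w.length := by
  induction w generalizing x with
  | nil => exact trivial
  | cons y w ih =>
    have := lieLCS_lie (w.length) 0 (x := f x) (y := dl f (y :: w)) trivial (ih y)
    rw [zero_add] at this
    exact this

omit [CommRing R] [LieAlgebra R L] [LzR p R] in
theorem dl_zero (hL : lieLCS L (p - 1) = ⊥) (f : X → L) {w : List X} (h : p ≤ w.length) : dl f w = 0 := by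
  cases w with
  | nil => rfl
  | cons x w =>
    have := dl_mem f x w
    rw [lieLCS_bot (by simp at h; omega) hL] at this
    exact this

theorem Mon.lcs {f : X → L} {n : ℕ} {T : A p R X} {l : L} (h : Mon (fun x y => ⁅x, y⁆) f n T l) : l ∈ lieLCS L (n - 1) := by
  induction h with
  | gen x => trivial
  | @br i j T S l m h1 h2 h3 h4 =>
    have := lieLCS_lie _ _ h3 h4
    have := h1.pos
    have := h2.pos
    rwa [show i + j - 1 = i - 1 + (j - 1) + 1 by omega]

variable (p R) in
noncomputable def dlt (f : X → L) : V p R X →ₗ[R] L := lft p R (dl f)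
variable (p R) in
noncomputable def dlt' (f : X → L) : V p R X →ₗ[R] L := lft p R (fun l => Ring.inverse (l.length : R) • dl f l)

omit [LzR p R] in
theorem dlt_sg (hL : lieLCS L (p - 1) = ⊥) (f : X → L) (l : List X) : dlt p R f (sg p R l) = dl f l :=
  lft_sg' (dl_zero hL f)

theorem dlt'_E (f : X → L) (v : V p R X) : dlt' p R f ((Phi p R X).E v) = dlt p R f v := by
  have : (dlt' p R f) ∘ₗ (act (EE p R X)) = dlt p R f := by
    refine V_ext fun l hl => ?_
    rw [LinearMap.comp_apply, EE_sg, map_smul, dlt', dlt, lft_sg hl, lft_sg hl]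
    rcases Nat.eq_zero_or_pos l.length with h | h
    · rw [List.length_eq_zero_iff] at h; subst h; simp [dl]
    · rw [smul_smul, Ring.mul_inverse_cancel _ (LzR.unit _ h hl), one_smul]
  exact LinearMap.congr_fun this v

theorem Mon.dlt (hL : lieLCS L (p - 1) = ⊥) {f : X → L} {n : ℕ} {T : A p R X} {l : L} (h : Mon (fun x y => ⁅x, y⁆) f n T l) :
    (∀ v ∈ Vge p R X 1, dlt p R f (T v) = ⁅l, dlt p R f v⁆) ∧ dlt p R f (T (sg p R [])) = n • l := by
  induction h with
  | gen x =>
    constructor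
    · intro v hv
      have := Vge_ind (f := LZ.dlt p R f ∘ₗ act (ell p R x) - (LieAlgebra.ad R L (f x)) ∘ₗ (LZ.dlt p R f)) (N := ⊥) ?_ hv
      · simpa [sub_eq_zero] using this
      · intro w hw
        cases w with
        | nil => simp at hw
        | cons y w =>
          simp [ell_sg, dlt_sg hL, dl]
    · rw [ell_sg, dlt_sg hL]; simp [dl]
  | @br i j T S l m h1 h2 h3 h4 =>
    have hT1 : ∀ v ∈ Vge p R X 1, T v ∈ Vge p R X 1 := fun v hv => Vge_anti (by omega) (h1.mem 1 v hv)
    have hS1 : ∀ v ∈ Vge p R X 1, S v ∈ Vge p R X 1 := fun v hv => Vge_anti (by omega) (h2.mem 1 v hv)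
    have hT0 : T (sg p R []) ∈ Vge p R X 1 := Vge_anti (by have := h1.pos; omega) (h1.mem 0 _ (sg_mem (le_refl _)))
    have hS0 : S (sg p R []) ∈ Vge p R X 1 := Vge_anti (by have := h2.pos; omega) (h2.mem 0 _ (sg_mem (le_refl _)))
    constructor
    · intro v hv
      rw [act_lie, map_sub,
        h3.1 _ (hS1 v hv), h4.1 _ (hT1 v hv), h3.1 _ hv, h4.1 _ hv, lie_lie]
    · rw [act_lie, map_sub,
        h3.1 _ hS0, h4.1 _ hT0, h3.2, h4.2, lie_nsmul, lie_nsmul, ← lie_skew m l, add_nsmul]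
      rw [smul_neg, sub_neg_eq_add, add_comm]

theorem Mon.dlt' (hL : lieLCS L (p - 1) = ⊥) {f : X → L} {n : ℕ} {T : A p R X} {l : L} (h : Mon (fun x y => ⁅x, y⁆) f n T l) :
    dlt' p R f (T (sg p R [])) = l := by
  by_cases hn : n < p
  · obtain ⟨u, hu⟩ := LzR.unit (R := R) n h.pos hn
    have h1 := (h.dlt hL).2
    rw [← dlt'_E] at h1
    have h2 := congrArg (fun T : A p R X => T (sg p R [])) h.E
    simp only [act_sub, act_mul, act_nsmul] at h2
    have h3 : (Phi p R X).E (sg p R []) = 0 := by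
      change EE p R X _ = 0
      rw [EE_sg]; simp
    rw [h3, map_zero, sub_zero] at h2
    rw [h2, map_nsmul, ← Nat.cast_smul_eq_nsmul R, ← Nat.cast_smul_eq_nsmul R, ← hu] at h1
    have := congrArg (fun t => (↑u⁻¹ : R) • t) h1
    simpa [smul_smul] using this
  · have h1 := h.lcs
    rw [lieLCS_bot (by omega) hL, AddSubgroup.mem_bot] at h1
    rw [(Phi p R X).eq_zero (not_lt.1 hn) h.mem, h1, act_zero, map_zero]

variable (p R) in
noncomputable def Gr (f : X → L) : Submodule R (A p R X × L) :=
  Submodule.span R {q | ∃ n, Mon (fun x y => ⁅x, y⁆) f n q.1 q.2}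

theorem Gr_dlt' (hL : lieLCS L (p - 1) = ⊥) {f : X → L} {q : A p R X × L} (h : q ∈ Gr p R f) :
    dlt' p R f (q.1 (sg p R [])) = q.2 := by
  induction h using Submodule.span_induction with
  | mem q h => obtain ⟨n, h⟩ := h; exact h.dlt' hL
  | zero => rw [Prod.fst_zero, act_zero, map_zero, Prod.snd_zero]
  | add a b _ _ ha hb => rw [Prod.fst_add, act_add, map_add, ha, hb, Prod.snd_add]
  | smul c a _ ha => rw [Prod.smul_fst, act_smul, map_smul, ha, Prod.smul_snd]

theorem Gr_lie {f : X → L} {q r : A p R X × L} (hq : q ∈ Gr p R f) (hr : r ∈ Gr p R f) :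
    (⁅q.1, r.1⁆, ⁅q.2, r.2⁆) ∈ Gr p R f := by
  induction hq using Submodule.span_induction with
  | mem q h =>
    obtain ⟨n, h⟩ := h
    induction hr using Submodule.span_induction with
    | mem r h' => obtain ⟨m, h'⟩ := h'; exact Submodule.subset_span ⟨_, Mon.br h h'⟩
    | zero => rw [Prod.fst_zero, Prod.snd_zero, lie_zero, lie_zero, Prod.mk_zero_zero]; exact zero_mem _
    | add a b _ _ ha hb => rw [Prod.fst_add, Prod.snd_add, lie_add, lie_add, ← Prod.mk_add_mk]; exact add_mem ha hb
    | smul c a _ ha => rw [Prod.smul_fst, Prod.smul_snd, lie_smul, lie_smul, ← Prod.smul_mk]; exact Submodule.smul_mem _ c ha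
  | zero => rw [Prod.fst_zero, Prod.snd_zero, zero_lie, zero_lie, Prod.mk_zero_zero]; exact zero_mem _
  | add a b _ _ ha hb => rw [Prod.fst_add, Prod.snd_add, add_lie, add_lie, ← Prod.mk_add_mk]; exact add_mem ha hb
  | smul c a _ ha => rw [Prod.smul_fst, Prod.smul_snd, smul_lie, smul_lie, ← Prod.smul_mk]; exact Submodule.smul_mem _ c ha

theorem Gr_ex (f : X → L) {T : A p R X} (hT : T ∈ LL p R X) : ∃ l, (T, l) ∈ Gr p R f := by
  induction hT using LieSubalgebra.lieSpan_induction with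
  | mem x hx => obtain ⟨x, rfl⟩ := hx; exact ⟨f x, Submodule.subset_span ⟨1, Mon.gen x⟩⟩
  | zero => exact ⟨0, by rw [Prod.mk_zero_zero]; exact zero_mem _⟩
  | add a b _ _ ha hb => obtain ⟨l, hl⟩ := ha; obtain ⟨m, hm⟩ := hb; exact ⟨l + m, by rw [← Prod.mk_add_mk]; exact add_mem hl hm⟩
  | smul c a _ ha => obtain ⟨l, hl⟩ := ha; exact ⟨c • l, by rw [← Prod.smul_mk]; exact Submodule.smul_mem _ c hl⟩
  | lie a b _ _ ha hb => obtain ⟨l, hl⟩ := ha; obtain ⟨m, hm⟩ := hb; exact ⟨⁅l, m⁆, Gr_lie (q := (a, l)) (r := (b, m)) hl hm⟩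

/-- evaluation homomorphism -/
noncomputable def ev (hL : lieLCS L (p - 1) = ⊥) (f : X → L) : LL p R X →ₗ⁅R⁆ L where
  toFun T := dlt' p R f (T.1 (sg p R []))
  map_add' a b := by rw [show ((a + b : LL p R X) : A p R X) = a.1 + b.1 from rfl, act_add, map_add]
  map_smul' c a := by rw [show ((c • a : LL p R X) : A p R X) = c • a.1 from rfl, act_smul, map_smul]; rfl
  map_lie' {a b} := by
    obtain ⟨l, hl⟩ := Gr_ex f a.2
    obtain ⟨m, hm⟩ := Gr_ex f b.2
    have h1 := Gr_dlt' hL hl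
    have h2 := Gr_dlt' hL hm
    have h3 := Gr_dlt' hL (Gr_lie hl hm)
    simp only at h1 h2 h3
    simp only [LieSubalgebra.coe_bracket]
    rw [h1, h2, h3]

@[simp] theorem ev_gn (hL : lieLCS L (p - 1) = ⊥) (f : X → L) (x : X) : ev hL f (gn p R x) = f x :=
  Mon.dlt' hL (Mon.gen x)

omit [LzR p R] in
theorem LL_hom_ext {f g : LL p R X →ₗ⁅R⁆ L} (h : ∀ x, f (gn p R x) = g (gn p R x)) : f = g := by
  ext ⟨z, hz⟩
  induction hz using LieSubalgebra.lieSpan_induction with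
  | mem x hx => obtain ⟨x, rfl⟩ := hx; exact h x
  | zero => exact (map_zero f).trans (map_zero g).symm
  | add a b ha' hb' ha hb =>
    exact (map_add f ⟨a, ha'⟩ ⟨b, hb'⟩).trans ((congrArg₂ _ ha hb).trans (map_add g ⟨a, ha'⟩ ⟨b, hb'⟩).symm)
  | smul c a ha' ha =>
    exact (map_smul f c ⟨a, ha'⟩).trans ((congrArg _ ha).trans (map_smul g c ⟨a, ha'⟩).symm)
  | lie a b ha' hb' ha hb =>
    exact (LieHom.map_lie f ⟨a, ha'⟩ ⟨b, hb'⟩).trans ((congrArg₂ _ ha hb).trans (LieHom.map_lie g ⟨a, ha'⟩ ⟨b, hb'⟩).symm)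

end ev

theorem LL_lcs_mem (n : ℕ) : ∀ z ∈ lieLCS (LL p R X) n, z.1 ∈ (Phi p R X).F (n + 1) := by
  induction n with
  | zero => intro z _; exact LL_F1 z.1 z.2
  | succ n ih =>
    intro z hz
    induction hz using AddSubgroup.closure_induction with
    | mem z hz =>
      obtain ⟨y, hy, w, rfl⟩ := hz
      exact lie_FF (ih y hy) (LL_F1 w.1 w.2)
    | zero => exact zero_mem _
    | add a b _ _ ha hb => exact add_mem ha hb
    | neg a _ ha => exact neg_mem ha

variable (p R X) in
theorem LL_lcs : lieLCS (LL p R X) (p - 1) = ⊥ := by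
  rw [eq_bot_iff]
  intro z hz
  have := LL_lcs_mem _ z hz
  rw [AddSubgroup.mem_bot]
  exact Subtype.ext ((Phi p R X).eq_zero (by omega) this)

end LZ

open scoped commutatorElement
attribute [local instance] LieRing.ofAssociativeRing
set_option linter.unusedSectionVars false
set_option linter.unusedVariables false
set_option linter.style.haveILetI false

namespace LZ
variable {p : ℕ} {R : Type} [CommRing R] {X Y : Type} [LzR p R]

section nat
variable (f : LL p R X →ₗ⁅R⁆ LL p R Y)

noncomputable def prd (l : List X) : A p R Y := (l.map (fun x => (f (gn p R x)).1)).prod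

theorem prd_mem (l : List X) : prd f l ∈ (Phi p R Y).F l.length := by
  induction l with
  | nil => exact (Phi p R Y).one_mem
  | cons x l ih =>
    have := (Phi p R Y).mul_mem (LL_F1 _ (f (gn p R x)).2) ih
    rw [add_comm] at this
    exact this

noncomputable def DD : V p R X →ₗ[R] A p R Y := lft p R (prd f)

theorem DD_sg (l : List X) : DD f (sg p R l) = prd f l :=
  lft_sg' fun h => (Phi p R Y).eq_zero h (prd_mem f l)

theorem DD_nil : DD f (sg p R []) = 1 := DD_sg f []

theorem DD_LL : ∀ (z : A p R X) (hz : z ∈ LL p R X) (v : V p R X), DD f (z v) = (f ⟨z, hz⟩).1 * DD f v := by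
  intro z hz
  induction hz using LieSubalgebra.lieSpan_induction with
  | mem x hx =>
    obtain ⟨x, rfl⟩ := hx
    intro v
    have : (DD f).comp (act (ell p R x)) = (LinearMap.mulLeft R (f (gn p R x)).1).comp (DD f) := by
      refine V_ext fun l _ => ?_
      change DD f (ell p R x (sg p R l)) = (f (gn p R x)).1 * DD f (sg p R l)
      rw [ell_sg, DD_sg, DD_sg]; rfl
    exact LinearMap.congr_fun this v
  | zero => intro v; rw [act_zero, map_zero, show (⟨0, zero_mem _⟩ : LL p R X) = 0 from rfl, map_zero]; exact (zero_mul _).symm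
  | add a b ha' hb' ha hb =>
    intro v
    rw [act_add, map_add, ha, hb, ← add_mul, show (⟨a + b, add_mem ha' hb'⟩ : LL p R X) = ⟨a, ha'⟩ + ⟨b, hb'⟩ from rfl, map_add]; rfl
  | smul c a ha' ha =>
    intro v
    rw [act_smul, map_smul, ha, ← smul_mul_assoc, show (⟨c • a, (LL p R X).smul_mem c ha'⟩ : LL p R X) = c • ⟨a, ha'⟩ from rfl, map_smul]; rfl
  | lie a b ha' hb' ha hb =>
    intro v
    rw [act_lie, map_sub, ha, hb, hb, ha, ← mul_assoc, ← mul_assoc, ← sub_mul,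
      show (⟨⁅a, b⁆, (LL p R X).lie_mem ha' hb'⟩ : LL p R X) = ⁅(⟨a, ha'⟩ : LL p R X), ⟨b, hb'⟩⁆ from rfl, LieHom.map_lie]; rfl

theorem DD_pow (z : LL p R X) (v : V p R X) (k : ℕ) : DD f ((z.1 ^ k) v) = (f z).1 ^ k * DD f v := by
  induction k generalizing v with
  | zero => rw [pow_zero, pow_zero, act_one, one_mul]
  | succ k ih => rw [pow_succ, act_mul, ih, DD_LL f z.1 z.2, pow_succ, mul_assoc]

theorem DD_texp (z : LL p R X) (v : V p R X) : DD f (texp p R z.1 v) = texp p R (f z).1 * DD f v := by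
  have h1 : (texp p R z.1 : A p R X) v = ∑ k ∈ Finset.range p, rfac R k • ((z.1 ^ k) v) := by
    have h2 : act (texp p R z.1) = texp p R (act z.1) := by simp only [texp, map_sum, map_smul, map_pow]
    rw [h2, texp_apply]
    simp only [map_pow]
  rw [h1, map_sum, texp, Finset.sum_mul]
  refine Finset.sum_congr rfl fun k _ => ?_
  rw [map_smul, DD_pow, smul_mul_assoc]

theorem nat_mul {u v w : LL p R X} (h : texp p R w.1 = texp p R u.1 * texp p R v.1) :
    texp p R (f w).1 = texp p R (f u).1 * texp p R (f v).1 := by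
  have h1 := DD_texp f w (sg p R [])
  rw [h, act_mul, DD_texp, DD_texp, DD_nil, mul_one, mul_one] at h1
  exact h1.symm
end nat

theorem bch_ex (u v : LL p R X) : ∃ w : LL p R X, texp p R w.1 = texp p R u.1 * texp p R v.1 := by
  obtain ⟨z, hz, h⟩ := LFilt.bch_exists (Φ := Phi p R X) LL_F1 LL_E u.2 v.2
  exact ⟨⟨z, hz⟩, h⟩

noncomputable def bch (u v : LL p R X) : LL p R X := (bch_ex u v).choose
theorem texp_bch (u v : LL p R X) : texp p R (bch u v).1 = texp p R u.1 * texp p R v.1 := (bch_ex u v).choose_spec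

theorem texp_inj' {u v : LL p R X} (h : texp p R u.1 = texp p R v.1) : u = v :=
  Subtype.ext ((Phi p R X).texp_inj (LL_F1 u.1 u.2) (LL_F1 v.1 v.2) h)

theorem map_bch (f : LL p R X →ₗ⁅R⁆ LL p R Y) (u v : LL p R X) : f (bch u v) = bch (f u) (f v) :=
  texp_inj' (by rw [nat_mul f (texp_bch u v), texp_bch])

noncomputable def ex (u : LL p R X) : (A p R X)ˣ := (Phi p R X).eu u.1 (LL_F1 u.1 u.2)
theorem ex_val (u : LL p R X) : (ex u : A p R X) = texp p R u.1 := rfl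
theorem ex_inv_val (u : LL p R X) : ((ex u)⁻¹ : (A p R X)ˣ).1 = texp p R (-u.1) := rfl
theorem ex_bch (u v : LL p R X) : ex (bch u v) = ex u * ex v := Units.ext (texp_bch u v)
theorem ex_inj {u v : LL p R X} (h : ex u = ex v) : u = v := texp_inj' (congrArg Units.val h)
theorem ex_zero : ex (0 : LL p R X) = 1 := Units.ext (LFilt.texp_zero (by have := LzR.two_le (p := p) (R := R); omega))
theorem ex_neg (u : LL p R X) : ex (-u) = (ex u)⁻¹ := Units.ext rfl
theorem ex_add {u v : LL p R X} (h : Commute u.1 v.1) : ex (u + v) = ex u * ex v :=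
  Units.ext ((Phi p R X).texp_add (LL_F1 u.1 u.2) (LL_F1 v.1 v.2) h)
theorem ex_nsmul (u : LL p R X) (k : ℕ) : ex (k • u) = ex u ^ k := by
  induction k with
  | zero => rw [zero_smul, ex_zero, pow_zero]
  | succ k ih =>
    rw [add_smul, one_smul, ex_add, ih, pow_succ]
    exact (Commute.refl u.1).smul_left k

variable (p R X) in
/-- the group of exponentials -/
noncomputable def Gam : Subgroup (A p R X)ˣ where
  carrier := Set.range ex
  mul_mem' := by rintro _ _ ⟨u, rfl⟩ ⟨v, rfl⟩; exact ⟨bch u v, ex_bch u v⟩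
  one_mem' := ⟨0, ex_zero⟩
  inv_mem' := by rintro _ ⟨u, rfl⟩; exact ⟨-u, ex_neg u⟩

noncomputable def eg (u : LL p R X) : Gam p R X := ⟨ex u, u, rfl⟩
noncomputable def lg (g : Gam p R X) : LL p R X := g.2.choose
theorem eg_lg (g : Gam p R X) : eg (lg g) = g := Subtype.ext g.2.choose_spec
theorem lg_eg (u : LL p R X) : lg (eg u) = u := ex_inj (eg u).2.choose_spec
theorem eg_inj {u v : LL p R X} (h : eg u = eg v) : u = v := ex_inj (congrArg Subtype.val h)
theorem eg_bch (u v : LL p R X) : eg (bch u v) = eg u * eg v := Subtype.ext (ex_bch u v)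
theorem eg_zero : eg (0 : LL p R X) = 1 := Subtype.ext ex_zero
theorem eg_neg (u : LL p R X) : eg (-u) = (eg u)⁻¹ := Subtype.ext (ex_neg u)
theorem eg_nsmul (u : LL p R X) (k : ℕ) : eg (k • u) = eg u ^ k := Subtype.ext (ex_nsmul u k)
theorem lg_mul (g h : Gam p R X) : lg (g * h) = bch (lg g) (lg h) := eg_inj (by rw [eg_lg, eg_bch, eg_lg, eg_lg])
theorem lg_one : lg (1 : Gam p R X) = 0 := by rw [← eg_zero, lg_eg]
theorem lg_inv (g : Gam p R X) : lg g⁻¹ = -lg g := eg_inj (by rw [eg_lg, eg_neg, eg_lg])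

section laz
variable {L : Type} [LieRing L] [LieAlgebra R L]

/-- pairs -/
def pr {L : Type} (x y : L) : Bool → L := fun b => cond b y x

variable (R) in
noncomputable def lmul (hL : lieLCS L (p - 1) = ⊥) (x y : L) : L :=
  ev hL (pr x y) (bch (gn p R false) (gn p R true))

theorem map_lmul (hL : lieLCS L (p - 1) = ⊥) (ψ : LL p R X →ₗ⁅R⁆ L) (u v : LL p R X) :
    ψ (bch u v) = lmul R hL (ψ u) (ψ v) := by
  have h1 : ψ.comp (ev (LL_lcs p R X) (pr u v)) = ev hL (pr (ψ u) (ψ v)) := by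
    refine LL_hom_ext fun b => ?_
    rw [LieHom.comp_apply, ev_gn, ev_gn]
    cases b <;> rfl
  rw [lmul, ← h1, LieHom.comp_apply, map_bch, ev_gn, ev_gn]; rfl

theorem lmul_hom {L' : Type} [LieRing L'] [LieAlgebra R L'] (hL : lieLCS L (p - 1) = ⊥) (hL' : lieLCS L' (p - 1) = ⊥)
    (f : L →ₗ⁅R⁆ L') (x y : L) : f (lmul R hL x y) = lmul R hL' (f x) (f y) := by
  have h1 : f.comp (ev hL (pr x y)) = ev hL' (pr (f x) (f y)) := by
    refine LL_hom_ext fun b => ?_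
    rw [LieHom.comp_apply, ev_gn, ev_gn]
    cases b <;> rfl
  rw [lmul, lmul, ← h1, LieHom.comp_apply]

theorem bch_assoc (u v w : LL p R X) : bch (bch u v) w = bch u (bch v w) :=
  ex_inj (by simp only [ex_bch, mul_assoc])

variable (R) in
noncomputable def lsur (hL : lieLCS L (p - 1) = ⊥) : LL p R L →ₗ⁅R⁆ L := ev hL id

theorem lsur_gn (hL : lieLCS L (p - 1) = ⊥) (x : L) : lsur R hL (gn p R x) = x := ev_gn hL id x

variable (R) in
@[reducible] noncomputable def lazGroup (hL : lieLCS L (p - 1) = ⊥) : Group L :=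
  letI : Mul L := ⟨lmul R hL⟩
  letI : One L := ⟨0⟩
  letI : Inv L := ⟨fun x => -x⟩
  Group.ofLeftAxioms
    (fun x y z => by
      change lmul R hL (lmul R hL x y) z = lmul R hL x (lmul R hL y z)
      have := congrArg (lsur R hL) (bch_assoc (gn p R x) (gn p R y) (gn p R z))
      rw [map_lmul hL, map_lmul hL, map_lmul hL, map_lmul hL] at this
      simpa only [lsur_gn] using this)
    (fun x => by
      change lmul R hL 0 x = x
      have : bch 0 (gn p R x) = gn p R x := ex_inj (by rw [ex_bch, ex_zero, one_mul])
      have := congrArg (lsur R hL) this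
      rw [map_lmul hL] at this
      simpa only [lsur_gn, map_zero] using this)
    (fun x => by
      change lmul R hL (-x) x = 0
      have : bch (-(gn p R x)) (gn p R x) = 0 := ex_inj (by rw [ex_bch, ex_zero, ex_neg, inv_mul_cancel])
      have := congrArg (lsur R hL) this
      rw [map_lmul hL] at this
      simpa only [lsur_gn, map_zero, map_neg] using this)

theorem laz_mul (hL : lieLCS L (p - 1) = ⊥) (x y : L) : letI := lazGroup R hL; x * y = lmul R hL x y := rfl
theorem laz_one (hL : lieLCS L (p - 1) = ⊥) : letI := lazGroup R hL; (1 : L) = 0 := rfl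
theorem laz_inv (hL : lieLCS L (p - 1) = ⊥) (x : L) : letI := lazGroup R hL; x⁻¹ = -x := rfl

/-- a Lie homomorphism from a free object gives a group homomorphism -/
@[reducible] noncomputable def gh (hL : lieLCS L (p - 1) = ⊥) (ψ : LL p R X →ₗ⁅R⁆ L) : 
    letI := lazGroup R hL; Gam p R X →* L :=
  letI := lazGroup R hL
  { toFun := fun g => ψ (lg g)
    map_one' := by rw [lg_one, map_zero]; rfl
    map_mul' := fun g h => by rw [lg_mul, map_lmul hL]; rfl }

theorem laz_pow (hL : lieLCS L (p - 1) = ⊥) (x : L) (k : ℕ) : letI := lazGroup R hL; x ^ k = k • x := by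
  letI := lazGroup R hL
  have := map_pow (gh hL (lsur R hL)) (eg (gn p R x)) k
  rw [← eg_nsmul] at this
  change lsur R hL (lg (eg _)) = (lsur R hL (lg (eg _))) ^ k at this
  rw [lg_eg, lg_eg, lsur_gn, map_nsmul, lsur_gn] at this
  exact this.symm
end laz
end LZ

open scoped commutatorElement
attribute [local instance] LieRing.ofAssociativeRing
set_option linter.unusedSectionVars false
set_option linter.unusedVariables false
set_option linter.style.haveILetI false

section grp
variable {G : Type} [Group G]

variable (G) in
/-- lower central series of the whole group -/
abbrev lc (n : ℕ) : Subgroup G := (⊤ : Subgroup G).lowerCentralSeries n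

instance lc_normal (n : ℕ) : (lc G n).Normal := by
  induction n with
  | zero => exact (inferInstance : (⊤ : Subgroup G).Normal)
  | succ n ih => exact Subgroup.commutator_normal _ _

theorem lc_anti {i j : ℕ} (h : i ≤ j) : lc G j ≤ lc G i := Subgroup.lowerCentralSeries_antitone (S := (⊤ : Subgroup G)) h

theorem three_sub (N : Subgroup G) [N.Normal] {H1 H2 H3 : Subgroup G} (h1 : ⁅⁅H2, H3⁆, H1⁆ ≤ N) (h2 : ⁅⁅H3, H1⁆, H2⁆ ≤ N) :
    ⁅⁅H1, H2⁆, H3⁆ ≤ N := by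
  have key : ∀ K : Subgroup G, K ≤ N ↔ K.map (QuotientGroup.mk' N) = ⊥ := by
    intro K
    rw [Subgroup.map_eq_bot_iff, QuotientGroup.ker_mk']
  rw [key, Subgroup.map_commutator, Subgroup.map_commutator] at *
  exact Subgroup.commutator_commutator_eq_bot_of_rotate h1 h2

theorem lc_comm_le (j : ℕ) : ∀ i : ℕ, ⁅lc G i, lc G j⁆ ≤ lc G (i + j + 1) := by
  induction j with
  | zero => intro i; exact le_refl _
  | succ j ih =>
    intro i
    rw [Subgroup.commutator_comm]
    change ⁅⁅lc G j, ⊤⁆, lc G i⁆ ≤ _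
    refine three_sub _ ?_ ?_
    · rw [Subgroup.commutator_comm ⊤]
      have := ih (i + 1)
      rw [show i + 1 + j + 1 = i + (j + 1) + 1 by ring] at this
      exact this
    · have := Subgroup.commutator_mono (ih i) (le_refl (⊤ : Subgroup G))
      exact this

theorem lc_lie {i j n : ℕ} (hn : n ≤ i + j + 1) {a b : G} (ha : a ∈ lc G i) (hb : b ∈ lc G j) : ⁅a, b⁆ ∈ lc G n :=
  lc_anti hn (lc_comm_le j i (Subgroup.commutator_mem_commutator ha hb))

theorem com_mul_left {a b c : G} (h : ∀ g, Commute ⁅b, c⁆ g) : ⁅a * b, c⁆ = ⁅a, c⁆ * ⁅b, c⁆ := by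
  rw [commutatorElement_mul_left_eq_conj_mul, ← (h a).eq, mul_inv_cancel_right, (h ⁅a, c⁆).eq]

theorem com_mul_right {a b c : G} (h : ∀ g, Commute ⁅a, c⁆ g) : ⁅a, b * c⁆ = ⁅a, b⁆ * ⁅a, c⁆ := by
  rw [commutatorElement_mul_right_eq_mul_conj, mul_assoc ⁅a, b⁆, ← (h b).eq, ← mul_assoc, mul_inv_cancel_right]

theorem com_hw {a b c : G} (h1 : ∀ g, Commute ⁅b, ⁅a, c⁆⁆ g) (h2 : ∀ g, Commute ⁅⁅a, b⁆, c⁆ g)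
    (h3 : Commute ⁅a, b⁆ ⁅a, c⁆) (h4 : Commute ⁅a, c⁆ ⁅b, c⁆) (h5 : Commute ⁅a, b⁆ ⁅b, c⁆) :
    ⁅a, ⁅b, c⁆⁆ = ⁅b, ⁅a, c⁆⁆ * ⁅⁅a, b⁆, c⁆ := by
  have e1 : ⁅a, ⁅b, c⁆⁆ = ⁅⁅a, b⁆ * b, ⁅a, c⁆ * c⁆ * ⁅b, c⁆⁻¹ := by
    simp only [commutatorElement_def]; group
  rw [e1]
  generalize ⁅a, b⁆ = x at *
  generalize ⁅a, c⁆ = y at *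
  have e2 : ⁅b, y * c⁆ = ⁅b, y⁆ * ⁅b, c⁆ := by
    rw [commutatorElement_mul_right_eq_mul_conj, mul_assoc ⁅b, y⁆, h4.eq, ← mul_assoc, mul_inv_cancel_right]
  have e3 : ⁅x, y * c⁆ = ⁅x, c⁆ := by
    rw [com_mul_right h2, h3.commutator_eq, one_mul]
  rw [commutatorElement_mul_left_eq_conj_mul, e2, e3]
  have e4 : x * (⁅b, y⁆ * ⁅b, c⁆) * x⁻¹ = ⁅b, y⁆ * ⁅b, c⁆ := by
    rw [← mul_assoc x, ← (h1 x).eq, mul_assoc ⁅b, y⁆ x, h5.eq, ← mul_assoc, mul_inv_cancel_right]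
  rw [e4, mul_assoc, (h2 _).eq, mul_assoc, mul_inv_cancel_left]

/-- congruence modulo a lower central term -/
theorem lc_mk {n : ℕ} {a b : G} : (a : G ⧸ lc G n) = b ↔ a⁻¹ * b ∈ lc G n := QuotientGroup.eq

theorem lc_central {n : ℕ} {a : G} (ha : a ∈ lc G (n - 1)) (g : G ⧸ lc G n) : Commute (a : G ⧸ lc G n) g := by
  obtain ⟨g, rfl⟩ := QuotientGroup.mk_surjective g
  rw [← commutatorElement_eq_one_iff_commute]
  have : ⁅a, g⁆ ∈ lc G n := lc_lie (i := n - 1) (j := 0) (by omega) ha trivial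
  exact (QuotientGroup.eq_one_iff _).2 this

theorem mk_com {n : ℕ} (a b : G) : ((⁅a, b⁆ : G) : G ⧸ lc G n) = ⁅(a : G ⧸ lc G n), (b : G ⧸ lc G n)⁆ := rfl

theorem lc_one_mk {n : ℕ} {a : G} (ha : a ∈ lc G n) : (a : G ⧸ lc G n) = 1 := (QuotientGroup.eq_one_iff _).2 ha

/-- bilinearity -/
theorem lcm_left {i j : ℕ} (hi : 1 ≤ i) (hj : 1 ≤ j) {a b c : G} (hb : b ∈ lc G (i - 1)) (hc : c ∈ lc G (j - 1)) :
    ((⁅a * b, c⁆ : G) : G ⧸ lc G (i + j)) = ((⁅a, c⁆ * ⁅b, c⁆ : G) : G ⧸ lc G (i + j)) := by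
  rw [mk_com, QuotientGroup.mk_mul, QuotientGroup.mk_mul, mk_com, mk_com]
  exact com_mul_left (lc_central (lc_lie (by omega) hb hc))

theorem lcm_right {i j : ℕ} (hi : 1 ≤ i) (hj : 1 ≤ j) {a b c : G} (ha : a ∈ lc G (i - 1)) (hc : c ∈ lc G (j - 1)) :
    ((⁅a, b * c⁆ : G) : G ⧸ lc G (i + j)) = ((⁅a, b⁆ * ⁅a, c⁆ : G) : G ⧸ lc G (i + j)) := by
  rw [mk_com, QuotientGroup.mk_mul, QuotientGroup.mk_mul, mk_com, mk_com]
  exact com_mul_right (lc_central (lc_lie (by omega) ha hc))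

theorem lcm_pow_right {i j : ℕ} (hi : 1 ≤ i) (hj : 1 ≤ j) {a c : G} (ha : a ∈ lc G (i - 1)) (hc : c ∈ lc G (j - 1)) (k : ℕ) :
    ((⁅a, c ^ k⁆ : G) : G ⧸ lc G (i + j)) = ((⁅a, c⁆ ^ k : G) : G ⧸ lc G (i + j)) := by
  induction k with
  | zero => simp
  | succ k ih => rw [pow_succ, lcm_right hi hj ha hc, pow_succ, QuotientGroup.mk_mul, ih, ← QuotientGroup.mk_mul]

theorem lcm_inv_right {i j : ℕ} (hi : 1 ≤ i) (hj : 1 ≤ j) {a c : G} (ha : a ∈ lc G (i - 1)) (hc : c ∈ lc G (j - 1)) :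
    ((⁅a, c⁻¹⁆ : G) : G ⧸ lc G (i + j)) = ((⁅a, c⁆⁻¹ : G) : G ⧸ lc G (i + j)) := by
  have := lcm_right hi hj (b := c⁻¹) ha hc
  rw [inv_mul_cancel, commutatorElement_one_right, QuotientGroup.mk_one, QuotientGroup.mk_mul] at this
  rw [QuotientGroup.mk_inv]
  exact eq_inv_of_mul_eq_one_left this.symm

theorem lcm_inv_left {i j : ℕ} (hi : 1 ≤ i) (hj : 1 ≤ j) {a c : G} (ha : a ∈ lc G (i - 1)) (hc : c ∈ lc G (j - 1)) :
    ((⁅a⁻¹, c⁆ : G) : G ⧸ lc G (i + j)) = ((⁅a, c⁆⁻¹ : G) : G ⧸ lc G (i + j)) := by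
  have := lcm_left hi hj (a := a⁻¹) ha hc
  rw [inv_mul_cancel, commutatorElement_one_left, QuotientGroup.mk_one, QuotientGroup.mk_mul] at this
  rw [QuotientGroup.mk_inv]
  exact eq_inv_of_mul_eq_one_left this.symm

theorem lcm_hw {i j k : ℕ} (hi : 1 ≤ i) (hj : 1 ≤ j) (hk : 1 ≤ k) {a b c : G} (ha : a ∈ lc G (i - 1)) (hb : b ∈ lc G (j - 1))
    (hc : c ∈ lc G (k - 1)) :
    ((⁅⁅a, b⁆, c⁆ : G) : G ⧸ lc G (i + j + k)) = ((⁅b, ⁅a, c⁆⁆⁻¹ * ⁅a, ⁅b, c⁆⁆ : G) : G ⧸ lc G (i + j + k)) := by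
  have hab : ⁅a, b⁆ ∈ lc G (i + j - 1) := lc_lie (by omega) ha hb
  have hac : ⁅a, c⁆ ∈ lc G (i + k - 1) := lc_lie (by omega) ha hc
  have hbc : ⁅b, c⁆ ∈ lc G (j + k - 1) := lc_lie (by omega) hb hc
  have key := com_hw (a := (a : G ⧸ lc G (i + j + k))) (b := (b : G ⧸ lc G (i + j + k))) (c := (c : G ⧸ lc G (i + j + k)))
    (lc_central (a := ⁅b, ⁅a, c⁆⁆) (lc_lie (by omega) hb hac))
    (lc_central (a := ⁅⁅a, b⁆, c⁆) (lc_lie (by omega) hab hc))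
    (commutatorElement_eq_one_iff_commute.1 (lc_one_mk (a := ⁅⁅a, b⁆, ⁅a, c⁆⁆) (lc_lie (by omega) hab hac)))
    (commutatorElement_eq_one_iff_commute.1 (lc_one_mk (a := ⁅⁅a, c⁆, ⁅b, c⁆⁆) (lc_lie (by omega) hac hbc)))
    (commutatorElement_eq_one_iff_commute.1 (lc_one_mk (a := ⁅⁅a, b⁆, ⁅b, c⁆⁆) (lc_lie (by omega) hab hbc)))
  rw [QuotientGroup.mk_mul, QuotientGroup.mk_inv, eq_inv_mul_iff_mul_eq]
  exact key.symm
end grp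

open scoped commutatorElement
attribute [local instance] LieRing.ofAssociativeRing
set_option linter.unusedSectionVars false
set_option linter.unusedVariables false
set_option linter.style.haveILetI false

section rg
variable {B : Type} [Ring B]
theorem rg1 (a b : B) : a * b - 1 = (a - 1) * b + (b - 1) := by noncomm_ring
theorem rg2 (a b : B) (h : a * b = 1) : b - 1 = (a - 1) * (-b) := by rw [mul_neg, sub_mul, h]; noncomm_ring
theorem rg3 (a b t s : B) : a * b - 1 - (t + s) = (a - 1 - t) + (b - 1 - s) + (a - 1) * (b - 1) := by noncomm_ring
theorem rg4 (a b t : B) (h : a * b = 1) : b - 1 - (-t) = -(a - 1 - t) - (a - 1) * (b - 1) := by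
  rw [sub_mul, mul_sub, h]; noncomm_ring
end rg

namespace LZ
variable {p : ℕ} {R : Type} [CommRing R] {X Y : Type} [LzR p R]

/-- monomials of given degree -/
def MonU (n : ℕ) (T : A p R X) : Prop := Mon (fun _ _ => ()) (fun _ : X => ()) n T ()

theorem MonU.mon {L : Type} (br : L → L → L) (f : X → L) {n : ℕ} {T : A p R X} (h : MonU n T) : ∃ l, Mon br f n T l := by
  unfold MonU at h
  generalize () = u at h
  induction h with
  | gen x => exact ⟨_, Mon.gen x⟩
  | br _ _ h1 h2 => obtain ⟨a, ha⟩ := h1; obtain ⟨b, hb⟩ := h2; exact ⟨_, Mon.br ha hb⟩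

variable (p R X) in
noncomputable def Sp (n : ℕ) : Submodule R (A p R X) := Submodule.span R {T | MonU n T}
variable (p R X) in
noncomputable def NN (n : ℕ) : Submodule R (A p R X) := Submodule.span R {T | ∃ j, n ≤ j ∧ MonU j T}

theorem Sp_E {n : ℕ} {T : A p R X} (h : T ∈ Sp p R X n) : (Phi p R X).E * T - T * (Phi p R X).E = n • T := by
  change ⁅(Phi p R X).E, T⁆ = _
  induction h using Submodule.span_induction with
  | mem T h => exact Mon.E h
  | zero => simp
  | add a b _ _ ha hb => rw [lie_add, ha, hb, nsmul_add]
  | smul c a _ ha => rw [lie_smul, ha, smul_comm]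

theorem NN_F {n : ℕ} : NN p R X n ≤ (Phi p R X).F n := by
  rw [NN, Submodule.span_le]
  rintro T ⟨j, hj, h⟩
  exact (Phi p R X).anti hj h.mem

theorem NN_LL {n : ℕ} {T : A p R X} (h : T ∈ NN p R X n) : T ∈ LL p R X := by
  have : NN p R X n ≤ (LL p R X).toSubmodule := by
    rw [NN, Submodule.span_le]
    rintro T ⟨j, hj, h⟩
    exact h.LL
  exact this h

theorem NN_lie {S T : A p R X} (hS : S ∈ NN p R X 1) (hT : T ∈ NN p R X 1) : ⁅S, T⁆ ∈ NN p R X 1 := by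
  induction hS using Submodule.span_induction with
  | mem S h =>
    obtain ⟨i, hi, h⟩ := h
    induction hT using Submodule.span_induction with
    | mem T h' => obtain ⟨j, hj, h'⟩ := h'; exact Submodule.subset_span ⟨_, by omega, Mon.br h h'⟩
    | zero => rw [lie_zero]; exact zero_mem _
    | add a b _ _ ha hb => rw [lie_add]; exact add_mem ha hb
    | smul c a _ ha => rw [lie_smul]; exact Submodule.smul_mem _ c ha
  | zero => rw [zero_lie]; exact zero_mem _
  | add a b _ _ ha hb => rw [add_lie]; exact add_mem ha hb
  | smul c a _ ha => rw [smul_lie]; exact Submodule.smul_mem _ c ha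

theorem LL_NN {T : A p R X} (h : T ∈ LL p R X) : T ∈ NN p R X 1 := by
  induction h using LieSubalgebra.lieSpan_induction with
  | mem x hx => obtain ⟨x, rfl⟩ := hx; exact Submodule.subset_span ⟨1, le_refl _, Mon.gen x⟩
  | zero => exact zero_mem _
  | add a b _ _ ha hb => exact add_mem ha hb
  | smul c a _ ha => exact Submodule.smul_mem _ c ha
  | lie a b _ _ ha hb => exact NN_lie ha hb

theorem NN_dec {n : ℕ} {T : A p R X} (h : T ∈ NN p R X n) : ∃ S ∈ Sp p R X n, T - S ∈ NN p R X (n + 1) := by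
  induction h using Submodule.span_induction with
  | mem T h =>
    obtain ⟨j, hj, h⟩ := h
    by_cases hjn : j = n
    · subst hjn
      exact ⟨T, Submodule.subset_span h, by rw [sub_self]; exact zero_mem _⟩
    · exact ⟨0, zero_mem _, by rw [sub_zero]; exact Submodule.subset_span ⟨j, by omega, h⟩⟩
  | zero => exact ⟨0, zero_mem _, by rw [sub_zero]; exact zero_mem _⟩
  | add a b _ _ ha hb =>
    obtain ⟨s, hs, h1⟩ := ha; obtain ⟨t, ht, h2⟩ := hb
    exact ⟨s + t, add_mem hs ht, by rw [add_sub_add_comm]; exact add_mem h1 h2⟩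
  | smul c a _ ha =>
    obtain ⟨s, hs, h1⟩ := ha
    exact ⟨c • s, Submodule.smul_mem _ c hs, by rw [← smul_sub]; exact Submodule.smul_mem _ c h1⟩

theorem LL_F_NN {n : ℕ} (hn : 1 ≤ n) {T : A p R X} (h : T ∈ LL p R X) (hF : T ∈ (Phi p R X).F n) : T ∈ NN p R X n := by
  induction n, hn using Nat.le_induction with
  | base => exact LL_NN h
  | succ n hn ih =>
    obtain ⟨S, hS, h2⟩ := NN_dec (ih ((Phi p R X).anti (by omega) hF))
    have : S = 0 := by
      refine (Phi p R X).hom_vanish (Sp_E hS) ?_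
      have := sub_mem hF (NN_F h2)
      rwa [sub_sub_cancel] at this
    rwa [this, sub_zero] at h2

theorem LL_dec {n : ℕ} (hn : 1 ≤ n) {T : A p R X} (h : T ∈ LL p R X) (hF : T ∈ (Phi p R X).F n) :
    ∃ S ∈ Sp p R X n, T - S ∈ LL p R X ∧ T - S ∈ (Phi p R X).F (n + 1) := by
  obtain ⟨S, hS, h2⟩ := NN_dec (LL_F_NN hn h hF)
  exact ⟨S, hS, NN_LL h2, NN_F h2⟩

/-! the group filtration -/
noncomputable def vl (g : Gam p R X) : A p R X := g.1
theorem vl_eg (u : LL p R X) : vl (eg u) = texp p R u.1 := rfl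
theorem vl_one : vl (1 : Gam p R X) = 1 := rfl
theorem vl_mul (g h : Gam p R X) : vl (g * h) = vl g * vl h := rfl
theorem vl_mul_inv (g : Gam p R X) : vl g * vl g⁻¹ = 1 := by rw [← vl_mul, mul_inv_cancel, vl_one]
theorem vl_inj {g h : Gam p R X} (e : vl g = vl h) : g = h := Subtype.ext (Units.ext e)

theorem Gam_sub (g : Gam p R X) : vl g - 1 ∈ (Phi p R X).F 1 := by
  rw [← eg_lg g, vl_eg]
  exact (Phi p R X).texp_sub_one_mem (LL_F1 _ (lg g).2) (LL_F1 _ (lg g).2)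

variable (p R X) in
noncomputable def DG (m : ℕ) : Subgroup (Gam p R X) where
  carrier := {g | vl g - 1 ∈ (Phi p R X).F m}
  one_mem' := by
    rw [Set.mem_ofPred_eq, vl_one, sub_self]; exact zero_mem _
  mul_mem' := by
    intro g h (hg : vl g - 1 ∈ (Phi p R X).F m) (hh : vl h - 1 ∈ (Phi p R X).F m)
    change vl (g * h) - 1 ∈ (Phi p R X).F m
    rw [vl_mul, rg1]
    exact add_mem ((Phi p R X).mul_mem (j := 0) hg ((Phi p R X).mem0 (Gam_sub h))) hh
  inv_mem' := by
    intro g (hg : vl g - 1 ∈ (Phi p R X).F m)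
    change vl g⁻¹ - 1 ∈ (Phi p R X).F m
    rw [rg2 _ _ (vl_mul_inv g)]
    exact (Phi p R X).mul_mem (j := 0) hg (neg_mem ((Phi p R X).mem0 (Gam_sub g⁻¹)))

theorem mem_DG {m : ℕ} {g : Gam p R X} : g ∈ DG p R X m ↔ vl g - 1 ∈ (Phi p R X).F m := Iff.rfl

theorem Gam_comm {i j : ℕ} {g h : Gam p R X} (hg : g ∈ DG p R X i) (hh : h ∈ DG p R X j) :
    vl ⁅g, h⁆ - 1 - ⁅vl g - 1, vl h - 1⁆ ∈ (Phi p R X).F (i + j + 1) :=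
  (Phi p R X).comm_mem hg hh (Gam_sub g⁻¹) (Gam_sub h⁻¹)

theorem DG_comm {i j : ℕ} {g h : Gam p R X} (hg : g ∈ DG p R X i) (hh : h ∈ DG p R X j) : ⁅g, h⁆ ∈ DG p R X (i + j) := by
  have := add_mem ((Phi p R X).anti (by omega) (Gam_comm hg hh)) (lie_FF hg hh)
  rwa [sub_add_cancel] at this

theorem lc_DG (m : ℕ) : lc (Gam p R X) m ≤ DG p R X (m + 1) := by
  induction m with
  | zero => intro g _; exact Gam_sub g
  | succ m ih =>
    refine Subgroup.commutator_le.2 fun g hg h _ => ?_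
    exact DG_comm (ih hg) (Gam_sub h)

variable (p R X) in
theorem lc_Gam : lc (Gam p R X) (p - 1) = ⊥ := by
  rw [eq_bot_iff]
  intro g hg
  have h1 := (Phi p R X).eq_zero (by omega) (lc_DG _ hg)
  rw [Subgroup.mem_bot]
  exact vl_inj ((sub_eq_zero.1 h1).trans vl_one.symm)

theorem eg_DG {n : ℕ} (u : LL p R X) : eg u ∈ DG p R X n ↔ u.1 ∈ (Phi p R X).F n :=
  ⟨fun h => (Phi p R X).mem_of_texp (LL_F1 u.1 u.2) n h, fun h => (Phi p R X).texp_sub_one_mem (LL_F1 u.1 u.2) h⟩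

section rel
variable {K : Type} [Group K] (κ : X → K) (α : K →* Gam p R X) (hα : ∀ x, α (κ x) = eg (gn p R x))

theorem lc_map {G H : Type} [Group G] [Group H] (f : G →* H) {n : ℕ} {g : G} (hg : g ∈ lc G n) : f g ∈ lc H n := by
  have := Subgroup.map_lowerCentralSeries (⊤ : Subgroup G) f n
  have h2 := Subgroup.mem_map_of_mem f hg
  rw [this] at h2
  exact Subgroup.lowerCentralSeries_mono n le_top h2

/-- graded relation between Lie elements and group elements -/
inductive MM : ℕ → A p R X → K → Prop
  | mon {n T g} : Mon (fun a b : K => ⁅a, b⁆) κ n T g → MM n T g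
  | tail {n g} : 1 ≤ n → g ∈ lc K n → MM n 0 g
  | mul {n T S g h} : MM n T g → MM n S h → MM n (T + S) (g * h)
  | inv {n T g} : MM n T g → MM n (-T) g⁻¹

variable {κ}
theorem Mon.lcg {n : ℕ} {T : A p R X} {g : K} (h : Mon (fun a b : K => ⁅a, b⁆) κ n T g) : g ∈ lc K (n - 1) := by
  induction h with
  | gen x => trivial
  | br h1 h2 i1 i2 => exact lc_lie (by have := h1.pos; have := h2.pos; omega) i1 i2

variable {n : ℕ} {T S : A p R X} {g h : K}
theorem MM.pos (h : MM κ n T g) : 1 ≤ n := by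
  induction h with
  | mon h => exact h.pos
  | tail h _ => exact h
  | mul _ _ h _ => exact h
  | inv _ h => exact h

theorem MM.lcg (h : MM κ n T g) : g ∈ lc K (n - 1) := by
  induction h with
  | mon h => exact h.lcg
  | tail h h2 => exact lc_anti (by omega) h2
  | mul _ _ h1 h2 => exact mul_mem h1 h2
  | inv _ h => exact inv_mem h

theorem MM.E (h : MM κ n T g) : (Phi p R X).E * T - T * (Phi p R X).E = n • T := by
  change ⁅(Phi p R X).E, T⁆ = _
  induction h with
  | mon h => exact h.E
  | tail h _ => simp
  | mul _ _ h1 h2 => rw [lie_add, h1, h2, nsmul_add]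
  | inv _ h => rw [lie_neg, h, smul_neg]

theorem MM.mem (h : MM κ n T g) : T ∈ (Phi p R X).F n := by
  induction h with
  | mon h => exact h.mem
  | tail h _ => exact zero_mem _
  | mul _ _ h1 h2 => exact add_mem h1 h2
  | inv _ h => exact neg_mem h

theorem MM.congr (h1 : MM κ n T g) (h2 : (g : K ⧸ lc K n) = h) : MM κ n T h := by
  have := h1.mul (MM.tail h1.pos (lc_mk.1 h2))
  rwa [add_zero, mul_inv_cancel_left] at this

include hα in
theorem Mon.alpha (h : Mon (fun a b : K => ⁅a, b⁆) κ n T g) : vl (α g) - 1 - T ∈ (Phi p R X).F (n + 1) := by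
  have hD : ∀ {n : ℕ} {T : A p R X} {g : K}, Mon (fun a b : K => ⁅a, b⁆) κ n T g → α g ∈ DG p R X n := by
    intro n T g h
    have := lc_DG _ (lc_map α h.lcg)
    rwa [Nat.sub_add_cancel h.pos] at this
  induction h with
  | gen x =>
    rw [hα]
    exact (Phi p R X).texp_sub_one (ell_mem x) (ell_mem x)
  | @br i j T S g h h1 h2 i1 i2 =>
    rw [map_commutatorElement]
    have e1 := Gam_comm (hD h1) (hD h2)
    have e2 := lie_FF i1 h2.mem
    have e3 := lie_FF (hD h1) i2
    have : vl ⁅α g, α h⁆ - 1 - ⁅T, S⁆ =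
        (vl ⁅α g, α h⁆ - 1 - ⁅vl (α g) - 1, vl (α h) - 1⁆)
        + ⁅vl (α g) - 1, vl (α h) - 1 - S⁆ + ⁅vl (α g) - 1 - T, S⁆ := by
      simp only [lie_sub, sub_lie]; abel
    rw [this]
    refine add_mem (add_mem e1 ?_) ?_
    · exact (Phi p R X).anti (by omega) e3
    · exact (Phi p R X).anti (by omega) e2

include hα in
theorem MM.alpha (h : MM κ n T g) : vl (α g) - 1 - T ∈ (Phi p R X).F (n + 1) := by
  have hD : ∀ {n : ℕ} {T : A p R X} {g : K}, MM κ n T g → α g ∈ DG p R X n := by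
    intro n T g h
    have := lc_DG _ (lc_map α h.lcg)
    rwa [Nat.sub_add_cancel h.pos] at this
  induction h with
  | mon h => exact h.alpha α hα
  | tail h h2 => rw [sub_zero]; exact lc_DG _ (lc_map α h2)
  | @mul T S g h h1 h2 i1 i2 =>
    rw [map_mul]
    rw [vl_mul, rg3]
    exact add_mem (add_mem i1 i2) ((Phi p R X).anti (by have := h1.pos; omega) ((Phi p R X).mul_mem (hD h1) (hD h2)))
  | @inv T g h1 i1 =>
    rw [map_inv]
    rw [rg4 _ _ _ (vl_mul_inv (α g))]
    exact sub_mem (neg_mem i1) ((Phi p R X).anti (by have := h1.pos; omega) ((Phi p R X).mul_mem (hD h1) (Gam_sub _)))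

theorem MM.nsmul (h : MM κ n T g) (k : ℕ) : MM κ n (k • T) (g ^ k) := by
  induction k with
  | zero => rw [zero_smul, pow_zero]; exact MM.tail h.pos (one_mem _)
  | succ k ih => rw [add_smul, one_smul, pow_succ]; exact ih.mul h

theorem MM_Sp (κ : X → K) (hn : 1 ≤ n) (hT : T ∈ Sp p R X n) : ∃ g, MM κ n T g := by
  induction hT using Submodule.span_induction with
  | mem T h => obtain ⟨g, hg⟩ := MonU.mon (fun a b : K => ⁅a, b⁆) κ h; exact ⟨g, MM.mon hg⟩
  | zero => exact ⟨1, MM.tail hn (one_mem _)⟩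
  | add a b _ _ ha hb => obtain ⟨g, hg⟩ := ha; obtain ⟨h, hh⟩ := hb; exact ⟨_, hg.mul hh⟩
  | smul c a _ ha =>
    obtain ⟨g, hg⟩ := ha; obtain ⟨k, rfl⟩ := LzR.surj (p := p) c
    exact ⟨g ^ k, by rw [Nat.cast_smul_eq_nsmul]; exact hg.nsmul k⟩

/-- generation -/
theorem gen_lc (κ : X → K) (hα : ∀ x, α (κ x) = eg (gn p R x)) (m : ℕ) : ∀ n, 1 ≤ n → p ≤ n + m → ∀ u : LL p R X, u.1 ∈ (Phi p R X).F n → eg u ∈ (lc K (n - 1)).map α := by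
  induction m with
  | zero =>
    intro n hn hm u hu
    have : u = 0 := Subtype.ext ((Phi p R X).eq_zero hm hu)
    rw [this, eg_zero]
    exact one_mem _
  | succ m ih =>
    intro n hn hm u hu
    obtain ⟨S, hS, h1, h2⟩ := LL_dec hn u.2 hu
    obtain ⟨h, hh⟩ := MM_Sp κ hn hS
    have e1 := hh.alpha α hα
    have e2 : vl (eg u) - 1 - u.1 ∈ (Phi p R X).F (n + 1) := (Phi p R X).texp_sub_one (LL_F1 u.1 u.2) hu
    have e3 : eg u * (α h)⁻¹ ∈ DG p R X (n + 1) := by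
      have e : vl (α h) * vl (α h)⁻¹ = 1 := vl_mul_inv _
      have : vl (eg u * (α h)⁻¹) - 1 = ((vl (eg u) - 1 - u.1) + (u.1 - S) - (vl (α h) - 1 - S)) *
          vl (α h)⁻¹ := by
        have e5 : ((vl (eg u) - 1 - u.1) + (u.1 - S) - (vl (α h) - 1 - S)) = vl (eg u) - vl (α h) := by abel
        rw [e5, sub_mul, e, vl_mul]
      rw [mem_DG, this]
      exact (Phi p R X).mul_mem (j := 0) (sub_mem (add_mem e2 h2) e1) ((Phi p R X).mem0 (Gam_sub _))
    rw [← eg_lg (eg u * (α h)⁻¹), eg_DG] at e3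
    have e4 := ih (n + 1) (by omega) (by omega) _ e3
    rw [eg_lg] at e4
    have e6 := mul_mem (Subgroup.map_mono (lc_anti (by omega)) e4) (Subgroup.mem_map_of_mem α hh.lcg)
    rwa [inv_mul_cancel_right] at e6
end rel

theorem Gam_closure : Subgroup.closure (Set.range fun x => eg (gn p R x)) = (⊤ : Subgroup (Gam p R X)) := by
  rw [eq_top_iff]
  intro g _
  have h := gen_lc (p := p) (R := R) (K := Subgroup.closure (Set.range fun x : X => eg (gn p R x)))
    (Subgroup.subtype _) (fun x => ⟨eg (gn p R x), Subgroup.subset_closure ⟨x, rfl⟩⟩) (fun x => rfl) p 1 le_rfl (by omega) (lg g)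
    (LL_F1 _ (lg g).2)
  rw [eg_lg] at h
  obtain ⟨k, _, rfl⟩ := h
  exact k.2

theorem Gam_hom_ext {H : Type} [Group H] {f g : Gam p R X →* H} (h : ∀ x, f (eg (gn p R x)) = g (eg (gn p R x))) : f = g :=
  MonoidHom.eq_of_eqOn_dense Gam_closure (by rintro _ ⟨x, rfl⟩; exact h x)

/-- `u ∈ F n` implies `exp u ∈ γ_n` -/
theorem eg_lc {n : ℕ} (hn : 1 ≤ n) (u : LL p R X) (hu : u.1 ∈ (Phi p R X).F n) : eg u ∈ lc (Gam p R X) (n - 1) := by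
  have h := gen_lc (p := p) (R := R) (MonoidHom.id _) (fun x : X => eg (gn p R x)) (fun x => rfl) p n hn (by omega) u hu
  simpa using h
end LZ

open scoped commutatorElement
attribute [local instance] LieRing.ofAssociativeRing
set_option linter.unusedSectionVars false
set_option linter.unusedVariables false
set_option linter.style.haveILetI false

namespace LZ
section rel2
variable {p : ℕ} {R : Type} [CommRing R] {X Y : Type} [LzR p R]
variable {K : Type} [Group K] {κ : X → K}

theorem MM.br {i j : ℕ} {T S : A p R X} {g h : K} (h1 : MM κ i T g) (h2 : MM κ j S h) : MM κ (i + j) ⁅T, S⁆ ⁅g, h⁆ := by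
  have pi := h1.pos
  have pj := h2.pos
  have hh := h2.lcg
  induction h1 with
  | @mon T g h1 =>
    have hg := h1.lcg
    induction h2 with
    | @mon S h h2 => exact MM.mon (Mon.br h1 h2)
    | @tail h _ h2 => rw [lie_zero]; exact MM.tail (by omega) (lc_lie (by omega) hg h2)
    | @mul S S' h h' e1 e2 i1 i2 =>
      rw [lie_add]
      exact ((i1 e1.lcg).mul (i2 e2.lcg)).congr (lcm_right pi pj hg e2.lcg).symm
    | @inv S h e1 i1 =>
      rw [lie_neg]
      exact (i1 e1.lcg).inv.congr (lcm_inv_right pi pj hg e1.lcg).symm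
  | @tail g _ h1 => rw [zero_lie]; exact MM.tail (by omega) (lc_lie (by omega) h1 hh)
  | @mul T T' g g' e1 e2 i1 i2 =>
    rw [add_lie]
    exact (i1.mul i2).congr (lcm_left pi pj e2.lcg hh).symm
  | @inv T g e1 i1 =>
    rw [neg_lie]
    exact i1.inv.congr (lcm_inv_left pi pj e1.lcg hh).symm

theorem MM_ex (hgen : Subgroup.closure (Set.range κ) = ⊤) (n : ℕ) : ∀ g ∈ lc K n, ∃ T : A p R X, MM κ (n + 1) T g := by
  have base : ∀ g : K, ∃ T : A p R X, MM κ 1 T g := by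
    intro g
    have : g ∈ Subgroup.closure (Set.range κ) := hgen ▸ Subgroup.mem_top g
    induction this using Subgroup.closure_induction with
    | mem g h => obtain ⟨x, rfl⟩ := h; exact ⟨_, MM.mon (Mon.gen x)⟩
    | one => exact ⟨0, MM.tail le_rfl (one_mem _)⟩
    | mul g h _ _ hg hh => obtain ⟨T, hT⟩ := hg; obtain ⟨S, hS⟩ := hh; exact ⟨_, hT.mul hS⟩
    | inv g _ hg => obtain ⟨T, hT⟩ := hg; exact ⟨_, hT.inv⟩
  induction n with
  | zero => intro g _; exact base g
  | succ n ih =>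
    intro g hg
    change g ∈ Subgroup.closure _ at hg
    induction hg using Subgroup.closure_induction with
    | mem g h =>
      obtain ⟨a, ha, b, hb, rfl⟩ := h
      obtain ⟨T, hT⟩ := ih a ha
      obtain ⟨S, hS⟩ := base b
      exact ⟨_, hT.br hS⟩
    | one => exact ⟨0, MM.tail (by omega) (one_mem _)⟩
    | mul g h _ _ hg hh => obtain ⟨T, hT⟩ := hg; obtain ⟨S, hS⟩ := hh; exact ⟨_, hT.mul hS⟩
    | inv g _ hg => obtain ⟨T, hT⟩ := hg; exact ⟨_, hT.inv⟩

/-- right normed commutators -/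
def cw (κ : X → K) : List X → K
  | [] => 1
  | [x] => κ x
  | x :: y :: l => ⁅κ x, cw κ (y :: l)⁆

theorem cw_mem (x : X) (l : List X) : cw κ (x :: l) ∈ lc K l.length := by
  induction l generalizing x with
  | nil => trivial
  | cons y l ih => exact lc_lie (i := 0) (j := l.length) (by simp) trivial (ih y)

variable (κ) in
/-- words versus commutators -/
inductive RR : ℕ → V p R X → K → Prop
  | wd (x : X) (l : List X) : RR (l.length + 1) (sg p R (x :: l)) (cw κ (x :: l))
  | tail {n g} : 1 ≤ n → g ∈ lc K n → RR n 0 g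
  | mul {n v w g h} : RR n v g → RR n w h → RR n (v + w) (g * h)
  | inv {n v g} : RR n v g → RR n (-v) g⁻¹

variable {n : ℕ} {v w : V p R X} {g h : K}
theorem RR.pos (h : RR κ n v g) : 1 ≤ n := by
  induction h with
  | wd => omega
  | tail h _ => exact h
  | mul _ _ h _ => exact h
  | inv _ h => exact h

theorem RR.lcg (h : RR κ n v g) : g ∈ lc K (n - 1) := by
  induction h with
  | wd x l => exact cw_mem x l
  | tail h h2 => exact lc_anti (by omega) h2
  | mul _ _ h1 h2 => exact mul_mem h1 h2
  | inv _ h => exact inv_mem h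

theorem RR.congr (h1 : RR κ n v g) (h2 : (g : K ⧸ lc K n) = h) : RR κ n v h := by
  have := h1.mul (RR.tail h1.pos (lc_mk.1 h2))
  rwa [add_zero, mul_inv_cancel_left] at this

theorem RR.ell (x : X) (h : RR κ n v g) : RR κ (1 + n) (ell p R x v) ⁅κ x, g⁆ := by
  induction h with
  | wd y l => rw [ell_sg, add_comm]; exact RR.wd x (y :: l)
  | @tail n g h1 h => rw [map_zero]; exact RR.tail (by omega) (lc_lie (i := 0) (by omega) trivial h)
  | mul h1 h2 i1 i2 =>
    rw [map_add]
    exact (i1.mul i2).congr (lcm_right (i := 1) le_rfl h1.pos trivial h2.lcg).symm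
  | inv h1 i1 =>
    rw [map_neg]
    exact i1.inv.congr (lcm_inv_right (i := 1) le_rfl h1.pos trivial h1.lcg).symm

theorem RR.mon {m : ℕ} {T : A p R X} {a : K} (hT : Mon (fun a b : K => ⁅a, b⁆) κ m T a) :
    ∀ {n : ℕ} {v : V p R X} {g : K}, RR κ n v g → RR κ (m + n) (T v) ⁅a, g⁆ := by
  induction hT with
  | gen x => intro n v g h; exact h.ell x
  | @br i j T S a b h1 h2 i1 i2 =>
    intro n v g h
    rw [act_lie, sub_eq_neg_add]
    have e1 := i1 (i2 h)
    have e2 := i2 (i1 h)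
    rw [← add_assoc] at e1 e2
    rw [add_comm j i] at e2
    exact (e2.inv.mul e1).congr (lcm_hw h1.pos h2.pos h.pos h1.lcg h2.lcg h.lcg).symm

theorem RR.dyn {m : ℕ} {T : A p R X} {a : K} (hT : Mon (fun a b : K => ⁅a, b⁆) κ m T a) :
    RR κ m (T (sg p R [])) (a ^ m) := by
  induction hT with
  | gen x => rw [ell_sg, pow_one]; exact RR.wd x []
  | @br i j T S a b h1 h2 i1 i2 =>
    rw [act_lie, sub_eq_add_neg]
    have e1 := RR.mon h1 i2
    have e2 := RR.mon h2 i1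
    have e1' := e1.congr (lcm_pow_right h1.pos h2.pos h1.lcg h2.lcg j)
    have e2' := e2.congr (lcm_pow_right h2.pos h1.pos h2.lcg h1.lcg i)
    rw [add_comm j i] at e2'
    have e3 := e1'.mul e2'.inv
    rw [← inv_pow, commutatorElement_inv, ← pow_add, add_comm j i] at e3
    exact e3

theorem MM.dyn {T : A p R X} (h : MM κ n T g) : RR κ n (T (sg p R [])) (g ^ n) := by
  induction h with
  | mon h => exact RR.dyn h
  | tail hn h => rw [act_zero]; exact RR.tail hn (pow_mem h _)
  | @mul T S g h h1 h2 i1 i2 =>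
    rw [act_add]
    refine (i1.mul i2).congr ?_
    rw [QuotientGroup.mk_mul, QuotientGroup.mk_pow, QuotientGroup.mk_pow, QuotientGroup.mk_pow, QuotientGroup.mk_mul]
    exact ((lc_central h1.lcg _).mul_pow n).symm
  | @inv T g h1 i1 =>
    rw [map_neg, inv_pow]
    exact i1.inv
end rel2

section ugrp
variable {p N : ℕ} {X : Type} [LzR p (ZMod N)] {K : Type} [Group K] {κ : X → K}

theorem RR.zero_aux {k : ℕ} (hk : k < p) {M : Type} [AddCommGroup M] [Module (ZMod N) M] (ι : M → K ⧸ lc K k)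
    (ha : ∀ a b, ι (a + b) = ι a * ι b) (h0 : ι 0 = 1) (hneg : ∀ a, ι (-a) = (ι a)⁻¹)
    (hs : ∀ c ∈ Subgroup.center (K ⧸ lc K k), ∃ m, ι m = c) {g : K} (h : RR (p := p) (R := ZMod N) κ k 0 g) : g ∈ lc K k := by
  have hc : ∀ l : List X, l.length = k → 1 ≤ k → ((cw κ l : K) : K ⧸ lc K k) ∈ Subgroup.center (K ⧸ lc K k) := by
    intro l hl hk
    rw [Subgroup.mem_center_iff]
    intro y
    refine (lc_central ?_ y).symm.eq
    cases l with
    | nil => simp at hl; omega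
    | cons x l => have := cw_mem (κ := κ) x l; rwa [← hl, List.length_cons, Nat.add_sub_cancel]
  have hφ : ∀ l : List X, ∃ m : M, l.length = k → 1 ≤ k → ι m = ((cw κ l : K) : K ⧸ lc K k) := by
    intro l
    by_cases hl : l.length = k ∧ 1 ≤ k
    · obtain ⟨m, hm⟩ := hs _ (hc l hl.1 hl.2)
      exact ⟨m, fun _ _ => hm⟩
    · exact ⟨0, fun h1 h2 => absurd ⟨h1, h2⟩ hl⟩
  choose φ hφ using hφ
  have key : ∀ (n : ℕ) (v : V p (ZMod N) X) (g : K), RR κ n v g → n = k → ι (lft p (ZMod N) φ v) = (g : K ⧸ lc K k) := by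
    intro n v g h hn
    induction h with
    | wd x l =>
      have : lft p (ZMod N) φ (sg p (ZMod N) (x :: l)) = φ (x :: l) := lft_sg (by simp; omega)
      rw [this]
      exact hφ _ (by simpa using hn) (by omega)
    | @tail n g _ hg =>
      subst hn
      rw [map_zero, lc_one_mk hg, h0]
    | mul _ _ i1 i2 => rw [map_add, QuotientGroup.mk_mul, ← i1 hn, ← i2 hn, ha]
    | inv _ i1 => rw [map_neg, QuotientGroup.mk_inv, ← i1 hn, hneg]
  have := key k 0 g h rfl
  rw [map_zero, h0] at this
  exact (QuotientGroup.eq_one_iff _).1 this.symm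

theorem RR.zero (hN : ∀ g : K, g ^ N = 1) {k : ℕ} (hk : k < p) {g : K} (h : RR (p := p) (R := ZMod N) κ k 0 g) : g ∈ lc K k := by
  letI : CommGroup (Subgroup.center (K ⧸ lc K k)) := { (inferInstance : Group (Subgroup.center (K ⧸ lc K k))) with mul_comm := fun a b => (Subtype.ext (Subgroup.mem_center_iff.1 b.2 a)) }
  letI : AddCommGroup (Additive (Subgroup.center (K ⧸ lc K k))) := Additive.addCommGroup
  letI : Module (ZMod N) (Additive (Subgroup.center (K ⧸ lc K k))) := AddCommGroup.zmodModule (by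
    intro x
    refine Additive.toMul.injective (Subtype.ext ?_)
    change (x.toMul : K ⧸ lc K k) ^ N = 1
    obtain ⟨y, hy⟩ := QuotientGroup.mk_surjective (x.toMul : K ⧸ lc K k)
    rw [← hy, ← QuotientGroup.mk_pow, hN]; rfl)
  exact RR.zero_aux (M := Additive (Subgroup.center (K ⧸ lc K k))) hk (fun m => (m.toMul : K ⧸ lc K k)) (fun _ _ => rfl) rfl
    (fun _ => rfl) (fun c hc => ⟨Additive.ofMul ⟨c, hc⟩, rfl⟩) h

theorem inj_step (hN : ∀ g : K, g ^ N = 1) (hgen : Subgroup.closure (Set.range κ) = ⊤) (α : K →* Gam p (ZMod N) X)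
    (hα : ∀ x, α (κ x) = eg (gn p (ZMod N) x)) {n : ℕ} (hn : n + 1 < p) {h : K} (hh : h ∈ lc K n) (h1 : α h = 1) :
    h ∈ lc K (n + 1) := by
  obtain ⟨T, hT⟩ := MM_ex (p := p) (R := ZMod N) hgen n h hh
  have e1 := hT.alpha α hα
  rw [h1, vl_one, sub_self, zero_sub, neg_mem_iff] at e1
  have e2 : T = 0 := (Phi p (ZMod N) X).hom_vanish hT.E e1
  have e3 := hT.dyn
  rw [e2, act_zero] at e3
  have e4 := e3.zero hN hn
  have hu : IsUnit ((n + 1 : ℕ) : ZMod N) := LzR.unit (p := p) (n + 1) (by omega) hn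
  rw [ZMod.isUnit_iff_coprime] at hu
  have e5 := lc_one_mk e4
  have e6 : (h : K ⧸ lc K (n + 1)) ^ N = 1 := by rw [← QuotientGroup.mk_pow, hN]; rfl
  have e7 := pow_gcd_eq_one.2 ⟨e5, e6⟩
  rw [hu.gcd_eq_one, pow_one] at e7
  exact (QuotientGroup.eq_one_iff _).1 e7

theorem Gam_pow (g : Gam p (ZMod N) X) : g ^ N = 1 := by
  rw [← eg_lg g, ← eg_nsmul, ← Nat.cast_smul_eq_nsmul (ZMod N), ZMod.natCast_self, zero_smul, eg_zero]

theorem ugrp {G : Type} [Group G] (hG : lc G (p - 1) = ⊥) (hN : ∀ g : G, g ^ N = 1) (f : X → G) :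
    ∃ F : Gam p (ZMod N) X →* G, ∀ x, F (eg (gn p (ZMod N) x)) = f x := by
  let S : Subgroup (Gam p (ZMod N) X × G) := Subgroup.closure (Set.range fun x => (eg (gn p (ZMod N) x), f x))
  let κ : X → S := fun x => ⟨(eg (gn p (ZMod N) x), f x), Subgroup.subset_closure ⟨x, rfl⟩⟩
  have hgen : Subgroup.closure (Set.range κ) = ⊤ := by
    have := Subgroup.closure_closure_coe_preimage (k := Set.range fun x => (eg (gn p (ZMod N) x), f x))
    rw [← this]
    congr 1
    ext ⟨y, hy⟩
    constructor
    · rintro ⟨x, hx⟩; exact ⟨x, congrArg Subtype.val hx⟩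
    · rintro ⟨x, hx⟩; exact ⟨x, Subtype.ext hx⟩
  have hS : ∀ g : S, g ^ N = 1 := by
    intro g
    refine Subtype.ext (Prod.ext ?_ ?_)
    · exact Gam_pow _
    · exact hN _
  let α : S →* Gam p (ZMod N) X := (MonoidHom.fst _ _).comp S.subtype
  let β : S →* G := (MonoidHom.snd _ _).comp S.subtype
  have hlc : lc S (p - 1) = ⊥ := by
    rw [eq_bot_iff]
    intro g hg
    have e1 := lc_map α hg
    have e2 := lc_map β hg
    rw [lc_Gam, Subgroup.mem_bot] at e1
    rw [hG, Subgroup.mem_bot] at e2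
    exact Subtype.ext (Prod.ext e1 e2)
  have hinj : Function.Injective α := by
    rw [injective_iff_map_eq_one]
    intro h hh
    have : ∀ n, n < p → h ∈ lc S n := by
      intro n
      induction n with
      | zero => intro _; trivial
      | succ n ih => intro hn; exact inj_step hS hgen α (fun x => rfl) hn (ih (by omega)) hh
    have h2 := this (p - 1) (by have := LzR.two_le (p := p) (R := ZMod N); omega)
    rwa [hlc, Subgroup.mem_bot] at h2
  have hsur : Function.Surjective α := by
    rw [← MonoidHom.range_eq_top, eq_top_iff, ← Gam_closure, Subgroup.closure_le]
    rintro _ ⟨x, rfl⟩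
    exact ⟨κ x, rfl⟩
  let E := MulEquiv.ofBijective α ⟨hinj, hsur⟩
  refine ⟨β.comp E.symm.toMonoidHom, fun x => ?_⟩
  have : E.symm (eg (gn p (ZMod N) x)) = κ x := by rw [MulEquiv.symm_apply_eq]; rfl
  change β (E.symm _) = _
  rw [this]; rfl
end ugrp
end LZ

open scoped commutatorElement
attribute [local instance] LieRing.ofAssociativeRing
set_option linter.unusedSectionVars false
set_option linter.unusedVariables false
set_option linter.style.haveILetI false

namespace LZ
abbrev lb {L : Type} [LieRing L] (x y : L) : L := ⁅x, y⁆

/-- transport of a Lie ring structure along a surjection -/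
@[reducible] noncomputable def trLie {L G : Type} [LieRing L] (φ : L → G) (hφ : Function.Surjective φ)
    (ad br : G → G → G) (ng : G → G) (ha : ∀ a b, φ (a + b) = ad (φ a) (φ b))
    (hb : ∀ a b, φ ⁅a, b⁆ = br (φ a) (φ b)) (hn : ∀ a, φ (-a) = ng (φ a)) : LieRing G :=
  letI : Add G := ⟨ad⟩
  letI : Zero G := ⟨φ 0⟩
  letI : Neg G := ⟨ng⟩
  letI i1 : AddGroup G := AddGroup.ofLeftAxioms
    (fun x y z => by
      obtain ⟨a, rfl⟩ := hφ x; obtain ⟨b, rfl⟩ := hφ y; obtain ⟨c, rfl⟩ := hφ z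
      change ad (ad (φ a) (φ b)) (φ c) = ad (φ a) (ad (φ b) (φ c))
      rw [← ha, ← ha, ← ha, ← ha, add_assoc])
    (fun x => by
      obtain ⟨a, rfl⟩ := hφ x
      change ad (φ 0) (φ a) = φ a
      rw [← ha, zero_add])
    (fun x => by
      obtain ⟨a, rfl⟩ := hφ x
      change ad (ng (φ a)) (φ a) = φ 0
      rw [← hn, ← ha, neg_add_cancel])
  letI i2 : AddCommGroup G := { i1 with
    add_comm := fun x y => by
      obtain ⟨a, rfl⟩ := hφ x; obtain ⟨b, rfl⟩ := hφ y
      change ad (φ a) (φ b) = ad (φ b) (φ a)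
      rw [← ha, ← ha, add_comm] }
  { i2 with
    bracket := br
    add_lie := fun x y z => by
      obtain ⟨a, rfl⟩ := hφ x; obtain ⟨b, rfl⟩ := hφ y; obtain ⟨c, rfl⟩ := hφ z
      change br (ad (φ a) (φ b)) (φ c) = ad (br (φ a) (φ c)) (br (φ b) (φ c))
      rw [← ha, ← hb, ← hb, ← hb, ← ha, add_lie]
    lie_add := fun x y z => by
      obtain ⟨a, rfl⟩ := hφ x; obtain ⟨b, rfl⟩ := hφ y; obtain ⟨c, rfl⟩ := hφ z
      change br (φ a) (ad (φ b) (φ c)) = ad (br (φ a) (φ b)) (br (φ a) (φ c))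
      rw [← ha, ← hb, ← hb, ← hb, ← ha, lie_add]
    lie_self := fun x => by
      obtain ⟨a, rfl⟩ := hφ x
      change br (φ a) (φ a) = φ 0
      rw [← hb, lie_self]
    leibniz_lie := fun x y z => by
      obtain ⟨a, rfl⟩ := hφ x; obtain ⟨b, rfl⟩ := hφ y; obtain ⟨c, rfl⟩ := hφ z
      change br (φ a) (br (φ b) (φ c)) = ad (br (br (φ a) (φ b)) (φ c)) (br (φ b) (br (φ a) (φ c)))
      rw [← hb, ← hb, ← hb, ← hb, ← hb, ← hb, ← ha, leibniz_lie] }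

theorem trLie_add {L G : Type} [LieRing L] (φ : L → G) (hφ : Function.Surjective φ)
    (ad br : G → G → G) (ng : G → G) (ha : ∀ a b, φ (a + b) = ad (φ a) (φ b))
    (hb : ∀ a b, φ ⁅a, b⁆ = br (φ a) (φ b)) (hn : ∀ a, φ (-a) = ng (φ a)) (a b : L) :
    letI := trLie φ hφ ad br ng ha hb hn
    φ (a + b) = φ a + φ b ∧ φ ⁅a, b⁆ = ⁅φ a, φ b⁆ := ⟨ha a b, hb a b⟩

theorem lieLCS_map {L M : Type} [LieRing L] [LieRing M] (φ : L →+ M) (hb : ∀ a b, φ ⁅a, b⁆ = ⁅φ a, φ b⁆)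
    (hφ : Function.Surjective φ) (n : ℕ) : lieLCS M n ≤ (lieLCS L n).map φ := by
  induction n with
  | zero => intro x _; obtain ⟨a, rfl⟩ := hφ x; exact ⟨a, trivial, rfl⟩
  | succ n ih =>
    change AddSubgroup.closure _ ≤ _
    rw [AddSubgroup.closure_le]
    rintro _ ⟨y, hy, z, rfl⟩
    obtain ⟨a, ha, rfl⟩ := ih hy
    obtain ⟨b, rfl⟩ := hφ z
    exact ⟨⁅a, b⁆, lieLCS_mem_lie ha b, hb a b⟩

/-- canonical `ℤ/N`-algebra structure -/
@[reducible] def zlie {N : ℕ} {L : Type} [LieRing L] (h : ∀ x : L, N • x = 0) : LieAlgebra (ZMod N) L :=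
  letI := AddCommGroup.zmodModule h
  { lie_smul := fun t x m => by
      exact ZMod.map_smul (AddMonoidHom.mk' (fun y : L => ⁅x, y⁆) (lie_add x)) t m }

section
variable {p : ℕ} {R : Type} [CommRing R] {X Y : Type} [LzR p R]
noncomputable def gmap (θ : LL p R X →ₗ⁅R⁆ LL p R Y) : Gam p R X →* Gam p R Y where
  toFun g := eg (θ (lg g))
  map_one' := by rw [lg_one, map_zero, eg_zero]
  map_mul' g h := by rw [lg_mul, map_bch, eg_bch]

theorem gmap_eg (θ : LL p R X →ₗ⁅R⁆ LL p R Y) (u : LL p R X) : gmap θ (eg u) = eg (θ u) := by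
  change eg (θ (lg (eg u))) = _
  rw [lg_eg]
end

section
variable {p N : ℕ} [LzR p (ZMod N)] {G : Type} [Group G]

theorem Fnat {X : Type} (hG : lc G (p - 1) = ⊥) (hN : ∀ g : G, g ^ N = 1) (F : Gam p (ZMod N) X →* G) (a b : LL p (ZMod N) X)
    (u : LL p (ZMod N) Bool) : F (eg (ev (LL_lcs p (ZMod N) X) (pr a b) u)) = (ugrp hG hN (pr (F (eg a)) (F (eg b)))).choose (eg u) := by
  rw [← gmap_eg, ← MonoidHom.comp_apply]
  congr 1
  refine Gam_hom_ext fun x => ?_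
  rw [(ugrp hG hN (pr (F (eg a)) (F (eg b)))).choose_spec, MonoidHom.comp_apply, gmap_eg, ev_gn]
  cases x <;> rfl

theorem esurj (hG : lc G (p - 1) = ⊥) (hN : ∀ g : G, g ^ N = 1) :
    ∃ (s : LieRing G) (h : ∀ x : G, N • x = 0) (hL : lieLCS G (p - 1) = ⊥),
      letI := zlie h
      ∀ x y : G, lmul (ZMod N) hL x y = x * y := by
  obtain ⟨F, hF⟩ := ugrp (X := G) hG hN id
  let φ : LL p (ZMod N) G → G := fun u => F (eg u)
  have hφ : Function.Surjective φ := fun x => ⟨gn p (ZMod N) x, hF x⟩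
  let ad : G → G → G := fun x y => (ugrp hG hN (pr x y)).choose (eg (gn p (ZMod N) false + gn p (ZMod N) true))
  let br : G → G → G := fun x y => (ugrp hG hN (pr x y)).choose (eg ⁅gn p (ZMod N) false, gn p (ZMod N) true⁆)
  have ha : ∀ a b, φ (a + b) = ad (φ a) (φ b) := by
    intro a b
    have := Fnat hG hN F a b (gn p (ZMod N) false + gn p (ZMod N) true)
    rw [map_add, ev_gn, ev_gn] at this
    exact this
  have hb : ∀ a b, φ ⁅a, b⁆ = br (φ a) (φ b) := by
    intro a b
    have := Fnat hG hN F a b ⁅gn p (ZMod N) false, gn p (ZMod N) true⁆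
    rw [LieHom.map_lie, ev_gn, ev_gn] at this
    exact this
  have hn : ∀ a, φ (-a) = (φ a)⁻¹ := by
    intro a
    change F (eg (-a)) = (F (eg a))⁻¹
    rw [eg_neg, map_inv]
  let s : LieRing G := trLie φ hφ ad br (fun x => x⁻¹) ha hb hn
  have ha' : ∀ a b, φ (a + b) = φ a + φ b := ha
  have hb' : ∀ a b, φ ⁅a, b⁆ = lb (φ a) (φ b) := hb
  clear_value s
  let φ' : LL p (ZMod N) G →+ G := AddMonoidHom.mk' φ ha'
  have h : ∀ x : G, N • x = 0 := by
    intro x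
    obtain ⟨a, rfl⟩ := hφ x
    change N • φ' a = 0
    rw [← map_nsmul, ← Nat.cast_smul_eq_nsmul (ZMod N), ZMod.natCast_self, zero_smul, map_zero]
  have hL : lieLCS G (p - 1) = ⊥ := by
    have := lieLCS_map φ' hb' hφ (p - 1)
    rwa [LL_lcs, AddSubgroup.map_bot, le_bot_iff] at this
  refine ⟨s, h, hL, ?_⟩
  letI := zlie h
  intro x y
  let ψ : LL p (ZMod N) G →ₗ⁅ZMod N⁆ G := { φ' with
    map_smul' := fun c a => ZMod.map_smul φ' c a
    map_lie' := fun {a b} => hb' a b }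
  obtain ⟨a, rfl⟩ := hφ x
  obtain ⟨b, rfl⟩ := hφ y
  have := map_lmul hL ψ a b
  change φ (bch a b) = lmul (ZMod N) hL (φ a) (φ b) at this
  rw [← this]
  change F (eg (bch a b)) = _
  rw [eg_bch, map_mul]
end

/-- full faithfulness -/
theorem ffaith {p : ℕ} {R : Type} [CommRing R] [LzR p R] {L L' : Type} [LieRing L] [LieAlgebra R L] [LieRing L'] [LieAlgebra R L']
    (hL : lieLCS L (p - 1) = ⊥) (hL' : lieLCS L' (p - 1) = ⊥) (f : L → L')
    (hf : ∀ x y, f (lmul R hL x y) = lmul R hL' (f x) (f y)) (x y : L) :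
    f (x + y) = f x + f y ∧ f ⁅x, y⁆ = ⁅f x, f y⁆ := by
  letI := lazGroup R hL
  letI := lazGroup R hL'
  let f' : L →* L' := MonoidHom.mk' f hf
  have key : f'.comp (gh (R := R) hL (ev hL (pr x y))) = gh (R := R) hL' (ev hL' (pr (f x) (f y))) := by
    refine Gam_hom_ext fun b => ?_
    rw [MonoidHom.comp_apply]
    change f (ev hL (pr x y) (lg (eg (_ : LL p R Bool)))) = ev hL' (pr (f x) (f y)) (lg (eg _))
    rw [lg_eg, ev_gn, ev_gn]
    cases b <;> rfl
  have k2 : ∀ u : LL p R Bool, f (ev hL (pr x y) u) = ev hL' (pr (f x) (f y)) u := by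
    intro u
    have := DFunLike.congr_fun key (eg u)
    rw [MonoidHom.comp_apply] at this
    change f (ev hL (pr x y) (lg (eg (_ : LL p R Bool)))) = ev hL' (pr (f x) (f y)) (lg (eg _)) at this
    rwa [lg_eg] at this
  constructor
  · have := k2 (gn p R false + gn p R true)
    rw [map_add, map_add, ev_gn, ev_gn, ev_gn, ev_gn] at this
    exact this
  · have := k2 ⁅gn p R false, gn p R true⁆
    rw [LieHom.map_lie, LieHom.map_lie, ev_gn, ev_gn, ev_gn, ev_gn] at this
    exact this
end LZ

open scoped commutatorElement
attribute [local instance] LieRing.ofAssociativeRing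
set_option linter.unusedSectionVars false
set_option linter.unusedVariables false
set_option linter.style.haveILetI false

namespace LZ
section
variable {p : ℕ} {R : Type} [CommRing R] {X : Type} [LzR p R]

theorem bch_F2 (a b : LL p R X) : (bch a b - (a + b)).1 ∈ (Phi p R X).F 2 := by
  have h1 := (Phi p R X).texp_sub_one (LL_F1 a.1 a.2) (LL_F1 a.1 a.2)
  have h2 := (Phi p R X).texp_sub_one (LL_F1 b.1 b.2) (LL_F1 b.1 b.2)
  have h3 := (Phi p R X).texp_sub_one (LL_F1 (bch a b).1 (bch a b).2) (LL_F1 (bch a b).1 (bch a b).2)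
  have h4 := (Phi p R X).texp_sub_one_mem (LL_F1 a.1 a.2) (LL_F1 a.1 a.2)
  have h5 := (Phi p R X).texp_sub_one_mem (LL_F1 b.1 b.2) (LL_F1 b.1 b.2)
  have h6 := add_mem (add_mem h1 h2) ((Phi p R X).mul_mem h4 h5)
  rw [← rg3, ← texp_bch] at h6
  have h7 := sub_mem h6 h3
  rw [sub_sub_sub_cancel_left] at h7
  exact h7

variable {L : Type} [LieRing L] [LieAlgebra R L]

theorem Mon.zero_of_comm {x y : L} (h : ⁅x, y⁆ = 0) {n : ℕ} {T : A p R Bool} {l : L}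
    (hm : Mon (fun x y => ⁅x, y⁆) (pr x y) n T l) : (l = 0 ∨ l = x ∨ l = y) ∧ (2 ≤ n → l = 0) := by
  induction hm with
  | gen b => cases b <;> simp [pr]
  | @br i j T S l m h1 h2 i1 i2 =>
    have h' : ⁅y, x⁆ = 0 := by rw [← lie_skew, h, neg_zero]
    have : ⁅l, m⁆ = 0 := by
      rcases i1.1 with rfl | rfl | rfl <;> rcases i2.1 with rfl | rfl | rfl <;> simp [h, h']
    exact ⟨Or.inl this, fun _ => this⟩

theorem lmul_comm (hL : lieLCS L (p - 1) = ⊥) {x y : L} (h : ⁅x, y⁆ = 0) : lmul R hL x y = x + y := by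
  have h1 := bch_F2 (gn p R false) (gn p R true)
  have h2 := LL_F_NN (by omega) (bch (gn p R false) (gn p R true) - (gn p R false + gn p R true)).2 h1
  have key : ∀ T ∈ NN p R Bool 2, dlt' p R (pr x y) (T (sg p R [])) = 0 := by
    intro T hT
    induction hT using Submodule.span_induction with
    | mem T hT =>
      obtain ⟨j, hj, hT⟩ := hT
      obtain ⟨l, hl⟩ := hT.mon (fun x y => ⁅x, y⁆) (pr x y)
      rw [Mon.dlt' hL hl]
      exact (Mon.zero_of_comm h hl).2 hj
    | zero => rw [act_zero, map_zero]
    | add a b _ _ ha hb => rw [act_add, map_add, ha, hb, add_zero]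
    | smul c a _ ha => rw [act_smul, map_smul, ha, smul_zero]
  have h3 : ev hL (pr x y) (bch (gn p R false) (gn p R true) - (gn p R false + gn p R true)) = 0 := key _ h2
  rw [map_sub, map_add, ev_gn, ev_gn, sub_eq_zero] at h3
  exact h3

theorem exQ (I : LieIdeal R L) : ∃ (Q : Type) (_ : LieRing Q) (_ : LieAlgebra R Q) (π : L →ₗ⁅R⁆ Q),
    Function.Surjective π ∧ ∀ x, π x = 0 ↔ x ∈ I := by
  refine ⟨L ⧸ I, inferInstance, inferInstance, 
    { (LieSubmodule.Quotient.mk' I : L →ₗ[R] L ⧸ I) with map_lie' := fun {x y} => LieSubmodule.Quotient.mk_bracket I x y }, ?_, ?_⟩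
  · exact LieSubmodule.Quotient.surjective_mk' I
  · intro x
    exact LieSubmodule.Quotient.mk_eq_zero (N := I)

variable (p R X) in
def PI : LieIdeal R (LL p R X) where
  carrier := {u | ∃ y : LL p R X, y.1 ∈ (Phi p R X).F 2 ∧ u = p • y}
  add_mem' := by
    rintro _ _ ⟨y, hy, rfl⟩ ⟨z, hz, rfl⟩
    exact ⟨y + z, add_mem hy hz, (smul_add _ _ _).symm⟩
  zero_mem' := ⟨0, zero_mem _, (smul_zero _).symm⟩
  smul_mem' := by
    rintro c _ ⟨y, hy, rfl⟩
    exact ⟨c • y, Submodule.smul_mem _ c hy, smul_comm _ _ _⟩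
  lie_mem := by
    rintro x _ ⟨y, hy, rfl⟩
    refine ⟨⁅x, y⁆, (Phi p R X).anti (by omega) (lie_FF (LL_F1 x.1 x.2) hy), ?_⟩
    rw [lie_nsmul]

theorem reg_free (a b : LL p R X) : ∃ y : LL p R X, y.1 ∈ (Phi p R X).F 2 ∧
    eg a ^ p * eg b ^ p = (eg a * eg b) ^ p * eg y ^ p := by
  obtain ⟨Q, i1, i2, π, hπ, hk⟩ := exQ (PI p R X)
  have hQ : lieLCS Q (p - 1) = ⊥ := by
    have := lieLCS_map (AddMonoidHom.mk' π (map_add π)) (fun a b => LieHom.map_lie π a b) hπ (p - 1)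
    rwa [LL_lcs, AddSubgroup.map_bot, le_bot_iff] at this
  have e1 : π (p • bch a b) = p • π a + p • π b := by
    have : π (p • (bch a b - (a + b))) = 0 := (hk _).2 ⟨_, bch_F2 a b, rfl⟩
    rw [smul_sub, map_sub, sub_eq_zero] at this
    rw [this, map_nsmul, map_add, smul_add]
  have e2 : π (bch (p • a) (p • b)) = p • π a + p • π b := by
    rw [map_lmul hQ, lmul_comm, map_nsmul, map_nsmul]
    rw [← LieHom.map_lie, hk]
    refine ⟨p • ⁅a, b⁆, ?_, by rw [nsmul_lie, lie_nsmul]⟩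
    exact nsmul_mem (lie_FF (LL_F1 a.1 a.2) (LL_F1 b.1 b.2)) p
  have e3 : π (bch (-(p • bch a b)) (bch (p • a) (p • b))) = 0 := by
    rw [map_lmul hQ, map_neg, e1, e2, lmul_comm, neg_add_cancel]
    rw [neg_lie, lie_self, neg_zero]
  obtain ⟨y, hy, hy2⟩ := (hk _).1 e3
  refine ⟨y, hy, ?_⟩
  rw [← eg_nsmul y, ← hy2, eg_bch, eg_neg, eg_nsmul, eg_bch, eg_bch, eg_nsmul, eg_nsmul]
  group

theorem laz_regular (hL : lieLCS L (p - 1) = ⊥) : letI := lazGroup R hL; IsRegularPGroup p L := by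
  letI := lazGroup R hL
  intro x y
  obtain ⟨u, hu, h⟩ := reg_free (gn p R false) (gn p R true)
  let F := gh (R := R) hL (ev hL (pr x y))
  have hx : F (eg (gn p R false)) = x := by
    change ev hL (pr x y) (lg (eg (gn p R false))) = x
    rw [lg_eg, ev_gn]; rfl
  have hy : F (eg (gn p R true)) = y := by
    change ev hL (pr x y) (lg (eg (gn p R true))) = y
    rw [lg_eg, ev_gn]; rfl
  have h2 := congrArg F h
  simp only [map_mul, map_pow, hx, hy] at h2
  refine ⟨_, ?_, h2⟩
  refine Subgroup.subset_closure ⟨F (eg u), ?_, rfl⟩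
  have h3 := eg_lc (by omega) u hu
  have h4 : eg u ∈ ⁅(⊤ : Subgroup (Gam p R Bool)), (⊤ : Subgroup (Gam p R Bool))⁆ := by
    have : lc (Gam p R Bool) 1 = ⁅(⊤ : Subgroup (Gam p R Bool)), (⊤ : Subgroup (Gam p R Bool))⁆ := by
      simp [lc, Subgroup.lowerCentralSeries_succ]
    rwa [← this]
  have h5 := Subgroup.mem_map_of_mem F h4
  rw [Subgroup.map_commutator] at h5
  have h6 : (⊤ : Subgroup (Gam p R Bool)).map F ≤ Subgroup.closure {x, y} := by
    rw [← Gam_closure, MonoidHom.map_closure, Subgroup.closure_le]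
    rintro _ ⟨_, ⟨b, rfl⟩, rfl⟩
    cases b
    · rw [hx]; exact Subgroup.subset_closure (by simp)
    · rw [hy]; exact Subgroup.subset_closure (by simp)
  exact Subgroup.commutator_mono h6 h6 h5

/-- the subsets `{x | x^{p^i} = 1}` are subgroups of the Lazard group -/
theorem laz_tors (hL : lieLCS L (p - 1) = ⊥) (k : ℕ) {x y : L} (hx : k • x = 0) (hy : k • y = 0) :
    k • lmul R hL x y = 0 := by
  let I : LieSubalgebra R L :=
    { carrier := {x | k • x = 0}
      add_mem' := fun {a b} (ha : k • a = 0) (hb : k • b = 0) => by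
        change k • (a + b) = 0
        rw [smul_add, ha, hb, add_zero]
      zero_mem' := smul_zero _
      smul_mem' := fun c a (ha : k • a = 0) => by
        change k • (c • a) = 0
        rw [smul_comm, ha, smul_zero]
      lie_mem' := fun {a b} (ha : k • a = 0) (hb : k • b = 0) => by
        change k • ⁅a, b⁆ = 0
        rw [← nsmul_lie, ha, zero_lie] }
  have key : ∀ u : LL p R Bool, k • ev hL (pr x y) u = 0 := by
    have hI : lieLCS I (p - 1) = ⊥ := by
      have : ∀ n, ∀ z ∈ lieLCS I n, z.1 ∈ lieLCS L n := by
        intro n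
        induction n with
        | zero => intro z _; trivial
        | succ n ih =>
          intro z hz
          induction hz using AddSubgroup.closure_induction with
          | mem z hz => obtain ⟨a, ha, b, rfl⟩ := hz; exact lieLCS_mem_lie (ih a ha) b.1
          | zero => exact zero_mem _
          | add a b _ _ ha hb => exact add_mem ha hb
          | neg a _ ha => exact neg_mem ha
      rw [eq_bot_iff]
      intro z hz
      have := this _ z hz
      rw [hL] at this
      exact Subtype.ext this
    intro u
    have : ev hL (pr x y) = I.incl.comp (ev hI (pr ⟨x, hx⟩ ⟨y, hy⟩)) := by
      refine LL_hom_ext fun b => ?_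
      rw [LieHom.comp_apply, ev_gn, ev_gn]
      cases b <;> rfl
    rw [this]
    exact (ev hI (pr ⟨x, hx⟩ ⟨y, hy⟩) u).2
  exact key _
end
end LZ

open scoped commutatorElement
attribute [local instance] LieRing.ofAssociativeRing
set_option linter.unusedSectionVars false
set_option linter.unusedVariables false
set_option linter.style.haveILetI false

namespace RG
variable {p : ℕ} [hp : Fact p.Prime] {G : Type} [Group G] [Finite G]

theorem coatom (hG : IsPGroup p G) {M : Subgroup G} (hM : IsCoatom M) : (∀ a b : G, ⁅a, b⁆ ∈ M) ∧ (∀ a : G, a ^ p ∈ M) := by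
  have hnil : Group.IsNilpotent G := hG.isNilpotent
  have hnorm : M.Normal := by
    have h02 : Group.IsNilpotent G ↔ ∀ H : Subgroup G, IsCoatom H → H.Normal := Group.isNilpotent_of_finite_tfae.out 0 2
    exact h02.1 hnil M hM
  have hQ : IsPGroup p (G ⧸ M) := hG.to_quotient M
  have hsub : ∀ S : Subgroup (G ⧸ M), S ≠ ⊥ → S = ⊤ := by
    intro S hS
    have h1 : M ≤ S.comap (QuotientGroup.mk' M) := by
      intro g hg
      rw [Subgroup.mem_comap, QuotientGroup.mk'_apply, (QuotientGroup.eq_one_iff g).2 hg]; exact one_mem _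
    rcases hM.le_iff.1 h1 with h2 | h2
    · rw [eq_top_iff]; intro q _
      obtain ⟨g, rfl⟩ := QuotientGroup.mk_surjective q
      have : g ∈ S.comap (QuotientGroup.mk' M) := h2 ▸ Subgroup.mem_top g
      exact this
    · exfalso; apply hS
      rw [eq_bot_iff]; intro q hq
      obtain ⟨g, rfl⟩ := QuotientGroup.mk_surjective q
      have : g ∈ S.comap (QuotientGroup.mk' M) := hq
      rw [h2] at this
      exact (QuotientGroup.eq_one_iff g).2 this
  have hnt : Nontrivial (G ⧸ M) := by
    rw [QuotientGroup.nontrivial_iff]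
    exact hM.1
  have hc : Subgroup.center (G ⧸ M) = ⊤ := by
    refine hsub _ ?_
    have := hQ.center_nontrivial
    exact (Subgroup.nontrivial_iff_ne_bot _).1 this
  have hcomm : ∀ a b : G ⧸ M, Commute a b := by
    intro a b
    have : b ∈ Subgroup.center (G ⧸ M) := hc ▸ Subgroup.mem_top b
    exact Subgroup.mem_center_iff.1 this a
  constructor
  · intro a b
    rw [← QuotientGroup.eq_one_iff]
    change ⁅(a : G ⧸ M), (b : G ⧸ M)⁆ = 1
    rw [commutatorElement_eq_one_iff_commute]
    exact hcomm _ _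
  · intro a
    let S : Subgroup (G ⧸ M) :=
      { carrier := {q | q ^ p = 1}
        mul_mem' := fun {x y} (hx : x ^ p = 1) (hy : y ^ p = 1) => by
          change (x * y) ^ p = 1
          rw [(hcomm x y).mul_pow, hx, hy, one_mul]
        one_mem' := one_pow _
        inv_mem' := fun {x} (hx : x ^ p = 1) => by
          change x⁻¹ ^ p = 1
          rw [inv_pow, hx, inv_one] }
    have hS : S = ⊤ := by
      refine hsub _ ?_
      intro hbot
      have hd : p ∣ Nat.card (G ⧸ M) := by
        obtain ⟨n, hn⟩ := IsPGroup.iff_card.1 hQ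
        rw [hn]
        refine dvd_pow_self p ?_
        rintro rfl
        rw [pow_zero] at hn
        exact (Finite.one_lt_card (α := G ⧸ M)).ne' hn
      obtain ⟨q, hq⟩ := exists_prime_orderOf_dvd_card' p hd
      have : q ∈ S := by
        change q ^ p = 1
        rw [← hq, pow_orderOf_eq_one]
      rw [hbot, Subgroup.mem_bot] at this
      rw [this, orderOf_one] at hq
      exact hp.out.one_lt.ne hq
    have : (a : G ⧸ M) ∈ S := hS ▸ Subgroup.mem_top _
    exact (QuotientGroup.eq_one_iff _).1 this

theorem com_le_coatom (hG : IsPGroup p G) {M : Subgroup G} (hM : IsCoatom M) : ⁅(⊤ : Subgroup G), (⊤ : Subgroup G)⁆ ≤ M :=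
  Subgroup.commutator_le.2 fun a _ b _ => (coatom hG hM).1 a b

theorem cyc_proper (hG : IsPGroup p G) (hnc : ¬ ∀ a b : G, Commute a b) (g : G) :
    Subgroup.zpowers g ⊔ ⁅(⊤ : Subgroup G), (⊤ : Subgroup G)⁆ ≠ ⊤ := by
  intro h
  apply hnc
  have : Subgroup.zpowers g = ⊤ := by
    by_contra hne
    obtain ⟨M, hM, hle⟩ := (eq_top_or_exists_le_coatom (Subgroup.zpowers g)).resolve_left hne
    apply hM.1
    rw [eq_top_iff, ← h]
    exact sup_le hle (com_le_coatom hG hM)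
  intro a b
  have ha : a ∈ Subgroup.zpowers g := this ▸ Subgroup.mem_top a
  have hb : b ∈ Subgroup.zpowers g := this ▸ Subgroup.mem_top b
  obtain ⟨i, rfl⟩ := ha
  obtain ⟨j, rfl⟩ := hb
  exact (Commute.refl g).zpow_zpow i j

omit hp [Finite G] in
theorem map_mho {H : Type} [Group H] (f : G →* H) (K : Subgroup G) : (MhoOne p K).map f = MhoOne p (K.map f) := by
  rw [MhoOne, MhoOne, MonoidHom.map_closure]
  congr 1
  ext y
  constructor
  · rintro ⟨_, ⟨x, hx, rfl⟩, rfl⟩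
    exact ⟨f x, Subgroup.mem_map_of_mem f hx, map_pow _ _ _⟩
  · rintro ⟨_, ⟨x, hx, rfl⟩, rfl⟩
    exact ⟨x ^ p, ⟨x, hx, rfl⟩, map_pow _ _ _⟩

omit hp [Finite G] in
theorem map_gen {H : Type} [Group H] (f : G →* H) (x y : G) :
    (MhoOne p ⁅Subgroup.closure {x, y}, Subgroup.closure {x, y}⁆).map f =
      MhoOne p ⁅Subgroup.closure {f x, f y}, Subgroup.closure {f x, f y}⁆ := by
  rw [map_mho, Subgroup.map_commutator, MonoidHom.map_closure, Set.image_pair]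

omit hp [Finite G] in
theorem reg_sub (hr : IsRegularPGroup p G) (H : Subgroup G) : IsRegularPGroup p H := by
  intro x y
  obtain ⟨z, hz, h⟩ := hr x y
  have := map_gen (p := p) H.subtype x y
  change _ = MhoOne p ⁅Subgroup.closure {(x : G), (y : G)}, Subgroup.closure {(x : G), (y : G)}⁆ at this
  rw [← this] at hz
  obtain ⟨z', hz', rfl⟩ := hz
  exact ⟨z', hz', Subtype.ext h⟩

omit hp [Finite G] in
theorem reg_map {H : Type} [Group H] (hr : IsRegularPGroup p G) (f : G →* H) (hf : Function.Surjective f) : IsRegularPGroup p H := by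
  intro x y
  obtain ⟨x, rfl⟩ := hf x
  obtain ⟨y, rfl⟩ := hf y
  obtain ⟨z, hz, h⟩ := hr x y
  refine ⟨f z, ?_, ?_⟩
  · rw [← map_gen]; exact Subgroup.mem_map_of_mem f hz
  · rw [← map_pow, ← map_pow, ← map_mul, h, map_mul, map_pow, map_mul]

omit hp [Finite G] in
theorem mho_mono {H K : Subgroup G} (h : H ≤ K) : MhoOne p H ≤ MhoOne p K :=
  Subgroup.closure_mono (by rintro _ ⟨x, hx, rfl⟩; exact ⟨x, h hx, rfl⟩)

/-- closure of `p`-th powers under multiplication -/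
theorem pow_closed (n : ℕ) : ∀ (G : Type) [Group G] [Finite G], Nat.card G = n → IsPGroup p G → IsRegularPGroup p G →
    ∀ x y : G, ∃ w : G, x ^ p * y ^ p = w ^ p := by
  induction n using Nat.strong_induction_on with
  | _ n ih =>
  intro G _ _ hn hG hr x y
  have ih' : ∀ H : Subgroup G, H ≠ ⊤ → ∀ x ∈ H, ∀ y ∈ H, ∃ w ∈ H, x ^ p * y ^ p = w ^ p := by
    intro H hH x hx y hy
    have hlt : Nat.card H < n := by
      rw [← hn]
      exact lt_of_le_of_ne (Subgroup.card_le_card_group H) (fun h => hH (Subgroup.eq_top_of_card_eq H h))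
    obtain ⟨w, hw⟩ := ih _ hlt H rfl (hG.to_subgroup H) (reg_sub hr H) ⟨x, hx⟩ ⟨y, hy⟩
    exact ⟨w, w.2, congrArg Subtype.val hw⟩
  by_cases hnc : ∀ a b : G, Commute a b
  · exact ⟨x * y, ((hnc x y).mul_pow p).symm⟩
  obtain ⟨z, hz, h⟩ := hr x y
  set K := Subgroup.zpowers (x * y) ⊔ ⁅(⊤ : Subgroup G), (⊤ : Subgroup G)⁆ with hK
  have hKt : K ≠ ⊤ := cyc_proper hG hnc _
  have hz' : ∃ w ∈ K, z = w ^ p := by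
    have hz2 : z ∈ MhoOne p ⁅(⊤ : Subgroup G), (⊤ : Subgroup G)⁆ := mho_mono (Subgroup.commutator_mono le_top le_top) hz
    clear hz h
    induction hz2 using Subgroup.closure_induction with
    | mem z hz => obtain ⟨c, hc, rfl⟩ := hz; exact ⟨c, (le_sup_right : _ ≤ K) hc, rfl⟩
    | one => exact ⟨1, one_mem _, (one_pow _).symm⟩
    | mul a b _ _ ha hb =>
      obtain ⟨a', h1, rfl⟩ := ha
      obtain ⟨b', h2, rfl⟩ := hb
      exact ih' K hKt a' h1 b' h2
    | inv a _ ha =>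
      obtain ⟨a', h1, rfl⟩ := ha
      exact ⟨a'⁻¹, inv_mem h1, (inv_pow _ _).symm⟩
  obtain ⟨w, hw, rfl⟩ := hz'
  obtain ⟨v, _, hv⟩ := ih' K hKt (x * y) ((le_sup_left : _ ≤ K) (Subgroup.mem_zpowers _)) w hw
  exact ⟨v, by rw [h, hv]⟩

theorem mem_mho (hG : IsPGroup p G) (hr : IsRegularPGroup p G) (K : Subgroup G) {y : G} : y ∈ MhoOne p K ↔ ∃ x ∈ K, y = x ^ p := by
  constructor
  · intro hz
    induction hz using Subgroup.closure_induction with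
    | mem z hz => exact hz
    | one => exact ⟨1, one_mem _, (one_pow _).symm⟩
    | mul a b _ _ ha hb =>
      obtain ⟨a', h1, rfl⟩ := ha
      obtain ⟨b', h2, rfl⟩ := hb
      obtain ⟨w, hw⟩ := pow_closed _ K rfl (hG.to_subgroup K) (reg_sub hr K) ⟨a', h1⟩ ⟨b', h2⟩
      exact ⟨w, w.2, congrArg Subtype.val hw⟩
    | inv a _ ha =>
      obtain ⟨a', h1, rfl⟩ := ha
      exact ⟨a'⁻¹, inv_mem h1, (inv_pow _ _).symm⟩
  · intro h; exact Subgroup.subset_closure h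

def BB (k : ℕ) (G : Type) [Group G] : Prop := ∀ a b : G, a ^ k = b ^ k ↔ (a⁻¹ * b) ^ k = 1

omit hp [Finite G] in
theorem BB.mul {k : ℕ} (h : BB k G) {a b : G} (ha : a ^ k = 1) (hb : b ^ k = 1) : (a * b) ^ k = 1 := by
  have := (h a⁻¹ b).1 (by rw [inv_pow, ha, hb, inv_one])
  rwa [inv_inv] at this

/-- the torsion subgroup -/
def Tor {k : ℕ} (h : BB k G) : Subgroup G where
  carrier := {g | g ^ k = 1}
  mul_mem' := fun {a b} ha hb => h.mul ha hb
  one_mem' := one_pow _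
  inv_mem' := fun {x} (hx : x ^ k = 1) => by
    change x⁻¹ ^ k = 1
    rw [inv_pow, hx, inv_one]

instance Tor_normal {k : ℕ} (h : BB k G) : (Tor h).Normal where
  conj_mem := fun n (hn : n ^ k = 1) g => by
    change (g * n * g⁻¹) ^ k = 1
    rw [conj_pow, hn, mul_one, mul_inv_cancel]

theorem BB_aux (hG : IsPGroup p G) (ih : ∀ H : Subgroup G, H ≠ ⊤ → BB p H) (hnc : ¬ ∀ a b : G, Commute a b)
    (x y : G) (hxy : Subgroup.closure {x, y} = ⊤) (h : y⁻¹ * x ^ p * y = x ^ p) :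
    MhoOne p ⁅(⊤ : Subgroup G), (⊤ : Subgroup G)⁆ = ⊥ := by
  set C := ⁅(⊤ : Subgroup G), (⊤ : Subgroup G)⁆ with hC
  set K := Subgroup.zpowers x ⊔ C with hK
  have hKt : K ≠ ⊤ := cyc_proper hG hnc _
  have hCt : C ≠ ⊤ := fun h => hKt (by rw [hK, h]; simp)
  have hcC : ∀ a b : G, ⁅a, b⁆ ∈ C := fun a b => Subgroup.commutator_mem_commutator (Subgroup.mem_top a) (Subgroup.mem_top b)
  have hxK : x ∈ K := (le_sup_left : _ ≤ K) (Subgroup.mem_zpowers x)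
  have e1 : y⁻¹ * x * y = x * ⁅x⁻¹, y⁻¹⁆ := by simp only [commutatorElement_def]; group
  have hxyK : y⁻¹ * x * y ∈ K := by rw [e1]; exact mul_mem hxK ((le_sup_right : _ ≤ K) (hcC _ _))
  have e2 := (ih K hKt ⟨x, hxK⟩ ⟨y⁻¹ * x * y, hxyK⟩).1 (Subtype.ext (by
    change x ^ p = (y⁻¹ * x * y) ^ p
    have := conj_pow (i := p) (a := y⁻¹) (b := x)
    rw [inv_inv] at this
    rw [this, h]))
  have e3 : ⁅x⁻¹, y⁻¹⁆ ^ p = 1 := by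
    have := congrArg Subtype.val e2
    change (x⁻¹ * (y⁻¹ * x * y)) ^ p = 1 at this
    rwa [e1, inv_mul_cancel_left] at this
  let D : Subgroup G := (Tor (ih C hCt)).map C.subtype
  have hD : ∀ g : G, g ∈ D ↔ g ∈ C ∧ g ^ p = 1 := by
    intro g
    constructor
    · rintro ⟨⟨a, ha⟩, h1, rfl⟩
      exact ⟨ha, congrArg Subtype.val h1⟩
    · rintro ⟨h1, h2⟩
      exact ⟨⟨g, h1⟩, Subtype.ext h2, rfl⟩
  have hCn : C.Normal := by rw [hC]; infer_instance
  have hDn : D.Normal := ⟨fun n hn g => by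
    rw [hD] at hn ⊢
    exact ⟨hCn.conj_mem _ hn.1 g, by rw [conj_pow, hn.2, mul_one, mul_inv_cancel]⟩⟩
  have e4 : Commute (x : G ⧸ D) (y : G ⧸ D) := by
    have : ⁅(x : G ⧸ D)⁻¹, (y : G ⧸ D)⁻¹⁆ = 1 := (QuotientGroup.eq_one_iff _).2 ((hD _).2 ⟨hcC _ _, e3⟩)
    rw [commutatorElement_eq_one_iff_commute] at this
    simpa using this
  have e5 : ∀ a b : G, Commute (a : G ⧸ D) (b : G ⧸ D) := by
    have k1 : ∀ (u : G), Commute (u : G ⧸ D) (x : G ⧸ D) → Commute (u : G ⧸ D) (y : G ⧸ D) → ∀ b : G, Commute (u : G ⧸ D) (b : G ⧸ D) := by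
      intro u h1 h2 b
      have hb : b ∈ Subgroup.closure {x, y} := hxy ▸ Subgroup.mem_top b
      induction hb using Subgroup.closure_induction with
      | mem b hb => rcases hb with rfl | rfl <;> assumption
      | one => exact Commute.one_right _
      | mul a b _ _ ha hb => exact ha.mul_right hb
      | inv a _ ha => exact ha.inv_right
    intro a b
    exact k1 a (k1 x (Commute.refl _) e4 a).symm (k1 y e4.symm (Commute.refl _) a).symm b
  have e6 : C ≤ D := by
    rw [hC, Subgroup.commutator_le]
    intro a _ b _
    rw [← QuotientGroup.eq_one_iff]
    change ⁅(a : G ⧸ D), (b : G ⧸ D)⁆ = 1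
    rw [commutatorElement_eq_one_iff_commute]
    exact e5 a b
  rw [eq_bot_iff, MhoOne, Subgroup.closure_le]
  rintro _ ⟨c, hc, rfl⟩
  exact ((hD _).1 (e6 hc)).2

theorem BB_one (n : ℕ) : ∀ (G : Type) [Group G] [Finite G], Nat.card G = n → IsPGroup p G → IsRegularPGroup p G → BB p G := by
  induction n using Nat.strong_induction_on with
  | _ n ih =>
  intro G _ _ hn hG hr
  have ih' : ∀ H : Subgroup G, H ≠ ⊤ → BB p H := by
    intro H hH
    have hlt : Nat.card H < n := by
      rw [← hn]
      exact lt_of_le_of_ne (Subgroup.card_le_card_group H) (fun h => hH (Subgroup.eq_top_of_card_eq H h))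
    exact ih _ hlt H rfl (hG.to_subgroup H) (reg_sub hr H)
  intro a b
  by_cases hnc : ∀ a b : G, Commute a b
  · rw [(hnc _ _).mul_pow, inv_pow, inv_mul_eq_one]
  by_cases hT : Subgroup.closure {a, b} = ⊤
  · constructor
    · intro h
      have hm := BB_aux hG ih' hnc a b hT (by rw [h, mul_assoc, ((Commute.refl b).pow_left p).eq, inv_mul_cancel_left])
      obtain ⟨z, hz, h1⟩ := hr a⁻¹ b
      have hz := mho_mono (Subgroup.commutator_mono le_top le_top) hz
      rw [hm, Subgroup.mem_bot] at hz
      rw [hz, mul_one, inv_pow, h, inv_mul_cancel] at h1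
      exact h1.symm
    · intro h
      have hT' : Subgroup.closure {a⁻¹ * b, a} = ⊤ := by
        rw [eq_top_iff, ← hT, Subgroup.closure_le]
        have ha : a ∈ Subgroup.closure {a⁻¹ * b, a} := Subgroup.subset_closure (by simp)
        have hb : a⁻¹ * b ∈ Subgroup.closure {a⁻¹ * b, a} := Subgroup.subset_closure (by simp)
        rintro c (rfl | rfl)
        · exact ha
        · have := mul_mem ha hb
          rwa [mul_inv_cancel_left] at this
      have hm := BB_aux hG ih' hnc _ _ hT' (by rw [h]; simp)
      obtain ⟨z, hz, h1⟩ := hr a (a⁻¹ * b)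
      have hz := mho_mono (Subgroup.commutator_mono le_top le_top) hz
      rw [hm, Subgroup.mem_bot] at hz
      rw [hz, mul_one, h, mul_inv_cancel_left, mul_one] at h1
      exact h1
  · have ha : a ∈ Subgroup.closure {a, b} := Subgroup.subset_closure (by simp)
    have hb : b ∈ Subgroup.closure {a, b} := Subgroup.subset_closure (by simp)
    have := ih' _ hT ⟨a, ha⟩ ⟨b, hb⟩
    rw [Subtype.ext_iff, Subtype.ext_iff] at this
    exact this

theorem BB_all (t : ℕ) : ∀ (G : Type) [Group G] [Finite G], IsPGroup p G → IsRegularPGroup p G → BB (p ^ t) G := by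
  induction t with
  | zero =>
    intro G _ _ _ _ a b
    rw [pow_zero, pow_one, pow_one, pow_one, inv_mul_eq_one]
  | succ t ih =>
    intro G _ _ hG hr a b
    have h1 := BB_one _ G rfl hG hr
    have h2 := ih (G ⧸ Tor h1) (hG.to_quotient _) (reg_map hr (QuotientGroup.mk' _) (QuotientGroup.mk'_surjective _)) (a : G ⧸ Tor h1) b
    rw [pow_succ, pow_mul, pow_mul, pow_mul, h1]
    have h3 : (a : G ⧸ Tor h1) ^ p ^ t = (b : G ⧸ Tor h1) ^ p ^ t ↔ ((a ^ p ^ t)⁻¹ * b ^ p ^ t) ^ p = 1 := by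
      rw [← QuotientGroup.mk_pow, ← QuotientGroup.mk_pow, QuotientGroup.eq]; rfl
    have h4 : ((a : G ⧸ Tor h1)⁻¹ * b) ^ p ^ t = 1 ↔ ((a⁻¹ * b) ^ p ^ t) ^ p = 1 := by
      rw [← QuotientGroup.mk_inv, ← QuotientGroup.mk_mul, ← QuotientGroup.mk_pow, QuotientGroup.eq_one_iff]; rfl
    rw [← h3, ← h4, h2]
end RG

open scoped commutatorElement
attribute [local instance] LieRing.ofAssociativeRing
set_option linter.unusedSectionVars false
set_option linter.unusedVariables false
set_option linter.style.haveILetI false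

namespace RG
variable {p : ℕ} [hp : Fact p.Prime] {G : Type} [Group G] [Finite G]

omit hp [Finite G] in
theorem lc_succ (n : ℕ) : lc G (n + 1) = ⁅lc G n, (⊤ : Subgroup G)⁆ := Subgroup.lowerCentralSeries_succ _ _

theorem lc_zero_ex (hG : IsPGroup p G) : ∃ n, lc G n = ⊥ := by
  have hnil : Group.IsNilpotent G := hG.isNilpotent
  exact Subgroup.nilpotent_iff_lowerCentralSeries.1 hnil

theorem lc_drop (hG : IsPGroup p G) {N : Subgroup G} [N.Normal] (k : ℕ) : ∀ (M : Subgroup G) [M.Normal] (s : ℕ), N ≤ M →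
    Nat.card M ≤ p ^ k * Nat.card N → lc G s ≤ M → lc G (s + k) ≤ N := by
  induction k with
  | zero =>
    intro M _ s hNM hc hs
    rw [pow_zero, one_mul] at hc
    have : N = M := Subgroup.eq_of_le_of_card_ge hNM hc
    rw [this]; exact hs
  | succ k ih =>
    intro M _ s hNM hc hs
    by_cases hMN : M ≤ N
    · exact (lc_anti (by omega)).trans (hs.trans hMN)
    let M' : Subgroup G := ⁅M, (⊤ : Subgroup G)⁆ ⊔ N
    have hM' : M' ≤ M := sup_le (Subgroup.commutator_le_left _ _) hNM
    have hne : M' ≠ M := by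
      intro heq
      have : ∀ j, M ≤ lc G j ⊔ N := by
        intro j
        induction j with
        | zero => exact le_sup_of_le_left le_top
        | succ j ij =>
          rw [← heq]
          refine sup_le ?_ le_sup_right
          rw [Subgroup.commutator_le]
          intro a ha b _
          obtain ⟨c, hc, d, hd, rfl⟩ := Subgroup.mem_sup_of_normal_right.1 (ij ha)
          have h1 : c * ⁅d, b⁆ * c⁻¹ ∈ N := by
            have hdb : ⁅d, b⁆ ∈ N := Subgroup.commutator_le_left N (⊤ : Subgroup G) (Subgroup.commutator_mem_commutator hd (Subgroup.mem_top b))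
            exact Subgroup.Normal.conj_mem inferInstance _ hdb _
          have h2 : ⁅c, b⁆ ∈ lc G (j + 1) := by
            rw [lc_succ]; exact Subgroup.commutator_mem_commutator hc (Subgroup.mem_top b)
          rw [commutatorElement_mul_left_eq_conj_mul]
          exact mul_mem ((le_sup_right : N ≤ lc G (j + 1) ⊔ N) h1) ((le_sup_left : lc G (j + 1) ≤ lc G (j + 1) ⊔ N) h2)
      obtain ⟨n, hn⟩ := lc_zero_ex hG
      have h3 := this n
      rw [hn, bot_sup_eq] at h3
      exact hMN h3
    have hcard : p * Nat.card M' ≤ Nat.card M := by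
      obtain ⟨a, ha⟩ := IsPGroup.iff_card.1 (hG.to_subgroup M)
      obtain ⟨b, hb⟩ := IsPGroup.iff_card.1 (hG.to_subgroup M')
      have hlt : Nat.card M' < Nat.card M := lt_of_le_of_ne (Subgroup.card_le_of_le hM') (fun h => hne (Subgroup.eq_of_le_of_card_ge hM' h.ge))
      rw [ha, hb] at hlt ⊢
      have := (Nat.pow_lt_pow_iff_right hp.out.one_lt).1 hlt
      rw [← pow_succ']
      exact Nat.pow_le_pow_right hp.out.pos this
    have h4 := ih M' (s + 1) le_sup_right (by
      have : p * Nat.card M' ≤ p * (p ^ k * Nat.card N) := by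
        rw [← mul_assoc, ← pow_succ']; exact hcard.trans hc
      exact Nat.le_of_mul_le_mul_left this hp.out.pos) (by
      rw [lc_succ]
      exact (Subgroup.commutator_mono hs le_rfl).trans le_sup_left)
    have e : s + 1 + k = s + (k + 1) := by omega
    rwa [e] at h4

variable (p) in
def pw : ℕ → Subgroup G → Subgroup G
  | 0, K => K
  | t + 1, K => MhoOne p (pw t K)

theorem mem_pw (hG : IsPGroup p G) (hr : IsRegularPGroup p G) (t : ℕ) (K : Subgroup G) {y : G} :
    y ∈ pw p t K ↔ ∃ x ∈ K, y = x ^ p ^ t := by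
  induction t generalizing y with
  | zero => simp [pw]
  | succ t ih =>
    change y ∈ MhoOne p (pw p t K) ↔ _
    rw [mem_mho hG hr]
    constructor
    · rintro ⟨x, hx, rfl⟩
      obtain ⟨z, hz, rfl⟩ := ih.1 hx
      exact ⟨z, hz, by rw [pow_succ, pow_mul]⟩
    · rintro ⟨z, hz, rfl⟩
      exact ⟨_, ih.2 ⟨z, hz, rfl⟩, by rw [pow_succ, pow_mul]⟩

theorem pw_normal (hG : IsPGroup p G) (hr : IsRegularPGroup p G) (t : ℕ) (K : Subgroup G) (hK : K.Normal) : (pw p t K).Normal := by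
  refine ⟨fun n hn g => ?_⟩
  rw [mem_pw hG hr] at hn ⊢
  obtain ⟨x, hx, rfl⟩ := hn
  exact ⟨g * x * g⁻¹, hK.conj_mem x hx g, (conj_pow).symm⟩

variable (p G) in
def Ph : Subgroup G := ⁅(⊤ : Subgroup G), (⊤ : Subgroup G)⁆ ⊔ MhoOne p ⊤

theorem Ph_normal (hG : IsPGroup p G) (hr : IsRegularPGroup p G) : (Ph p G).Normal := by
  have := pw_normal hG hr 1 ⊤ inferInstance
  have h2 : (MhoOne p (⊤ : Subgroup G)).Normal := this
  unfold Ph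
  infer_instance

theorem Ph_coatom (hG : IsPGroup p G) {M : Subgroup G} (hM : IsCoatom M) : Ph p G ≤ M := by
  refine sup_le (com_le_coatom hG hM) ?_
  rw [MhoOne, Subgroup.closure_le]
  rintro _ ⟨x, _, rfl⟩
  exact (coatom hG hM).2 x

omit hp [Finite G] in
theorem pw_mono (t : ℕ) {H K : Subgroup G} (h : H ≤ K) : pw p t H ≤ pw p t K := by
  induction t with
  | zero => exact h
  | succ t ih => exact mho_mono ih

omit hp [Finite G] in
theorem pw_HK (t : ℕ) : pw p (t + 1) (⊤ : Subgroup G) ≤ pw p t (Ph p G) := by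
  induction t with
  | zero => exact le_sup_right
  | succ t ih => exact mho_mono ih

omit hp [Finite G] in
theorem reg_cong (hr : IsRegularPGroup p G) {H K : Subgroup G} (h : ⁅H, H⁆ ≤ K) {x y : G} (hx : x ∈ H) (hy : y ∈ H) :
    ∃ z ∈ MhoOne p K, (x * y) ^ p = x ^ p * y ^ p * z := by
  obtain ⟨z, hz, h1⟩ := hr x y
  have hc : Subgroup.closure {x, y} ≤ H := by
    rw [Subgroup.closure_le]; rintro c (rfl | rfl) <;> assumption
  refine ⟨z⁻¹, inv_mem (mho_mono ((Subgroup.commutator_mono hc hc).trans h) hz), ?_⟩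
  rw [h1, mul_inv_cancel_right]

theorem pw_com (hG : IsPGroup p G) (hr : IsRegularPGroup p G) (t : ℕ) :
    ⁅pw p t (⊤ : Subgroup G), (⊤ : Subgroup G)⁆ ≤ pw p t (Ph p G) := by
  induction t with
  | zero => exact le_sup_left
  | succ t ih =>
    have hn := pw_normal hG hr (t + 1) (Ph p G) (Ph_normal hG hr)
    rw [Subgroup.commutator_comm, Subgroup.commutator_le]
    intro g _ h hh
    obtain ⟨y, hy, rfl⟩ := (mem_mho hG hr _).1 (show h ∈ MhoOne p (pw p t ⊤) from hh)
    have h1 : ⁅g, y⁆ ∈ pw p t (Ph p G) := by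
      rw [Subgroup.commutator_comm] at ih
      exact ih (Subgroup.commutator_mem_commutator (Subgroup.mem_top g) hy)
    have h2 : pw p t (Ph p G) ≤ pw p t ⊤ := pw_mono t le_top
    obtain ⟨z, hz, e⟩ := reg_cong hr ((Subgroup.commutator_mono le_rfl le_top).trans ih) (h2 h1) hy
    have e1 : ⁅g, y ^ p⁆ = ⁅g, y⁆ ^ p * (y ^ p * z * (y ^ p)⁻¹) := by
      have : ⁅g, y⁆ * y = g * y * g⁻¹ := by rw [commutatorElement_def]; group
      rw [this, conj_pow] at e
      rw [commutatorElement_def, e]; group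
    rw [e1]
    exact mul_mem (Subgroup.subset_closure ⟨_, h1, rfl⟩) (hn.conj_mem z hz _)

theorem pw_cong (hG : IsPGroup p G) (hr : IsRegularPGroup p G) (t : ℕ) (a b : G) :
    ∃ z ∈ pw p t (Ph p G), (a * b) ^ p ^ t = a ^ p ^ t * b ^ p ^ t * z := by
  induction t with
  | zero => exact ⟨1, one_mem _, by simp⟩
  | succ t ih =>
    obtain ⟨z, hz, e⟩ := ih
    have hcom : ⁅pw p t (⊤ : Subgroup G), pw p t (⊤ : Subgroup G)⁆ ≤ pw p t (Ph p G) := (Subgroup.commutator_mono le_rfl le_top).trans (pw_com hG hr t)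
    have ha : a ^ p ^ t ∈ pw p t ⊤ := (mem_pw hG hr t _).2 ⟨a, Subgroup.mem_top _, rfl⟩
    have hb : b ^ p ^ t ∈ pw p t ⊤ := (mem_pw hG hr t _).2 ⟨b, Subgroup.mem_top _, rfl⟩
    have hz' : z ∈ pw p t ⊤ := pw_mono t le_top hz
    obtain ⟨z1, hz1, e1⟩ := reg_cong hr hcom (mul_mem ha hb) hz'
    obtain ⟨z2, hz2, e2⟩ := reg_cong hr hcom ha hb
    have hzp : z ^ p ∈ pw p (t + 1) (Ph p G) := Subgroup.subset_closure ⟨z, hz, rfl⟩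
    refine ⟨z2 * z ^ p * z1, mul_mem (mul_mem hz2 hzp) hz1, ?_⟩
    rw [pow_succ, pow_mul, pow_mul, pow_mul, e, e1, e2]
    group

/-- when `|℧_t : ℧_t(Φ)| ≤ p`, the group `℧_t` is central -/
theorem pw_central (hG : IsPGroup p G) (hr : IsRegularPGroup p G) (t : ℕ)
    (h : Nat.card (pw p t (⊤ : Subgroup G)) ≤ p * Nat.card (pw p t (Ph p G))) :
    ⁅pw p t (⊤ : Subgroup G), (⊤ : Subgroup G)⁆ = ⊥ := by
  have hPn := Ph_normal hG hr
  have hn := pw_normal hG hr t (Ph p G) hPn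
  have hB := BB_all t G hG hr
  let ρ : G →* G ⧸ pw p t (Ph p G) := MonoidHom.mk' (fun g => ((g ^ p ^ t : G) : G ⧸ pw p t (Ph p G))) (fun a b => by
    obtain ⟨z, hz, e⟩ := pw_cong hG hr t a b
    rw [e, QuotientGroup.mk_mul, QuotientGroup.mk_mul, (QuotientGroup.eq_one_iff z).2 hz, mul_one])
  have hker : ∀ g, ρ g = 1 ↔ g ∈ Ph p G ⊔ Tor hB := by
    intro g
    change ((g ^ p ^ t : G) : G ⧸ pw p t (Ph p G)) = 1 ↔ _
    rw [QuotientGroup.eq_one_iff, mem_pw hG hr, Subgroup.mem_sup_of_normal_right]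
    constructor
    · rintro ⟨f, hf, e⟩
      exact ⟨f, hf, f⁻¹ * g, (hB f g).1 e.symm, mul_inv_cancel_left _ _⟩
    · rintro ⟨f, hf, d, hd, rfl⟩
      refine ⟨f, hf, ((hB f (f * d)).2 ?_).symm⟩
      rw [inv_mul_cancel_left]; exact hd
  -- there is x generating G modulo Ω_t
  have hx : ∃ x : G, ∀ g : G, ∃ i : ℤ, (x ^ i)⁻¹ * g ∈ Ph p G ⊔ Tor hB := by
    let S : Subgroup (G ⧸ pw p t (Ph p G)) := ρ.range
    have hS : S = (pw p t (⊤ : Subgroup G)).map (QuotientGroup.mk' _) := by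
      ext q
      constructor
      · rintro ⟨g, rfl⟩
        exact ⟨g ^ p ^ t, (mem_pw hG hr t _).2 ⟨g, Subgroup.mem_top g, rfl⟩, rfl⟩
      · rintro ⟨y, hy, rfl⟩
        obtain ⟨g, _, rfl⟩ := (mem_pw hG hr t _).1 hy
        exact ⟨g, rfl⟩
    have hSc : Nat.card S ≤ p := by
      have h1 : Nat.card S * Nat.card (pw p t (Ph p G)) = Nat.card (pw p t (⊤ : Subgroup G)) := by
        have h2 := Subgroup.relIndex_ker (f := QuotientGroup.mk' (pw p t (Ph p G))) (K := pw p t (⊤ : Subgroup G))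
        rw [QuotientGroup.ker_mk', ← hS] at h2
        rw [← h2]
        rw [mul_comm]
        have h3 := Subgroup.relIndex_mul_relIndex ⊥ _ _ bot_le (pw_mono (p := p) t (le_top : Ph p G ≤ ⊤))
        rwa [Subgroup.relIndex_bot_left, Subgroup.relIndex_bot_left] at h3
      rw [← h1] at h
      exact Nat.le_of_mul_le_mul_right h Nat.card_pos
    have hcyc : IsCyclic S := by
      have hSp : IsPGroup p S := (hG.to_quotient _).to_subgroup S
      obtain ⟨n, hn⟩ := IsPGroup.iff_card.1 hSp
      have hn1 : n ≤ 1 := by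
        rw [hn] at hSc
        exact (Nat.pow_le_pow_iff_right hp.out.one_lt).1 (by rwa [pow_one])
      interval_cases n
      · rw [pow_zero] at hn
        have : Subsingleton S := (Nat.card_eq_one_iff_unique.1 hn).1
        infer_instance
      · rw [pow_one] at hn
        exact isCyclic_of_prime_card hn
    obtain ⟨⟨_, x, rfl⟩, hx⟩ := hcyc.exists_generator
    refine ⟨x, fun g => ?_⟩
    obtain ⟨i, hi⟩ := Subgroup.mem_zpowers_iff.1 (hx ⟨ρ g, g, rfl⟩)
    refine ⟨i, ?_⟩
    rw [← hker, map_mul, map_inv, map_zpow]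
    have hi' : (ρ x) ^ i = ρ g := by simpa using congrArg Subtype.val hi
    rw [hi', inv_mul_cancel]
  obtain ⟨x, hx⟩ := hx
  have hgen : Subgroup.zpowers x ⊔ Tor hB = ⊤ := by
    by_contra hne
    obtain ⟨M, hM, hle⟩ := (eq_top_or_exists_le_coatom _).resolve_left hne
    apply hM.1
    rw [eq_top_iff]
    intro g _
    obtain ⟨i, hi⟩ := hx g
    have h1 : x ^ i ∈ M := hle ((le_sup_left : Subgroup.zpowers x ≤ _) (Subgroup.zpow_mem_zpowers x i))
    have h2 : Ph p G ⊔ Tor hB ≤ M := sup_le (Ph_coatom hG hM) (le_sup_right.trans hle)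
    have := mul_mem h1 (h2 hi)
    rwa [mul_inv_cancel_left] at this
  have key : ∀ a b : G, ⁅a, b⁆ ∈ Tor hB := by
    have hc : ∀ a : G, ∃ i : ℤ, (a : G ⧸ Tor hB) = (x : G ⧸ Tor hB) ^ i := by
      intro a
      have ha : a ∈ Subgroup.zpowers x ⊔ Tor hB := hgen ▸ Subgroup.mem_top a
      obtain ⟨c, hc, d, hd, rfl⟩ := Subgroup.mem_sup_of_normal_right.1 ha
      obtain ⟨i, rfl⟩ := hc
      refine ⟨i, ?_⟩
      rw [QuotientGroup.mk_mul, (QuotientGroup.eq_one_iff d).2 hd, mul_one]; rfl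
    intro a b
    rw [← QuotientGroup.eq_one_iff]
    change ⁅(a : G ⧸ Tor hB), (b : G ⧸ Tor hB)⁆ = 1
    rw [commutatorElement_eq_one_iff_commute]
    obtain ⟨i, hi⟩ := hc a
    obtain ⟨j, hj⟩ := hc b
    rw [hi, hj]
    exact (Commute.refl _).zpow_zpow i j
  rw [eq_bot_iff, Subgroup.commutator_le]
  intro y hy g _
  obtain ⟨z, _, rfl⟩ := (mem_pw hG hr t _).1 hy
  rw [Subgroup.mem_bot, commutatorElement_eq_one_iff_commute]
  have h1 : z ^ p ^ t = (g * z * g⁻¹) ^ p ^ t := by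
    refine (hB _ _).2 ?_
    have h2 := key z⁻¹ g
    have : z⁻¹ * (g * z * g⁻¹) = ⁅z⁻¹, g⁆ := by rw [commutatorElement_def]; group
    rw [this]; exact h2
  rw [conj_pow] at h1
  change z ^ p ^ t * g = g * z ^ p ^ t
  nth_rewrite 1 [h1]
  group

theorem class_bound (hG : IsPGroup p G) (hr : IsRegularPGroup p G) {e m : ℕ} (he : 1 ≤ e) (hc : Nat.card G = p ^ (e + m))
    (hx : ∃ x : G, x ^ p ^ (e - 1) ≠ 1) : lc G (m + 1) = ⊥ := by
  have hPn := Ph_normal hG hr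
  have step : ∀ i s : ℕ, lc G s ≤ pw p i ⊤ → p ^ (s + i) * Nat.card (pw p i (⊤ : Subgroup G)) ≤ Nat.card G →
      ¬ Nat.card (pw p i (⊤ : Subgroup G)) ≤ p * Nat.card (pw p i (Ph p G)) →
      ∃ s', lc G s' ≤ pw p (i + 1) ⊤ ∧ p ^ (s' + (i + 1)) * Nat.card (pw p (i + 1) (⊤ : Subgroup G)) ≤ Nat.card G := by
    intro i s h1 h2 h3
    haveI n1 := pw_normal hG hr i (Ph p G) hPn
    haveI n2 := pw_normal hG hr (i + 1) (⊤ : Subgroup G) inferInstance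
    haveI n3 := pw_normal hG hr i (⊤ : Subgroup G) inferInstance
    obtain ⟨a, ha⟩ := IsPGroup.iff_card.1 (hG.to_subgroup (pw p i (⊤ : Subgroup G)))
    obtain ⟨b, hb⟩ := IsPGroup.iff_card.1 (hG.to_subgroup (pw p i (Ph p G)))
    obtain ⟨c, hc⟩ := IsPGroup.iff_card.1 (hG.to_subgroup (pw p (i + 1) (⊤ : Subgroup G)))
    have hbc : c ≤ b := by
      have := Subgroup.card_le_of_le (pw_HK (p := p) (G := G) i)
      rw [hb, hc] at this
      exact (Nat.pow_le_pow_iff_right hp.out.one_lt).1 this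
    have hab : b + 2 ≤ a := by
      rw [ha, hb, ← pow_succ', not_le] at h3
      have := (Nat.pow_lt_pow_iff_right hp.out.one_lt).1 h3
      omega
    have h4 : lc G (s + 1) ≤ pw p i (Ph p G) := by
      rw [lc_succ]
      exact (Subgroup.commutator_mono h1 le_rfl).trans (pw_com hG hr i)
    have h5 := lc_drop hG (N := pw p (i + 1) (⊤ : Subgroup G)) (b - c) (pw p i (Ph p G)) (s + 1) (pw_HK i) (by
      rw [hb, hc, ← pow_add]; exact Nat.pow_le_pow_right hp.out.pos (by omega)) h4
    refine ⟨s + 1 + (b - c), h5, ?_⟩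
    rw [ha] at h2
    rw [hc]
    refine le_trans ?_ h2
    rw [← pow_add, ← pow_add]
    exact Nat.pow_le_pow_right hp.out.pos (by omega)
  have hex : ∃ i s, lc G s ≤ pw p i ⊤ ∧ p ^ (s + i) * Nat.card (pw p i (⊤ : Subgroup G)) ≤ Nat.card G ∧
      Nat.card (pw p i (⊤ : Subgroup G)) ≤ p * Nat.card (pw p i (Ph p G)) := by
    by_contra hno
    have hall : ∀ i, ∃ s, lc G s ≤ pw p i ⊤ ∧ p ^ (s + i) * Nat.card (pw p i (⊤ : Subgroup G)) ≤ Nat.card G := by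
      intro i
      induction i with
      | zero => exact ⟨0, le_top, by simp [pw]⟩
      | succ i ih =>
        obtain ⟨s, h1, h2⟩ := ih
        refine step i s h1 h2 (fun h3 => hno ⟨i, s, h1, h2, h3⟩)
    obtain ⟨s, h1, h2⟩ := hall (e + m + 1)
    rw [hc] at h2
    have h3 : p ^ (s + (e + m + 1)) ≤ p ^ (e + m) := le_trans (Nat.le_mul_of_pos_right _ Nat.card_pos) h2
    have := (Nat.pow_le_pow_iff_right hp.out.one_lt).1 h3
    omega
  obtain ⟨t, s, h1, h2, h3⟩ := hex
  have h4 := pw_central hG hr t h3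
  have h5 : lc G (s + 1) = ⊥ := by
    rw [lc_succ, eq_bot_iff, ← h4]
    exact Subgroup.commutator_mono h1 le_rfl
  have hs : s ≤ m := by
    rw [hc] at h2
    obtain ⟨c, hcc⟩ := IsPGroup.iff_card.1 (hG.to_subgroup (pw p t (⊤ : Subgroup G)))
    rw [hcc, ← pow_add] at h2
    have h6 := (Nat.pow_le_pow_iff_right hp.out.one_lt).1 h2
    have h7 : e ≤ t + c := by
      by_contra hlt
      obtain ⟨x, hx⟩ := hx
      apply hx
      have h8 : x ^ p ^ t ∈ pw p t (⊤ : Subgroup G) := (mem_pw hG hr t _).2 ⟨x, Subgroup.mem_top _, rfl⟩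
      have h9 : (x ^ p ^ t) ^ p ^ c = 1 := by
        have := pow_card_eq_one' (x := (⟨_, h8⟩ : pw p t (⊤ : Subgroup G)))
        rw [hcc] at this
        exact congrArg Subtype.val this
      have : e - 1 = t + c + (e - 1 - t - c) := by omega
      rw [this, pow_add, pow_add, pow_mul, pow_mul, h9, one_pow]
    omega
  rw [eq_bot_iff, ← h5]
  exact lc_anti (by omega)
end RG

open scoped commutatorElement
attribute [local instance] LieRing.ofAssociativeRing
set_option linter.unusedSectionVars false
set_option linter.unusedVariables false
set_option linter.style.haveILetI false

namespace FN
open LZ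

theorem exp_of_type {p : ℕ} {G : Type} [Group G] {e : ℕ} {l : List ℕ} (he : 1 ≤ e)
    (h : HasTypeInvariants p G (e :: l)) : ∃ x : G, x ^ p ^ (e - 1) ≠ 1 := by
  by_contra! hx
  have h0 := h 0
  simp only [List.getD_cons_zero, zero_add] at h0
  have htop : ∀ i, e - 1 ≤ i → OmegaSubgroup p G i = ⊤ := by
    intro i hi
    rw [eq_top_iff]
    intro x _
    refine Subgroup.subset_closure ?_
    obtain ⟨j, rfl⟩ := Nat.exists_eq_add_of_le hi
    change x ^ p ^ (e - 1 + j) = 1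
    rw [pow_add, pow_mul, hx, one_pow]
  have hz : ∀ i, e ≤ i → omegaInv p G i = 0 := by
    intro i hi
    unfold omegaInv
    rw [htop (i - 1) (by omega), htop i (by omega), Subgroup.relIndex_self]
    simp
  have hlt : ∀ i : {i : ℕ // 1 ≤ i ∧ 1 ≤ omegaInv p G i}, i.1 - 1 < e - 1 := by
    rintro ⟨i, h1, h2⟩
    by_contra hh
    have := hz i (by simp at hh; omega)
    omega
  have hc : Nat.card {i : ℕ // 1 ≤ i ∧ 1 ≤ omegaInv p G i} ≤ Nat.card (Fin (e - 1)) :=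
    Nat.card_le_card_of_injective (fun i => ⟨i.1 - 1, hlt i⟩) (by
      rintro ⟨i, h1, h2⟩ ⟨j, h3, h4⟩ hij
      simp only [Fin.mk.injEq] at hij
      apply Subtype.ext
      simp only
      omega)
  rw [Nat.card_eq_fintype_card (α := Fin (e - 1)), Fintype.card_fin] at hc
  unfold muInv at h0
  omega

theorem class_of_type {p : ℕ} (hp : p.Prime) {G : Type} [Group G] [Finite G] {e : ℕ} {l : List ℕ} (he : 1 ≤ e)
    (hpl : p > l.sum + 1) (hc : Nat.card G = p ^ (e + l.sum))
    (hr : IsRegularPGroup p G) (h : HasTypeInvariants p G (e :: l)) : lc G (p - 1) = ⊥ := by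
  haveI : Fact p.Prime := ⟨hp⟩
  have h1 := RG.class_bound (IsPGroup.of_card hc) hr he hc (exp_of_type he h)
  rw [eq_bot_iff, ← h1]
  exact lc_anti (by omega)

theorem LzR_zmod {p : ℕ} (hp : p.Prime) {n : ℕ} (hn : 1 ≤ n) : LzR p (ZMod (p ^ n)) where
  two_le := hp.two_le
  unit := fun k h1 h2 => by
    rw [ZMod.isUnit_iff_coprime]
    exact ((Nat.coprime_of_lt_prime (by omega) h2 hp).symm.pow_right n)
  surj := fun c => by
    haveI : NeZero (p ^ n) := ⟨pow_ne_zero _ hp.ne_zero⟩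
    exact ZMod.natCast_zmod_surjective c

theorem nil_iff {p : ℕ} (hp : 1 ≤ p) {L : Type} [LieRing L] :
    (IsNilpotentLieRing L ∧ lieNilClass L < p) ↔ lieLCS L (p - 1) = ⊥ := by
  constructor
  · rintro ⟨h1, h2⟩
    have : lieLCS L (lieNilClass L) = ⊥ := Nat.sInf_mem (s := {c | lieLCS L c = ⊥}) h1
    exact lieLCS_bot (by omega) this
  · intro h
    refine ⟨⟨_, h⟩, ?_⟩
    have : lieNilClass L ≤ p - 1 := Nat.sInf_le h
    omega

section ty
variable {p : ℕ} {R : Type} [CommRing R] [LzR p R] {L : Type} [LieRing L] [LieAlgebra R L]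

theorem aOm_carrier (i : ℕ) : ((aOmega p L i : AddSubgroup L) : Set L) = {x : L | p ^ i • x = 0} := by
  apply Set.Subset.antisymm
  · let H : AddSubgroup L :=
      { carrier := {x : L | p ^ i • x = 0}
        add_mem' := by
          intro a b ha hb
          simp only [Set.mem_ofPred_eq] at *
          rw [nsmul_add, ha, hb, add_zero]
        zero_mem' := by simp
        neg_mem' := by
          intro a ha
          simp only [Set.mem_ofPred_eq] at *
          rw [smul_neg, ha, neg_zero] }
    exact (AddSubgroup.closure_le H).2 (fun x hx => hx)
  · exact AddSubgroup.subset_closure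

theorem gOm_carrier (hL : lieLCS L (p - 1) = ⊥) (i : ℕ) : 
    letI := lazGroup R hL
    ((OmegaSubgroup p L i : Subgroup L) : Set L) = {x : L | p ^ i • x = 0} := by
  letI := lazGroup R hL
  have hset : {x : L | x ^ p ^ i = 1} = {x : L | p ^ i • x = 0} := by
    ext x
    simp only [Set.mem_ofPred_eq]
    rw [laz_pow hL x (p ^ i)]; rfl
  apply Set.Subset.antisymm
  · let H : Subgroup L :=
      { carrier := {x : L | p ^ i • x = 0}
        mul_mem' := by
          intro a b ha hb
          exact laz_tors hL (p ^ i) ha hb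
        one_mem' := by
          change p ^ i • (0 : L) = 0
          simp
        inv_mem' := by
          intro a ha
          change p ^ i • (-a) = 0
          simp only [Set.mem_ofPred_eq] at ha
          rw [smul_neg, ha, neg_zero] }
    refine (Subgroup.closure_le H).2 ?_
    rw [hset]
    exact fun x hx => hx
  · rw [← hset]; exact Subgroup.subset_closure

theorem om_eq [Finite L] (hL : lieLCS L (p - 1) = ⊥) (i : ℕ) :
    letI := lazGroup R hL
    omegaInv p L i = aOmegaInv p L i := by
  letI := lazGroup R hL
  have hp : 0 < p := by have := LzR.two_le (p := p) (R := R); omega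
  have hcard : ∀ i, Nat.card (OmegaSubgroup p L i) = Nat.card (aOmega p L i) := by
    intro i
    change Nat.card ((OmegaSubgroup p L i : Subgroup L) : Set L) = Nat.card ((aOmega p L i : AddSubgroup L) : Set L)
    rw [gOm_carrier (R := R) hL, aOm_carrier]
  have hsub : {x : L | p ^ (i - 1) • x = 0} ⊆ {x : L | p ^ i • x = 0} := by
    intro x hx
    simp only [Set.mem_ofPred_eq] at *
    obtain ⟨j, hj⟩ := Nat.exists_eq_add_of_le (Nat.sub_le i 1)
    rw [hj, pow_add, mul_comm, mul_nsmul', hx, smul_zero]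
  have h1 : OmegaSubgroup p L (i - 1) ≤ OmegaSubgroup p L i := by
    rw [← SetLike.coe_subset_coe, gOm_carrier (R := R) hL, gOm_carrier (R := R) hL]; exact hsub
  have h2 : aOmega p L (i - 1) ≤ aOmega p L i := by
    rw [← SetLike.coe_subset_coe, aOm_carrier, aOm_carrier]; exact hsub
  have e1 := Subgroup.relIndex_mul_relIndex ⊥ _ _ bot_le h1
  have e2 := AddSubgroup.relIndex_mul_relIndex ⊥ _ _ bot_le h2
  rw [Subgroup.relIndex_bot_left, Subgroup.relIndex_bot_left] at e1
  rw [AddSubgroup.relIndex_bot_left, AddSubgroup.relIndex_bot_left, ← hcard, ← hcard, ← e1] at e2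
  unfold omegaInv aOmegaInv
  rw [Nat.eq_of_mul_eq_mul_left Nat.card_pos e2]

theorem type_iff [Finite L] (hL : lieLCS L (p - 1) = ⊥) (l : List ℕ) :
    letI := lazGroup R hL
    HasTypeInvariants p L l ↔ aHasType p L l := by
  letI := lazGroup R hL
  unfold HasTypeInvariants aHasType muInv aMuInv
  simp only [om_eq (R := R) hL]
end ty

end FN

open scoped commutatorElement
attribute [local instance] LieRing.ofAssociativeRing
set_option linter.unusedSectionVars false
set_option linter.unusedVariables false
set_option linter.style.haveILetI false


namespace FN
open LZ

variable {p e : ℕ} {l : List ℕ} {T : Type} 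

/-- the conditions on Lie rings -/
def QL (p e : ℕ) (l : List ℕ) (T : Type) (s : LieRing T) : Prop :=
  letI := s
  IsNilpotentLieRing T ∧ lieNilClass T < p ∧ aHasType p T (e :: l)

/-- the conditions on groups -/
def QG (p e : ℕ) (l : List ℕ) (T : Type) (s : Group T) : Prop :=
  letI := s
  IsRegularPGroup p T ∧ HasTypeInvariants p T (e :: l)

theorem tor {N : ℕ} (hT : Nat.card T = N) [LieRing T] (x : T) : N • x = 0 := by
  rw [← hT]; exact card_nsmul_eq_zero'

theorem QL_lcs (hp : p.Prime) {s : LieRing T} (h : QL p e l T s) : lieLCS T (p - 1) = ⊥ :=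
  (nil_iff hp.one_lt.le).1 ⟨h.1, h.2.1⟩

/-- the group attached to a Lie ring -/
@[reducible] noncomputable def FF {N : ℕ} [LzR p (ZMod N)] (hT : Nat.card T = N) (s : LieRing T)
    (h : lieLCS T (p - 1) = ⊥) : Group T :=
  letI := zlie (N := N) (tor (T := T) hT)
  lazGroup (ZMod N) h

theorem FF_QG {N : ℕ} [LzR p (ZMod N)] [Finite T] (hT : Nat.card T = N) (s : LieRing T)
    (h : lieLCS T (p - 1) = ⊥) (hs : aHasType p T (e :: l)) : QG p e l T (FF hT s h) := by
  letI := zlie (N := N) (tor (T := T) hT)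
  exact ⟨laz_regular (R := ZMod N) h, (type_iff (R := ZMod N) h _).2 hs⟩

theorem FF_iso {N : ℕ} [LzR p (ZMod N)] (hT : Nat.card T = N) (s t : LieRing T)
    (hs : @lieLCS T s (p - 1) = ⊥) (ht : @lieLCS T t (p - 1) = ⊥) :
    Nonempty (@MulEquiv T T (mulOfGroup _ (FF hT s hs)) (mulOfGroup _ (FF hT t ht))) ↔
    ∃ e : @AddEquiv T T (addOfLieRing _ s) (addOfLieRing _ t),
      ∀ x y : T,
        e (@Bracket.bracket _ _ (bracketOfLieRing _ s) x y) =
          @Bracket.bracket _ _ (bracketOfLieRing _ t) (e x) (e y) := by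
  letI ls := @zlie N T s (@tor T N hT s)
  letI lt := @zlie N T t (@tor T N hT t)
  constructor
  · rintro ⟨f⟩
    let f' : T ≃ T := @MulEquiv.toEquiv T T (mulOfGroup _ (FF hT s hs)) (mulOfGroup _ (FF hT t ht)) f
    have hf : ∀ x y : T, f' (@lmul p (ZMod N) _ _ T s ls hs x y) = 
        @lmul p (ZMod N) _ _ T t lt ht (f' x) (f' y) := fun x y => @MulEquiv.map_mul' T T (mulOfGroup _ (FF hT s hs)) (mulOfGroup _ (FF hT t ht)) f x y
    have key := @ffaith p (ZMod N) _ _ T T s ls t lt hs ht f' hf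
    exact ⟨@AddEquiv.mk T T (addOfLieRing _ s) (addOfLieRing _ t) f' (fun x y => (key x y).1),
      fun x y => (key x y).2⟩
  · rintro ⟨f, hf⟩
    let f' : T ≃ T := @AddEquiv.toEquiv T T (addOfLieRing _ s) (addOfLieRing _ t) f
    have ha : ∀ x y : T, f' (@HAdd.hAdd T T T (@instHAdd T (addOfLieRing _ s)) x y) =
      @HAdd.hAdd T T T (@instHAdd T (addOfLieRing _ t)) (f' x) (f' y) := fun x y => @AddEquiv.map_add' T T (addOfLieRing _ s) (addOfLieRing _ t) f x y
    have key : ∀ (T' : Type) [LieRing T'] [LieAlgebra (ZMod N) T'] (T : Type) [LieRing T] [LieAlgebra (ZMod N) T]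
        (hs : lieLCS T (p - 1) = ⊥) (ht : lieLCS T' (p - 1) = ⊥) (g : T → T') (ha : ∀ x y, g (x + y) = g x + g y)
        (hb : ∀ x y, g (lb x y) = lb (g x) (g y)) (x y : T), g (lmul (ZMod N) hs x y) = lmul (ZMod N) ht (g x) (g y) := by
      intro T' _ _ T _ _ hs ht g ha hb x y
      let g1 : T →+ T' := AddMonoidHom.mk' g ha
      let g2 : T →ₗ⁅ZMod N⁆ T' := 
        { toFun := g
          map_add' := ha
          map_smul' := fun c x => ZMod.map_smul g1 c x
          map_lie' := fun {x y} => hb x y }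
      exact lmul_hom hs ht g2 x y
    exact ⟨@MulEquiv.mk T T (mulOfGroup _ (FF hT s hs)) (mulOfGroup _ (FF hT t ht)) f'
      (@key T t lt T s ls hs ht f' ha hf)⟩

theorem mulOf_surj {N : ℕ} [LzR p (ZMod N)] [Finite T] (hp : p.Prime) (he : 1 ≤ e) (hpl : p > l.sum + 1) 
    (hN : N = p ^ (e + l.sum)) (hT : Nat.card T = N) (g : Group T) (hg : QG p e l T g) :
    ∃ (s : LieRing T) (h : QL p e l T s), mulOfGroup T (FF hT s (QL_lcs hp h)) = mulOfGroup T g := by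
  obtain ⟨s, h, hL, hm⟩ := esurj (p := p) (N := N) (class_of_type hp he hpl (hT.trans hN) hg.1 hg.2) 
    (fun x => by rw [← hT]; exact pow_card_eq_one')
  have e1 : FF hT s hL = g := by
    apply Group.ext
    funext x y
    exact hm x y
  have hq : QL p e l T s := by
    refine ⟨((nil_iff hp.one_lt.le).2 hL).1, ((nil_iff hp.one_lt.le).2 hL).2, ?_⟩
    letI := zlie (N := N) (tor (T := T) hT)
    refine (type_iff (R := ZMod N) hL _).1 ?_
    have := hg.2
    rw [← e1] at this
    exact this
  exact ⟨s, hq, by rw [e1]⟩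

theorem main {N : ℕ} [LzR p (ZMod N)] [Finite T] (hp : p.Prime) (he : 1 ≤ e) (hpl : p > l.sum + 1) 
    (hN : N = p ^ (e + l.sum)) (hT : Nat.card T = N) : 
    Nat.card (Quot fun s t : {s : Group T // QG p e l T s} =>
      Nonempty (@MulEquiv T T (mulOfGroup _ s.1) (mulOfGroup _ t.1))) = 
    Nat.card (Quot fun s t : {s : LieRing T // QL p e l T s} =>
      ∃ e : @AddEquiv T T (addOfLieRing _ s.1) (addOfLieRing _ t.1),
      ∀ x y : T,
        e (@Bracket.bracket _ _ (bracketOfLieRing _ s.1) x y) =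
          @Bracket.bracket _ _ (bracketOfLieRing _ t.1) (e x) (e y)) := by
  symm
  let F : {s : LieRing T // QL p e l T s} → {s : Group T // QG p e l T s} := fun s =>
    ⟨FF hT s.1 (QL_lcs hp s.2), FF_QG hT s.1 _ s.2.2.2⟩
  refine Nat.card_eq_of_bijective (Quot.map F (fun s t h => (FF_iso hT s.1 t.1 _ _).2 h)) ⟨?_, ?_⟩
  · rintro ⟨s⟩ ⟨t⟩ h
    refine Quot.sound ((FF_iso hT s.1 t.1 (QL_lcs hp s.2) (QL_lcs hp t.2)).1 ?_)
    have h1 := Quot.eqvGen_exact h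
    have heq : Equivalence (fun s t : {s : Group T // QG p e l T s} =>
      Nonempty (@MulEquiv T T (mulOfGroup _ s.1) (mulOfGroup _ t.1))) :=
      { refl := fun s => ⟨@MulEquiv.refl T (mulOfGroup _ s.1)⟩
        symm := fun {s t} ⟨f⟩ => ⟨@MulEquiv.symm T T (mulOfGroup _ s.1) (mulOfGroup _ t.1) f⟩
        trans := fun {s t u} ⟨f⟩ ⟨g⟩ => 
          ⟨@MulEquiv.trans T T T (mulOfGroup _ s.1) (mulOfGroup _ t.1) (mulOfGroup _ u.1) f g⟩ }
    exact heq.eqvGen_iff.1 h1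
  · rintro ⟨g⟩
    obtain ⟨s, h, hs⟩ := mulOf_surj hp he hpl hN hT g.1 g.2
    refine ⟨Quot.mk _ ⟨s, h⟩, Quot.sound ?_⟩
    change Nonempty (@MulEquiv T T (mulOfGroup _ (FF hT s (QL_lcs hp h))) (mulOfGroup _ g.1))
    rw [hs]
    exact ⟨@MulEquiv.refl T (mulOfGroup _ g.1)⟩

end FN

-- FINAL
/-- Let `p` be a prime and `e ≥ λ_1 ≥ ... ≥ λ_k` positive integers with
`p > λ_1 + ... + λ_k + 1`.  Then `Ψ_e^p(λ_1, ..., λ_k)` equals the number of isomorphism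
classes of nilpotent Lie rings of order `p ^ (e + λ_1 + ... + λ_k)` with type invariants
`(e, λ_1, ..., λ_k)` and nilpotency class less than `p`. -/
theorem psi_type_eq_lie_count (p e : ℕ) (hp : p.Prime) (l : List ℕ)
    (hsort : List.Pairwise (· ≥ ·) (e :: l))
    (hpos : ∀ x ∈ e :: l, 0 < x)
    (hpl : p > l.sum + 1) :
    PsiType p e l =
      lieClassCount (p ^ (e + l.sum)) (fun s =>
        letI := s
        IsNilpotentLieRing (Fin (p ^ (e + l.sum))) ∧
          lieNilClass (Fin (p ^ (e + l.sum))) < p ∧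
          aHasType p (Fin (p ^ (e + l.sum))) (e :: l)) := by
  haveI := FN.LzR_zmod hp (n := e + l.sum) (by have := hpos e (by simp); omega)
  exact FN.main hp (by have := hpos e (by simp); omega) hpl rfl (Nat.card_fin _)
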